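/- arXiv:1410.7535 — 2 statements merged into one kernel-verified Lean document; each statement's English description precedes it below -/
import Mathlib

section
/- Let G be a finite group satisfying Condition (4). Then G can be embedded into the symmetric group S₆, and the order of G is not divisible by 2⁴ = 16. -/
/-- The character value of the small Mathieu representation at an element of the given order. -/
def mathieuCharValue : ℕ → ℂ
  | 1 => 12
  | 2 => 4
  | 3 => 3
  | 4 => 4
  | 5 => 2
  | 6 => 1
  | 8 => 2
  | 11 => 1
  | _ => 0

/-- A representation is a small Mathieu representation if it is 12-dimensional, every group
element has order in {1,2,3,4,5,6,8,11}, and the character at `g` depends only on the order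
of `g`, with the values of the permutation character of `M₁₁` acting on 12 points. -/
def IsSmallMathieuRep {G : Type*} [Group G] {V : Type*} [AddCommGroup V] [Module ℂ V]
    (ρ : Representation ℂ G V) : Prop :=
  Module.finrank ℂ V = 12 ∧
    (∀ g : G, orderOf g ∈ ({1, 2, 3, 4, 5, 6, 8, 11} : Set ℕ)) ∧
    (∀ g : G, LinearMap.trace ℂ V (ρ g) = mathieuCharValue (orderOf g))

/-- `G` admits a small Mathieu representation. -/
def HasSmallMathieuRep (G : Type*) [Group G] : Prop :=
  ∃ (V : Type) (_ : AddCommGroup V) (_ : Module ℂ V) (ρ : Representation ℂ G V),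
    IsSmallMathieuRep ρ

/-- `G` admits a small Mathieu representation whose invariant subspace has dimension ≥ 3. -/
def HasSmallMathieuRep3 (G : Type*) [Group G] : Prop :=
  ∃ (V : Type) (_ : AddCommGroup V) (_ : Module ℂ V) (ρ : Representation ℂ G V),
    IsSmallMathieuRep ρ ∧ 3 ≤ Module.finrank ℂ ρ.invariants

/-- Condition (4): `G` has a small Mathieu representation `V` with `dim V^G ≥ 3`, the 2-Sylow
subgroups of `G` embed into `S₆`, and `G` is not isomorphic to the dicyclic group `Q₁₂`
(realized in Mathlib as `QuaternionGroup 3`). -/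
def Condition4 (G : Type*) [Group G] [Fintype G] : Prop :=
  HasSmallMathieuRep3 G ∧
    (∀ P : Sylow 2 G, ∃ f : P →* Equiv.Perm (Fin 6), Function.Injective f) ∧
    IsEmpty (G ≃* QuaternionGroup 3)



/-- Natural-number version of the character. -/
def cv : ℕ → ℕ
  | 1 => 12
  | 2 => 4
  | 3 => 3
  | 4 => 4
  | 5 => 2
  | 6 => 1
  | 8 => 2
  | 11 => 1
  | _ => 0

lemma mathieuCharValue_eq (n : ℕ) (hn : n ∈ ({1, 2, 3, 4, 5, 6, 8, 11} : Set ℕ)) :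
    mathieuCharValue n = (cv n : ℂ) := by
  simp only [Set.mem_insert_iff, Set.mem_singleton_iff] at hn
  rcases hn with rfl | rfl | rfl | rfl | rfl | rfl | rfl | rfl <;> simp [mathieuCharValue, cv]

lemma sum_trace_eq {K V : Type*} [Group K] [Fintype K] [AddCommGroup V] [Module ℂ V]
    [FiniteDimensional ℂ V] (ρ : Representation ℂ K V) :
    ∑ k : K, LinearMap.trace ℂ V (ρ k) = Nat.card K * Module.finrank ℂ ρ.invariants := by
  have hne : (Nat.card K : ℂ) ≠ 0 := by
    simp
  let _ : Invertible (Nat.card K : ℂ) := invertibleOfNonzero hne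
  have := Representation.card_inv_mul_sum_char_eq_finrank ρ
  rw [← this]
  field_simp
  rfl

/-- Twist of a representation by a linear character. -/
def twistRep {K V : Type*} [Group K] [AddCommGroup V] [Module ℂ V]
    (ρ : Representation ℂ K V) (l : K →* ℂ) : Representation ℂ K V where
  toFun k := l k • ρ k
  map_one' := by simp
  map_mul' a b := by
    rw [map_mul, map_mul, smul_mul_smul_comm]

/-- All the numerical information extracted from Condition (4). -/
structure Good (G : Type*) [Group G] [Fintype G] : Prop where
  ord : ∀ g : G, orderOf g ≤ 6
  sum : ∀ H : Subgroup G, ∃ n, 3 ≤ n ∧ ∑ᶠ h : H, cv (orderOf (h : G)) = n * Nat.card H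
  noW : ∀ c : G, orderOf c = 3 → ∀ W : Subgroup G, Nat.card W = 4 →
    (∀ w ∈ W, w ^ 2 = 1 ∧ Commute c w) → False
  noQ : ∀ z : G, orderOf z = 2 → ∀ Q : Subgroup G, Nat.card Q = 9 →
    (∀ w ∈ Q, w ^ 3 = 1 ∧ Commute z w) → False
  inv : ∀ T : Subgroup G, Nat.card T = 8 → ∀ z ∈ T, orderOf z = 2 →
    ∃ s ∈ T, orderOf s = 2 ∧ s ≠ z
  emb2 : IsPGroup 2 G → ∃ f : G →* Equiv.Perm (Fin 6), Function.Injective f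
  notQ : IsEmpty (G ≃* QuaternionGroup 3)

/-- The hom from `ZMod 3` given by an element of order three. -/
def cubeHom {G : Type*} [Group G] (c : G) (n : ℕ) [NeZero n] (hc : orderOf c = n) :
    Multiplicative (ZMod n) →* G where
  toFun i := c ^ (i.toAdd.val)
  map_one' := by simp
  map_mul' a b := by
    rw [toAdd_mul, ZMod.val_add, ← pow_add]
    conv_rhs => rw [← pow_mod_orderOf c, hc]

section
variable {G : Type*} [Group G] [Fintype G] {V : Type} [AddCommGroup V] [Module ℂ V]
  {ρ : Representation ℂ G V}

lemma exists_sum_hom (h : IsSmallMathieuRep ρ) {K : Type*} [Group K] [Fintype K] (f : K →* G)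
    (l : K →* ℂ) : ∃ n : ℕ, ∑ k : K, l k * (cv (orderOf (f k)) : ℂ) = n * Nat.card K := by
  have : FiniteDimensional ℂ V := Module.finite_of_finrank_pos (by rw [h.1]; norm_num)
  refine ⟨Module.finrank ℂ (twistRep (ρ.comp f) l).invariants, ?_⟩
  rw [mul_comm, ← sum_trace_eq]
  refine Finset.sum_congr rfl fun k _ => ?_
  rw [← mathieuCharValue_eq _ (h.2.1 _), ← h.2.2]
  simp [twistRep]

lemma exists_sum_hom' (h : IsSmallMathieuRep ρ) {K : Type*} [Group K] [Fintype K] (f : K →* G) :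
    ∃ n : ℕ, ∑ k : K, cv (orderOf (f k)) = n * Nat.card K := by
  obtain ⟨n, hn⟩ := exists_sum_hom h f 1
  refine ⟨n, ?_⟩
  simp only [MonoidHom.one_apply, one_mul] at hn
  exact_mod_cast hn

lemma sum_subgroup (h : IsSmallMathieuRep ρ) (h3 : 3 ≤ Module.finrank ℂ ρ.invariants)
    (H : Subgroup G) :
    ∃ n, 3 ≤ n ∧ ∑ᶠ h : H, cv (orderOf (h : G)) = n * Nat.card H := by
  classical
  have : FiniteDimensional ℂ V := Module.finite_of_finrank_pos (by rw [h.1]; norm_num)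
  let σ : Representation ℂ H V := ρ.comp H.subtype
  have hle : ρ.invariants ≤ σ.invariants := fun v hv k => hv k
  refine ⟨Module.finrank ℂ σ.invariants, h3.trans (Submodule.finrank_mono hle), ?_⟩
  rw [finsum_eq_sum_of_fintype]
  have := sum_trace_eq σ
  rw [mul_comm]
  have h2 : ∑ k : H, LinearMap.trace ℂ V (σ k) = ∑ k : H, ((cv (orderOf (k : G)) : ℕ) : ℂ) := by
    refine Finset.sum_congr rfl fun k _ => ?_
    rw [← mathieuCharValue_eq _ (h.2.1 _), ← h.2.2]
    rfl
  rw [h2] at this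
  exact_mod_cast this

lemma orderOf_mul_coprime' {c w : G} {m n : ℕ} (hc : orderOf c = m) (hw : orderOf w = n)
    (hcw : Commute c w) (h : Nat.Coprime m n) : orderOf (c * w) = m * n := by
  rw [hcw.orderOf_mul_eq_mul_orderOf_of_coprime (by rw [hc, hw]; exact h), hc, hw]

lemma sum_one_ne {K : Type*} [Group K] [Fintype K] {a b : ℕ} (F : K → ℕ) (h1 : F 1 = a)
    (h2 : ∀ k, k ≠ 1 → F k = b) : ∑ k, F k = a + (Nat.card K - 1) * b := by
  classical
  rw [← Finset.add_sum_erase _ _ (Finset.mem_univ (1 : K)), h1, Finset.sum_congr rfl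
    (fun k hk => h2 k (Finset.ne_of_mem_erase hk))]
  simp

lemma rep_noQ (h : IsSmallMathieuRep ρ) (z : G) (hz : orderOf z = 2) (Q : Subgroup G)
    (hQ : Nat.card Q = 9) (hc : ∀ w ∈ Q, w ^ 3 = 1 ∧ Commute z w) : False := by
  classical
  have hcomm : ∀ (m : Multiplicative (ZMod 2)) (n : Q), Commute (cubeHom z 2 hz m) (Q.subtype n) :=
    fun m n => ((hc n n.2).2.pow_left _)
  obtain ⟨n, hn⟩ := exists_sum_hom' h (MonoidHom.noncommCoprod (cubeHom z 2 hz) Q.subtype hcomm)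
  rw [Nat.card_prod, hQ, Fintype.sum_prod_type] at hn
  have ho : ∀ q : Q, q ≠ 1 → orderOf (q : G) = 3 := fun q hq =>
    orderOf_eq_prime (hc q q.2).1 (by simpa using hq)
  have e : (Finset.univ : Finset (Multiplicative (ZMod 2))) = {Multiplicative.ofAdd 0, Multiplicative.ofAdd 1} := by decide
  rw [e, Finset.sum_pair (by decide)] at hn
  rw [sum_one_ne (a := 12) (b := 3), sum_one_ne (a := 4) (b := 1)] at hn
  · rw [hQ] at hn
    simp at hn
    omega
  · simp [cubeHom, hz, cv, ZMod.val_one'' ]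
  · intro q hq
    have := orderOf_mul_coprime' hz (ho q hq) (hc q q.2).2 (by norm_num)
    simp [cubeHom, cv, ZMod.val_one'', this]
  · simp [cubeHom, cv]
  · intro q hq
    simp [cubeHom, cv, ho q hq]

lemma rep_noW (h : IsSmallMathieuRep ρ) (c : G) (hc3 : orderOf c = 3) (Q : Subgroup G)
    (hQ : Nat.card Q = 4) (hc : ∀ w ∈ Q, w ^ 2 = 1 ∧ Commute c w) : False := by
  classical
  have hcomm : ∀ (m : Multiplicative (ZMod 3)) (n : Q), Commute (cubeHom c 3 hc3 m) (Q.subtype n) :=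
    fun m n => ((hc n n.2).2.pow_left _)
  let l : Multiplicative (ZMod 3) →* ℂ := (ZMod.stdAddChar (N := 3)).toMonoidHom
  obtain ⟨n, hn⟩ := exists_sum_hom h (MonoidHom.noncommCoprod (cubeHom c 3 hc3) Q.subtype hcomm)
    (l.comp (MonoidHom.fst _ _))
  rw [Nat.card_prod, hQ, Fintype.sum_prod_type] at hn
  have ho : ∀ q : Q, q ≠ 1 → orderOf (q : G) = 2 := fun q hq =>
    orderOf_eq_prime (hc q q.2).1 (by simpa using hq)
  have hc3' : orderOf (c ^ 2) = 3 := by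
    rw [orderOf_pow, hc3]; rfl
  have e : (Finset.univ : Finset (Multiplicative (ZMod 3))) =
    {Multiplicative.ofAdd 0, Multiplicative.ofAdd 1, Multiplicative.ofAdd 2} := by decide
  have hl : l (Multiplicative.ofAdd 0) + l (Multiplicative.ofAdd 1) + l (Multiplicative.ofAdd 2) = 0 := by
    have h1 : ∑ i : ZMod 3, ZMod.stdAddChar (N := 3) i = 0 := by
      apply AddChar.sum_eq_zero_of_ne_one
      intro h0
      have := ZMod.injective_stdAddChar (N := 3) (a₁ := 0) (a₂ := 1) (by rw [h0]; simp)
      exact absurd this (by decide)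
    have e' : (Finset.univ : Finset (ZMod 3)) = {0, 1, 2} := by decide
    rw [e', Finset.sum_insert (by decide), Finset.sum_pair (by decide)] at h1
    rw [add_assoc]
    exact h1
  have hl0 : l (Multiplicative.ofAdd 0) = 1 := l.map_one
  simp only [MonoidHom.comp_apply, MonoidHom.coe_fst, ← Finset.mul_sum, ← Nat.cast_sum] at hn
  rw [e, Finset.sum_insert (by decide), Finset.sum_pair (by decide)] at hn
  rw [sum_one_ne (a := 12) (b := 4), sum_one_ne (a := 3) (b := 1), sum_one_ne (a := 3) (b := 1)] at hn
  · rw [hQ] at hn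
    have h6 : (18 : ℂ) = n * 12 := by
      simp at hn
      linear_combination hn - 6 * hl + 6 * hl0
    have h7 : 18 = n * 12 := by exact_mod_cast h6
    omega
  · simp [cubeHom, cv, show (2 : ZMod 3).val = 2 from rfl, hc3']
  · intro q hq
    have := orderOf_mul_coprime' hc3' (ho q hq) ((hc q q.2).2.pow_left 2) (by norm_num)
    simp [cubeHom, cv, show (2 : ZMod 3).val = 2 from rfl, this]
  · simp [cubeHom, cv, show (1 : ZMod 3).val = 1 from rfl, hc3]
  · intro q hq
    have := orderOf_mul_coprime' hc3 (ho q hq) ((hc q q.2).2) (by norm_num)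
    simp [cubeHom, cv, show (1 : ZMod 3).val = 1 from rfl, this]
  · simp [cubeHom, cv]
  · intro q hq
    simp [cubeHom, cv, ho q hq]
end

/-- A group of order 8 embedded in `S₆` has more than one involution. -/
lemma two_involutions {T : Type*} [Group T] [Finite T] (hT : Nat.card T = 8)
    (f : T →* Equiv.Perm (Fin 6)) (hf : Function.Injective f) (z : T) (hz : orderOf z = 2) :
    ∃ s : T, orderOf s = 2 ∧ s ≠ z := by
  classical
  by_contra! hcon
  let _ : MulAction T (Fin 6) := MulAction.compHom _ f
  have key : ∀ x : Fin 6, f z x = x := by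
    intro x
    have := Fintype.ofFinite T
    have h1 : Nat.card (MulAction.orbit T x) * Nat.card (MulAction.stabilizer T x) = 8 := by
      rw [← hT, ← Nat.card_prod]
      exact Nat.card_congr (MulAction.orbitProdStabilizerEquivGroup T x)
    have h2 : Nat.card (MulAction.orbit T x) ≤ 6 := by
      have := Finite.card_subtype_le (fun y => y ∈ MulAction.orbit T x)
      simpa using this
    have h3 : 2 ∣ Nat.card (MulAction.stabilizer T x) := by
      have h4 : Nat.card (MulAction.stabilizer T x) ∣ 2 ^ 3 := ⟨_, by rw [mul_comm]; exact h1.symm⟩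
      obtain ⟨k, hk, hk'⟩ := (Nat.dvd_prime_pow Nat.prime_two).1 h4
      rw [hk'] at h1 ⊢
      refine dvd_pow_self 2 ?_
      rintro rfl
      omega
    have := Fact.mk Nat.prime_two
    obtain ⟨s, hs⟩ := exists_prime_orderOf_dvd_card' 2 h3
    have hs2 : orderOf (s : T) = 2 := by rw [Subgroup.orderOf_coe]; exact hs
    have := hcon s hs2
    rw [← this]
    exact s.2
  have : f z = 1 := Equiv.ext key
  rw [(map_eq_one_iff f hf).1 this] at hz
  simp at hz

lemma Condition4.good {G : Type*} [Group G] [Fintype G] (h : Condition4 G) : Good G := by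
  classical
  obtain ⟨⟨V, _, _, ρ, hρ, h3⟩, hP, hQ⟩ := h
  have := Fact.mk Nat.prime_two
  have emb : ∀ T : Subgroup G, IsPGroup 2 T → ∃ f : T →* Equiv.Perm (Fin 6), Function.Injective f := by
    intro T hT
    obtain ⟨P, hTP⟩ := hT.exists_le_sylow
    obtain ⟨f, hf⟩ := hP P
    exact ⟨f.comp (Subgroup.inclusion hTP), hf.comp (Subgroup.inclusion_injective hTP)⟩
  have inv : ∀ T : Subgroup G, Nat.card T = 8 → ∀ z ∈ T, orderOf z = 2 →
    ∃ s ∈ T, orderOf s = 2 ∧ s ≠ z := by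
    intro T hT z hz hz2
    obtain ⟨f, hf⟩ := emb T (IsPGroup.of_card (n := 3) (by simpa using hT))
    obtain ⟨s, hs, hsz⟩ := two_involutions hT f hf ⟨z, hz⟩ (by rw [← Subgroup.orderOf_coe]; exact hz2)
    refine ⟨s, s.2, by rw [Subgroup.orderOf_coe]; exact hs, ?_⟩
    rintro rfl
    exact hsz rfl
  refine ⟨?_, sum_subgroup hρ h3, fun c hc W => rep_noW hρ c hc W, fun c hc W => rep_noQ hρ c hc W,
    inv, ?_, hQ⟩
  · intro g
    have hg := hρ.2.1 g
    simp only [Set.mem_insert_iff, Set.mem_singleton_iff] at hg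
    rcases hg with hg | hg | hg | hg | hg | hg | hg | hg <;> try omega
    · exfalso
      have hc : Nat.card (Subgroup.zpowers g) = 8 := by rw [Nat.card_zpowers, hg]
      obtain ⟨s, hs, hs2, hsz⟩ := inv _ hc (g ^ 4) (Subgroup.npow_mem_zpowers g 4) (by
        rw [orderOf_pow, hg]; rfl)
      rw [mem_zpowers_iff_mem_range_orderOf, hg] at hs
      simp only [Finset.mem_image, Finset.mem_range] at hs
      obtain ⟨k, hk, rfl⟩ := hs
      rw [orderOf_pow, hg] at hs2
      interval_cases k <;> simp_all
    · exfalso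
      obtain ⟨n, hn, hs⟩ := sum_subgroup hρ h3 (Subgroup.zpowers g)
      rw [finsum_eq_sum_of_fintype, sum_one_ne (a := 12) (b := 1), Nat.card_zpowers, hg] at hs
      · omega
      · simp [cv]
      · intro k hk
        have h11 : orderOf k ∣ 11 := by
          rw [← hg, ← Nat.card_zpowers g]; exact orderOf_dvd_natCard k
        rcases (Nat.dvd_prime (by norm_num)).1 h11 with h1 | h1
        · exact absurd (orderOf_eq_one_iff.1 h1) hk
        · rw [Subgroup.orderOf_coe, h1]; rfl
  · intro h2
    obtain ⟨f, hf⟩ := emb ⊤ (h2.to_subgroup ⊤)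
    exact ⟨f.comp (Subgroup.topEquiv (G := G)).symm.toMonoidHom,
      hf.comp (Subgroup.topEquiv (G := G)).symm.injective⟩


/-- `G` embeds in the symmetric group on six letters. -/
def Emb6 (G : Type*) [Group G] : Prop := ∃ f : G →* Equiv.Perm (Fin 6), Function.Injective f

lemma emb_action {G X : Type*} [Group G] [Finite X] [MulAction G X] (hX : Nat.card X ≤ 6)
    (h : ∀ g : G, (∀ x : X, g • x = x) → g = 1) : Emb6 G := by
  classical
  have := Fintype.ofFinite X
  obtain ⟨e⟩ : Nonempty (X ↪ Fin 6) := by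
    apply Function.Embedding.nonempty_of_card_le
    rwa [← Nat.card_eq_fintype_card, Fintype.card_fin]
  refine ⟨(Equiv.Perm.viaEmbeddingHom e).comp (MulAction.toPermHom G X), ?_⟩
  refine (Equiv.Perm.viaEmbeddingHom_injective e).comp ?_
  rw [injective_iff_map_eq_one]
  intro g hg
  exact h g fun x => by
    have := congrArg (fun f : Equiv.Perm X => f x) hg
    simpa using this

lemma mem_core {G : Type*} [Group G] {H : Subgroup G} {g : G} (h : ∀ x : G ⧸ H, g • x = x) :
    g ∈ H.normalCore := by
  rw [Subgroup.normalCore_eq_ker, MonoidHom.mem_ker]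
  ext x
  simpa using h x

lemma emb_subgroup {G : Type*} [Group G] [Finite G] (H : Subgroup G) (hH : H.index ≤ 6)
    (h : ∀ N : Subgroup G, N.Normal → N ≤ H → N = ⊥) : Emb6 G := by
  apply emb_action (X := G ⧸ H) hH
  intro g hg
  have h1 := mem_core hg
  rw [h _ inferInstance (Subgroup.normalCore_le H)] at h1
  exact Subgroup.mem_bot.1 h1

lemma emb_two {G : Type*} [Group G] [Finite G] (H K : Subgroup G) (hH : H.index + K.index ≤ 6)
    (h : ∀ N : Subgroup G, N.Normal → N ≤ H → N ≤ K → N = ⊥) : Emb6 G := by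
  let _ : MulAction G ((G ⧸ H) ⊕ (G ⧸ K)) := {
    smul g := Sum.map (fun x => g • x) (fun x => g • x)
    one_smul x := by rcases x with x | x <;> simp [HSMul.hSMul] <;> exact one_smul G x
    mul_smul a b x := by
      rcases x with x | x
      · exact congrArg Sum.inl (mul_smul a b x)
      · exact congrArg Sum.inr (mul_smul a b x) }
  apply emb_action (X := (G ⧸ H) ⊕ (G ⧸ K))
  · rw [Nat.card_sum]; exact hH
  · intro g hg
    have h1 : g ∈ H.normalCore := mem_core fun x => Sum.inl_injective (hg (Sum.inl x))
    have h2 : g ∈ K.normalCore := mem_core fun x => Sum.inr_injective (hg (Sum.inr x))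
    have h3 : g ∈ H.normalCore ⊓ K.normalCore := ⟨h1, h2⟩
    rw [h _ inferInstance (inf_le_left.trans (Subgroup.normalCore_le H))
      (inf_le_right.trans (Subgroup.normalCore_le K))] at h3
    exact Subgroup.mem_bot.1 h3

section
variable {G : Type*} [Group G] [Fintype G]

lemma sylow_le_eq {p : ℕ} {P Q : Sylow p G} (h : (P : Subgroup G) ≤ Q) : P = Q :=
  Sylow.ext (P.3 Q.2 h).symm

lemma mem_sylow_of_normalizes {p k : ℕ} (P : Sylow p G) {g : G}
    (hg : g ∈ Subgroup.normalizer (P : Set G)) (ho : orderOf g = p ^ k) : g ∈ P := by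
  have h1 : IsPGroup p (Subgroup.zpowers g) := by
    intro x
    refine ⟨k, ?_⟩
    apply Subtype.ext
    obtain ⟨n, hn⟩ := Subgroup.mem_zpowers_iff.1 x.2
    rw [Subgroup.coe_pow, ← hn, ← zpow_natCast, ← zpow_mul, mul_comm, zpow_mul, zpow_natCast, ← ho,
      pow_orderOf_eq_one, one_zpow, Subgroup.coe_one]
  have h2 := h1.inf_normalizer_sylow P
  have h3 : g ∈ Subgroup.zpowers g ⊓ Subgroup.normalizer (P : Set G) :=
    ⟨Subgroup.mem_zpowers g, hg⟩
  rw [h2] at h3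
  exact h3.2

lemma sylow_le_of_normalizes {p : ℕ} (P Q : Sylow p G)
    (hg : (Q : Subgroup G) ≤ Subgroup.normalizer (P : Set G)) : Q = P := by
  have h2 := Q.2.inf_normalizer_sylow P
  apply sylow_le_eq
  rw [inf_eq_left.2 hg] at h2
  rw [h2]
  exact inf_le_right

lemma sylow_card_of {p k : ℕ} [Fact p.Prime] (P : Sylow p G) (h1 : p ^ k ∣ Nat.card G)
    (h2 : ¬ p ^ (k + 1) ∣ Nat.card G) : Nat.card P = p ^ k := by
  obtain ⟨n, hn⟩ := IsPGroup.iff_card.1 P.2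
  have h3 := P.pow_dvd_card_of_pow_dvd_card h1
  have h4 : Nat.card P ∣ Nat.card G := Subgroup.card_subgroup_dvd_card _
  rw [hn] at h3 h4 ⊢
  have h5 : k ≤ n := (Nat.pow_dvd_pow_iff_le_right (Fact.out : p.Prime).one_lt).1 h3
  have h6 : ¬ k + 1 ≤ n := fun h => h2 ((pow_dvd_pow p h).trans h4)
  congr 1
  omega

lemma commute_of_inf_bot {N P : Subgroup G} (hN : N.Normal)
    (hle : N ≤ Subgroup.normalizer (P : Set G)) (h : N ⊓ P = ⊥) {n x : G} (hn : n ∈ N)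
    (hx : x ∈ P) : Commute n x := by
  have h1 : n * x * n⁻¹ * x⁻¹ ∈ N ⊓ P := by
    constructor
    · have := N.mul_mem hn (hN.conj_mem _ (N.inv_mem hn) x)
      simpa [mul_assoc] using this
    · exact P.mul_mem ((Subgroup.mem_normalizer_iff.1 (hle hn) x).1 hx) (P.inv_mem hx)
  rw [h, Subgroup.mem_bot] at h1
  have h2 := mul_inv_eq_one.1 h1
  exact mul_inv_eq_iff_eq_mul.1 h2

lemma inf_bot_of_prime {P N : Subgroup G} {p : ℕ} (hp : p.Prime) (hP : Nat.card P = p)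
    (h : ¬ P ≤ N) : N ⊓ P = ⊥ := by
  have h1 : Nat.card (N ⊓ P : Subgroup G) ∣ p := hP ▸ Subgroup.card_dvd_of_le inf_le_right
  rcases (Nat.dvd_prime hp).1 h1 with h2 | h2
  · exact Subgroup.card_eq_one.1 h2
  · exfalso
    apply h
    have h3 : N ⊓ P = P := Subgroup.eq_of_le_of_card_ge inf_le_right (by rw [h2, hP])
    exact inf_eq_right.1 h3

lemma normal_le_centralizer {p : ℕ} [Fact p.Prime] (P : Sylow p G) (hP : Nat.card P = p)
    (hn : Nat.card (Sylow p G) ≠ 1) {N : Subgroup G} (hN : N.Normal)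
    (hle : N ≤ Subgroup.normalizer (P : Set G)) :
    N ⊓ P = ⊥ ∧ ∀ n ∈ N, ∀ x ∈ P, Commute n x := by
  have h1 : ¬ (P : Subgroup G) ≤ N := by
    intro h
    apply hn
    have : Subsingleton (Sylow p G) := by
      refine ⟨fun A B => ?_⟩
      have key : ∀ A : Sylow p G, A = P := by
        intro A
        obtain ⟨g, rfl⟩ := MulAction.exists_smul_eq G P A
        apply sylow_le_of_normalizes
        refine le_trans ?_ hle
        rintro _ ⟨x, hx, rfl⟩
        exact hN.conj_mem _ (h hx) g
      rw [key A, key B]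
    have : Unique (Sylow p G) := Unique.mk' _
    exact Nat.card_unique
  have h2 := inf_bot_of_prime (Fact.out : p.Prime) hP h1
  exact ⟨h2, fun n hn x hx => commute_of_inf_bot hN hle h2 hn hx⟩

lemma normal_of_card_sylow {p : ℕ} [Fact p.Prime] (P : Sylow p G)
    (hn : Nat.card (Sylow p G) = 1) : (P : Subgroup G).Normal := by
  have := (Nat.card_eq_one_iff_unique.1 hn).1
  exact P.normal_of_subsingleton

lemma orderOf_of_mem_card {H : Subgroup G} {p k : ℕ} (hp : p.Prime) (hH : Nat.card H = p ^ k)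
    {x : G} (hx : x ∈ H) : ∃ j ≤ k, orderOf x = p ^ j := by
  have h1 : orderOf x ∣ Nat.card H := Subgroup.orderOf_dvd_natCard _ hx
  rw [hH] at h1
  exact (Nat.dvd_prime_pow hp).1 h1

variable (hG : Good G)
include hG

lemma Good.sum_const (H : Subgroup G) (b : ℕ) (h : ∀ x ∈ H, x ≠ 1 → cv (orderOf x) = b) :
    ∃ n, 3 ≤ n ∧ 12 + (Nat.card H - 1) * b = n * Nat.card H := by
  classical
  obtain ⟨n, hn, hs⟩ := hG.sum H
  refine ⟨n, hn, ?_⟩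
  rw [← hs, finsum_eq_sum_of_fintype, sum_one_ne (a := 12) (b := b)]
  · simp [cv]
  · intro k hk
    exact h k k.2 (by simpa using hk)

lemma Good.not25 : ¬ 5 ^ 2 ∣ Nat.card G := by
  intro h
  have := Fact.mk Nat.prime_five
  obtain ⟨H, hH⟩ := Sylow.exists_subgroup_card_pow_prime 5 h
  obtain ⟨n, hn, hs⟩ := hG.sum_const H 2 (by
    intro x hx hx1
    obtain ⟨j, hj, ho⟩ := orderOf_of_mem_card Nat.prime_five hH hx
    have := hG.ord x
    have h1 := mt orderOf_eq_one_iff.1 hx1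
    interval_cases j <;> simp_all [cv])
  rw [hH] at hs
  omega

lemma Good.not27 : ¬ 3 ^ 3 ∣ Nat.card G := by
  intro h
  have := Fact.mk Nat.prime_three
  obtain ⟨H, hH⟩ := Sylow.exists_subgroup_card_pow_prime 3 h
  obtain ⟨n, hn, hs⟩ := hG.sum_const H 3 (by
    intro x hx hx1
    obtain ⟨j, hj, ho⟩ := orderOf_of_mem_card Nat.prime_three hH hx
    have := hG.ord x
    have h1 := mt orderOf_eq_one_iff.1 hx1
    interval_cases j <;> simp_all [cv])
  rw [hH] at hs
  omega

lemma Good.not16 : ¬ 2 ^ 4 ∣ Nat.card G := by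
  intro h
  have := Fact.mk Nat.prime_two
  obtain ⟨H, hH⟩ := Sylow.exists_subgroup_card_pow_prime 2 h
  obtain ⟨n, hn, hs⟩ := hG.sum_const H 4 (by
    intro x hx hx1
    obtain ⟨j, hj, ho⟩ := orderOf_of_mem_card Nat.prime_two hH hx
    have := hG.ord x
    have h1 := mt orderOf_eq_one_iff.1 hx1
    interval_cases j <;> simp_all [cv])
  rw [hH] at hs
  omega

lemma Good.prime_dvd {p : ℕ} (hp : p.Prime) (h : p ∣ Nat.card G) : p = 2 ∨ p = 3 ∨ p = 5 := by
  have := Fact.mk hp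
  obtain ⟨x, hx⟩ := exists_prime_orderOf_dvd_card' p h
  have h1 := hG.ord x
  rw [hx] at h1
  interval_cases p <;> revert hp <;> norm_num

lemma Good.card_dvd : Nat.card G ∣ 360 := by
  rw [Nat.dvd_iff_prime_pow_dvd_dvd]
  intro p k hp h
  rcases Nat.eq_zero_or_pos k with rfl | hk
  · simp
  · have h1 := hG.prime_dvd hp ((dvd_pow_self p hk.ne').trans h)
    rcases h1 with rfl | rfl | rfl
    · have : k < 4 := by
        by_contra hc
        exact hG.not16 ((pow_dvd_pow 2 (by omega)).trans h)
      interval_cases k <;> decide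
    · have : k < 3 := by
        by_contra hc
        exact hG.not27 ((pow_dvd_pow 3 (by omega)).trans h)
      interval_cases k <;> decide
    · have : k < 2 := by
        by_contra hc
        exact hG.not25 ((pow_dvd_pow 5 (by omega)).trans h)
      interval_cases k; decide

lemma Good.no_prod {x y : G} {m n : ℕ} (hx : orderOf x = m) (hy : orderOf y = n)
    (h : Commute x y) (hc : Nat.Coprime m n) (h6 : 6 < m * n) : False := by
  have h1 := orderOf_mul_coprime' hx hy h hc
  have := hG.ord (x * y)
  omega

/-- Possible orders of elements commuting with a 5-element. -/
lemma Good.comm5 {x y : G} (hx : orderOf x = 5) (h : Commute x y) : orderOf y = 1 ∨ orderOf y = 5 := by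
  have h1 := hG.ord y
  have h0 := orderOf_pos y
  have h2 : ¬ 5 ∣ orderOf y → orderOf y = 1 := by
    intro h5
    by_contra hne
    refine hG.no_prod hx rfl h ((Nat.Prime.coprime_iff_not_dvd Nat.prime_five).2 h5) ?_
    omega
  by_cases h5 : 5 ∣ orderOf y
  · right; omega
  · left; exact h2 h5

lemma Good.cent5 (P : Sylow 5 G) (hP : Nat.card P = 5) {y : G} (hy : ∀ x ∈ P, Commute x y) :
    y ∈ P := by
  have := Fact.mk Nat.prime_five
  obtain ⟨x, hx⟩ := exists_prime_orderOf_dvd_card' (G := P) 5 (by rw [hP])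
  have hx' : orderOf (x : G) = 5 := by rw [Subgroup.orderOf_coe]; exact hx
  rcases hG.comm5 hx' (hy x x.2) with h | h
  · rw [orderOf_eq_one_iff.1 h]; exact P.one_mem
  · refine mem_sylow_of_normalizes (k := 1) P ?_ (by simpa using h)
    rw [Subgroup.mem_set_normalizer_iff]
    have hy' : ∀ z ∈ P, y * z * y⁻¹ = z := fun z hz => by
      rw [← (hy z hz).eq, mul_inv_cancel_right]
    intro z
    refine ⟨fun hz => by rw [hy' z hz]; exact hz, fun hz => ?_⟩
    have h1 : y⁻¹ * (y * z * y⁻¹) * y = y * z * y⁻¹ := by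
      rw [mul_assoc, (hy _ hz).eq, inv_mul_cancel_left]
    have h2 : z = y * z * y⁻¹ := by rw [← h1]; group
    rw [h2]; exact hz

/-- Centralizers of elements of order three. -/
lemma Good.comm3 {c : G} (hc : orderOf c = 3) (T : Subgroup G) {k : ℕ} (hT : Nat.card T = 2 ^ k)
    (h : ∀ t ∈ T, Commute c t) : k ≤ 1 := by
  by_contra hk
  have := Fact.mk Nat.prime_two
  have h4 : 2 ^ 2 ∣ Nat.card T := by rw [hT]; exact pow_dvd_pow 2 (by omega)
  obtain ⟨W, hW⟩ := Sylow.exists_subgroup_card_pow_prime 2 h4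
  have hW' : Nat.card (W.map T.subtype) = 4 := by
    rw [Subgroup.card_map_of_injective T.subtype_injective, hW]; rfl
  refine hG.noW c hc _ hW' ?_
  intro w hw
  have hwT : w ∈ T := Subgroup.map_subtype_le W hw
  refine ⟨?_, h w hwT⟩
  obtain ⟨j, hj, ho⟩ := orderOf_of_mem_card (k := 2) Nat.prime_two hW' hw
  have : j ≤ 1 := by
    by_contra hj'
    have : j = 2 := by omega
    subst this
    exact hG.no_prod hc ho (h w hwT) (by norm_num) (by norm_num)
  have : orderOf w ∣ 2 := by rw [ho]; exact pow_dvd_pow 2 this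
  exact orderOf_dvd_iff_pow_eq_one.1 this

lemma Good.emb5_of_two (P : Sylow 5 G) (hP : Nat.card P = 5) (h1 : Nat.card (Sylow 5 G) ≠ 1)
    (h6 : Nat.card (Sylow 5 G) ≤ 6) : Emb6 G := by
  have := Fact.mk Nat.prime_five
  rw [P.card_eq_index_normalizer] at h6
  apply emb_subgroup _ h6
  intro N hN hle
  obtain ⟨h2, h3⟩ := normal_le_centralizer P hP h1 hN hle
  rw [← le_bot_iff, ← h2]
  intro n hn
  exact ⟨hn, hG.cent5 P hP fun x hx => (h3 n hn x hx).symm⟩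

lemma Good.emb5_normal (P : Sylow 5 G) (hP : Nat.card P = 5) (h1 : Nat.card (Sylow 5 G) = 1) :
    Emb6 G := by
  have := Fact.mk Nat.prime_five
  have hn : (P : Subgroup G).Normal := normal_of_card_sylow P h1
  obtain ⟨T, hT⟩ := Subgroup.exists_right_complement'_of_coprime (N := (P : Subgroup G)) (by
    exact P.card_coprime_index)
  have hi : T.index = 5 := by rw [hT.index_eq_card, hP]
  apply emb_subgroup T (by omega)
  intro N hN hle
  have h2 : N ⊓ P = ⊥ := by
    rw [← le_bot_iff, ← hT.disjoint.eq_bot, inf_comm]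
    exact inf_le_inf_left _ hle
  rw [← le_bot_iff, ← h2]
  intro n hn'
  refine ⟨hn', hG.cent5 P hP fun x hx => ?_⟩
  refine (commute_of_inf_bot hN ?_ h2 hn' hx).symm
  rw [Subgroup.normalizer_eq_top]; exact le_top
end


section
variable {G : Type*} [Group G]

/-- The four-group generated by two commuting involutions. -/
def fourSub (a b : G) (ha : a * a = 1) (hb : b * b = 1) (hab : a * b = b * a) : Subgroup G where
  carrier := {1, a, b, a * b}
  one_mem' := by simp
  mul_mem' := by
    have h1 : ∀ x : G, a * (a * x) = x := fun x => by rw [← mul_assoc, ha, one_mul]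
    have h2 : ∀ x : G, b * (b * x) = x := fun x => by rw [← mul_assoc, hb, one_mul]
    have h3 : ∀ x : G, b * (a * x) = a * (b * x) := fun x => by
      rw [← mul_assoc, ← hab, mul_assoc]
    rintro x y (rfl | rfl | rfl | rfl) (rfl | rfl | rfl | rfl) <;>
      simp [mul_assoc, ha, hb, ← hab, h1, h2, h3]
  inv_mem' := by
    have h1 : a⁻¹ = a := inv_eq_of_mul_eq_one_left ha
    have h2 : b⁻¹ = b := inv_eq_of_mul_eq_one_left hb
    rintro x (rfl | rfl | rfl | rfl) <;> simp [h1, h2, hab]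

lemma mem_fourSub {a b : G} {ha : a * a = 1} {hb : b * b = 1} {hab : a * b = b * a} {x : G} :
    x ∈ fourSub a b ha hb hab ↔ x = 1 ∨ x = a ∨ x = b ∨ x = a * b := Iff.rfl

lemma card_fourSub {a b : G} {ha : a * a = 1} {hb : b * b = 1} {hab : a * b = b * a}
    (h1 : a ≠ 1) (h2 : b ≠ 1) (h3 : a ≠ b) : Nat.card (fourSub a b ha hb hab) = 4 := by
  classical
  have e : ((fourSub a b ha hb hab : Subgroup G) : Set G) = (({1, a, b, a * b} : Finset G) : Set G) := by
    ext x; simp [mem_fourSub]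
  have h4 : a * b ≠ 1 := fun h => h3 (by
    rw [← mul_one a, ← hb, ← mul_assoc, h, one_mul])
  rw [← SetLike.coe_sort_coe, e, Nat.card_coe_set_eq, Set.ncard_coe_finset]
  rw [Finset.card_insert_of_notMem, Finset.card_insert_of_notMem, Finset.card_pair]
  · intro h
    apply h1
    simpa using h
  · simp [h3, h2]
  · simp [h1.symm, h2.symm, h4.symm]

variable [Fintype G]

lemma q12_iso (hc : Nat.card G = 12) {g h : G} (hg : orderOf g = 6) (h2 : h * h = g ^ 3)
    (hgh : h * g * h⁻¹ = g⁻¹) (hn : h ∉ Subgroup.zpowers g) : Nonempty (G ≃* QuaternionGroup 3) := by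
  classical
  let φ := cubeHom g 6 hg
  have hφ1 : ∀ i j : ZMod (2 * 3), φ (.ofAdd (i + j)) = φ (.ofAdd i) * φ (.ofAdd j) :=
    fun i j => φ.map_mul _ _
  have hφ2 : ∀ i j : ZMod (2 * 3), φ (.ofAdd (i - j)) = φ (.ofAdd i) * (φ (.ofAdd j))⁻¹ :=
    fun i j => φ.map_div (.ofAdd i) (.ofAdd j)|>.trans (div_eq_mul_inv _ _)
  have hcm : ∀ i j : ZMod (2 * 3), φ (.ofAdd i) * φ (.ofAdd j) = φ (.ofAdd j) * φ (.ofAdd i) :=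
    fun i j => by rw [← hφ1, ← hφ1, add_comm]
  have hh : ∀ i : ZMod (2 * 3), φ (.ofAdd i) * h = h * (φ (.ofAdd i))⁻¹ := by
    intro i
    have h1 : h * (φ (.ofAdd i)) * h⁻¹ = (φ (.ofAdd i))⁻¹ := by
      change h * g ^ _ * h⁻¹ = (g ^ _)⁻¹
      rw [← conj_pow, hgh, inv_pow]
    rw [← h1]
    have h3 : h * h * φ (.ofAdd i) = φ (.ofAdd i) * (h * h) := by
      rw [h2]; exact ((Commute.refl g).pow_pow 3 _).eq
    rw [← mul_assoc, ← mul_assoc, h3]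
    group
  have h33 : φ (.ofAdd (3 : ZMod (2 * 3))) = h * h := by rw [h2]; rfl
  let f : QuaternionGroup 3 →* G := {
    toFun := fun q => match q with
      | .a i => φ (.ofAdd i)
      | .xa i => h * φ (.ofAdd i)
    map_one' := φ.map_one
    map_mul' := by
      rintro (i | i) (j | j)
      · exact hφ1 i j
      · change h * φ (.ofAdd (j - i)) = φ (.ofAdd i) * (h * φ (.ofAdd j))
        rw [← mul_assoc, hh, hφ2, mul_assoc]
        congr 1
        symm
        rw [inv_mul_eq_iff_eq_mul, ← mul_assoc, ← hcm, mul_inv_cancel_right]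
      · change h * φ (.ofAdd (i + j)) = h * φ (.ofAdd i) * (φ (.ofAdd j))
        rw [hφ1, mul_assoc]
      · change φ (.ofAdd (3 + j - i)) = h * φ (.ofAdd i) * (h * φ (.ofAdd j))
        rw [hφ2, hφ1, h33]
        have : h * φ (.ofAdd i) * (h * φ (.ofAdd j)) = h * (φ (.ofAdd i) * h) * φ (.ofAdd j) := by
          group
        rw [this, hh]
        have : (φ (.ofAdd i))⁻¹ * φ (.ofAdd j) = φ (.ofAdd j) * (φ (.ofAdd i))⁻¹ := by
          rw [inv_mul_eq_iff_eq_mul, ← mul_assoc, ← hcm, mul_inv_cancel_right]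
        simp only [mul_assoc]
        rw [this] }
  have hinj : Function.Injective f := by
    rw [injective_iff_map_eq_one]
    rintro (i | i) hi
    · change g ^ (i.val) = 1 at hi
      have h1 := orderOf_dvd_of_pow_eq_one hi
      rw [hg] at h1
      have h2 : i.val < 6 := ZMod.val_lt i
      have h3 : i.val = 0 := Nat.eq_zero_of_dvd_of_lt h1 h2
      rw [QuaternionGroup.one_def]
      congr 1
      exact (ZMod.val_eq_zero i).1 h3
    · exfalso
      change h * g ^ _ = 1 at hi
      apply hn
      rw [eq_inv_of_mul_eq_one_left hi]
      exact Subgroup.inv_mem _ (Subgroup.npow_mem_zpowers _ _)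
  have hb : Function.Bijective f := (Fintype.bijective_iff_injective_and_card f).2 ⟨hinj, by
    rw [QuaternionGroup.card, ← Nat.card_eq_fintype_card, hc]⟩
  exact ⟨(MulEquiv.ofBijective f hb).symm⟩

/-- Counting elements of prime order when Sylow subgroups intersect trivially. -/
lemma count_ti {p m : ℕ} [Fact p.Prime] (hm : ∀ P : Sylow p G, Nat.card P = m)
    (he : ∀ P : Sylow p G, ∀ x ∈ P, x ≠ 1 → orderOf x = p)
    (hti : ∀ P Q : Sylow p G, ∀ x ∈ P, x ∈ Q → x ≠ 1 → P = Q) :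
    Nat.card {g : G // orderOf g = p} = Nat.card (Sylow p G) * (m - 1) := by
  classical
  have hp : p.Prime := Fact.out
  let f : (Σ P : Sylow p G, {x : P // x ≠ 1}) → {g : G // orderOf g = p} := fun a =>
    ⟨a.2.1, he a.1 _ a.2.1.2 (fun h => a.2.2 (Subtype.ext h))⟩
  have hb : Function.Bijective f := by
    constructor
    · rintro ⟨P, ⟨x, hx⟩, hx1⟩ ⟨Q, ⟨y, hy⟩, hy1⟩ h
      have h1 : x = y := congrArg Subtype.val h
      subst h1
      have h2 := hti P Q x hx hy (fun h => hx1 (Subtype.ext h))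
      subst h2
      rfl
    · rintro ⟨g, hg⟩
      have h1 : IsPGroup p (Subgroup.zpowers g) := IsPGroup.of_card (n := 1) (by
        rw [Nat.card_zpowers, hg, pow_one])
      obtain ⟨P, hP⟩ := h1.exists_le_sylow
      refine ⟨⟨P, ⟨g, hP (Subgroup.mem_zpowers g)⟩, ?_⟩, rfl⟩
      intro h
      have : g = 1 := congrArg Subtype.val h
      rw [this, orderOf_one] at hg
      exact hp.one_lt.ne hg
  rw [← Nat.card_congr (Equiv.ofBijective f hb), Nat.card_sigma]
  have h2 : ∀ P : Sylow p G, Nat.card {x : P // x ≠ 1} = m - 1 := by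
    intro P
    have h3 : Nat.card (P : Subgroup G) = m := hm P
    change Nat.card {x : (P : Subgroup G) // x ≠ 1} = m - 1
    rw [Nat.card_eq_fintype_card] at h3 ⊢
    rw [Fintype.card_subtype_compl, h3]
    simp
  rw [Finset.sum_congr rfl (fun P _ => h2 P), Finset.sum_const, Finset.card_univ, smul_eq_mul,
    Nat.card_eq_fintype_card]
end


section
variable {G : Type*} [Group G] [Fintype G]

lemma card2_gen {D : Subgroup G} (h : Nat.card D = 2) :
    ∃ z, z ∈ D ∧ z * z = 1 ∧ z ≠ 1 ∧ ∀ x ∈ D, x = 1 ∨ x = z := by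
  classical
  have := Fact.mk Nat.prime_two
  obtain ⟨x, hx⟩ := exists_prime_orderOf_dvd_card' (G := D) 2 (by rw [h])
  have hx' : orderOf (x : G) = 2 := by rw [Subgroup.orderOf_coe]; exact hx
  have hz : D = Subgroup.zpowers (x : G) := by
    symm
    apply Subgroup.eq_of_le_of_card_ge
    · rw [Subgroup.zpowers_le]; exact x.2
    · rw [Nat.card_zpowers, hx', h]
  have h2 : (x : G) * x = 1 := by rw [← pow_two, ← hx', pow_orderOf_eq_one]
  refine ⟨x, x.2, h2, ?_, ?_⟩
  · intro h1; rw [h1, orderOf_one] at hx'; omega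
  · intro y hy
    rw [hz, mem_zpowers_iff_mem_range_orderOf, hx'] at hy
    simp [Finset.range_add_one] at hy
    tauto

lemma card3_gen {D : Subgroup G} (h : Nat.card D = 3) :
    ∃ c, c ∈ D ∧ orderOf c = 3 ∧ ∀ x ∈ D, x = 1 ∨ x = c ∨ x = c⁻¹ := by
  classical
  have := Fact.mk Nat.prime_three
  obtain ⟨x, hx⟩ := exists_prime_orderOf_dvd_card' (G := D) 3 (by rw [h])
  have hx' : orderOf (x : G) = 3 := by rw [Subgroup.orderOf_coe]; exact hx
  have hz : D = Subgroup.zpowers (x : G) := by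
    symm
    apply Subgroup.eq_of_le_of_card_ge
    · rw [Subgroup.zpowers_le]; exact x.2
    · rw [Nat.card_zpowers, hx', h]
  have h2 : (x : G) ^ 2 = (x : G)⁻¹ := by
    apply eq_inv_of_mul_eq_one_left
    rw [← pow_succ]
    exact (congrArg _ hx').symm.trans (pow_orderOf_eq_one _)
  refine ⟨x, x.2, hx', ?_⟩
  intro y hy
  rw [hz, mem_zpowers_iff_mem_range_orderOf, hx'] at hy
  simp [Finset.range_add_one, h2] at hy
  tauto

lemma conj_cases {P : Subgroup G} (hP : P.Normal) {c : G} (hc : c ∈ P) (hc1 : c ≠ 1)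
    (h : ∀ x ∈ P, x = 1 ∨ x = c ∨ x = c⁻¹) (t : G) : t * c * t⁻¹ = c ∨ t * c * t⁻¹ = c⁻¹ := by
  rcases h _ (hP.conj_mem c hc t) with h1 | h1
  · exfalso
    apply hc1
    simpa using h1
  · exact h1

variable (hG : Good G)
include hG

lemma Good.emb3_normal (P : Sylow 3 G) (hP : Nat.card P = 3) (h1 : Nat.card (Sylow 3 G) = 1)
    (h24 : Nat.card G ∣ 24) : Emb6 G := by
  classical
  have := Fact.mk Nat.prime_three
  have hn : (P : Subgroup G).Normal := normal_of_card_sylow P h1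
  obtain ⟨T, hT⟩ := Subgroup.exists_right_complement'_of_coprime (N := (P : Subgroup G)) (by
    exact P.card_coprime_index)
  have hi : T.index = 3 := by rw [hT.index_eq_card, hP]
  have hcm : Nat.card T * 3 = Nat.card G := by rw [← hi]; exact T.card_mul_index
  obtain ⟨a, ha⟩ : ∃ a, Nat.card T = 2 ^ a := by
    have : Nat.card T ∣ 2 ^ 3 := by
      apply Nat.dvd_of_mul_dvd_mul_right (k := 3) (by norm_num)
      rw [hcm]; exact h24
    obtain ⟨a, -, h⟩ := (Nat.dvd_prime_pow Nat.prime_two).1 this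
    exact ⟨a, h⟩
  obtain ⟨c, hcP, hc3, hc⟩ := card3_gen hP
  have hc1 : c ≠ 1 := by rintro rfl; simp at hc3
  have hdis : ∀ x, x ∈ P → x ∈ T → x = 1 := by
    intro x hx hx'
    have : x ∈ (P : Subgroup G) ⊓ T := ⟨hx, hx'⟩
    rw [hT.disjoint.eq_bot] at this
    exact Subgroup.mem_bot.1 this
  let D := T ⊓ Subgroup.centralizer {c}
  have hD : ∀ x, x ∈ D ↔ x ∈ T ∧ Commute c x := by
    intro x
    simp only [D, Subgroup.mem_inf, Subgroup.mem_centralizer_singleton_iff]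
    exact and_congr_right fun _ => eq_comm
  have hND : ∀ N : Subgroup G, N.Normal → N ≤ T → N ≤ D := by
    intro N hN hle x hx
    refine (hD x).2 ⟨hle hx, ?_⟩
    refine (commute_of_inf_bot (P := (P : Subgroup G)) hN ?_ ?_ hx hcP).symm
    · rw [Subgroup.normalizer_eq_top]; exact le_top
    · rw [← le_bot_iff, ← hT.disjoint.eq_bot, inf_comm]
      exact inf_le_inf_left _ hle
  obtain ⟨k, -, hk⟩ := (Nat.dvd_prime_pow Nat.prime_two).1 (ha ▸ Subgroup.card_dvd_of_le (inf_le_left : D ≤ T))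
  have hk1 := hG.comm3 hc3 D hk (fun t ht => ((hD t).1 ht).2)
  have hk2 : k = 0 ∨ k = 1 := by omega
  rcases hk2 with rfl | rfl
  · apply emb_subgroup T (by omega)
    intro N hN hle
    rw [← le_bot_iff, ← Subgroup.card_eq_one.1 hk]
    exact hND N hN hle
  obtain ⟨z, hz, hzz, hz1, hzD⟩ := card2_gen hk
  have hcz : Commute c z := ((hD z).1 hz).2
  by_cases hTD : T ≤ D
  · apply emb_two T P
    · have h2 : Nat.card T ≤ 2 := by
        have := Subgroup.card_le_of_le hTD
        rwa [hk] at this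
      have : (P : Subgroup G).index = Nat.card T := by
        rw [hT.symm.index_eq_card]
      omega
    · intro N hN hle hle'
      rw [← le_bot_iff]
      intro x hx
      exact Subgroup.mem_bot.2 (hdis x (hle' hx) (hle hx))
  obtain ⟨h, hhT, hhD⟩ := SetLike.not_le_iff_exists.1 hTD
  have hinv : ∀ t ∈ T, t ∉ D → t * c * t⁻¹ = c⁻¹ := by
    intro t ht htD
    rcases conj_cases hn hcP hc1 hc t with h1 | h1
    · exfalso
      apply htD
      rw [hD]
      exact ⟨ht, (mul_inv_eq_iff_eq_mul.1 h1).symm⟩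
    · exact h1
  have hmul : ∀ t ∈ T, t ∉ D → h * t ∈ D := by
    intro t ht htD
    rw [hD]
    refine ⟨T.mul_mem hhT ht, ?_⟩
    have h2 : (h * t) * c * (h * t)⁻¹ = c := by
      have : (h * t) * c * (h * t)⁻¹ = h * (t * c * t⁻¹) * h⁻¹ := by group
      rw [this, hinv t ht htD, ← conj_inv, hinv h hhT hhD, inv_inv]
    exact (mul_inv_eq_iff_eq_mul.1 h2).symm
  have hhc := hinv h hhT hhD
  have hhz : h * z = z * h := by
    have h2 : h * z * h⁻¹ ∈ D := by
      rw [hD]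
      refine ⟨T.mul_mem (T.mul_mem hhT ((hD z).1 hz).1) (T.inv_mem hhT), ?_⟩
      have h3 : Commute (h * c * h⁻¹) (h * z * h⁻¹) := by
        exact (Commute.conj_iff h).2 hcz
      rw [hhc] at h3
      simpa using h3.inv_left
    rcases hzD _ h2 with h3 | h3
    · exfalso; apply hz1; simpa using h3
    · exact mul_inv_eq_iff_eq_mul.1 h3
  have hhh := hmul h hhT hhD
  have hT4 : Nat.card T = 4 := by
    have h2 : (T : Set G) ⊆ {1, z, h⁻¹, h⁻¹ * z} := by
      intro t ht
      by_cases htD : t ∈ D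
      · rcases hzD _ htD with h3 | h3 <;> simp [h3]
      · rcases hzD _ (hmul t ht htD) with h3 | h3
        · right; right; left; exact eq_inv_of_mul_eq_one_right h3
        · right; right; right; exact eq_inv_mul_of_mul_eq h3
    have h3 : Nat.card T ≤ 4 := by
      classical
      have h4 : (T : Set G) ⊆ (({1, z, h⁻¹, h⁻¹ * z} : Finset G) : Set G) := by simpa using h2
      have h5 := Set.ncard_le_ncard h4 (Finset.finite_toSet _)
      rw [Set.ncard_coe_finset] at h5
      have h6 : (T : Set G).ncard = Nat.card T := rfl
      rw [← h6]
      exact h5.trans Finset.card_le_four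
    have h7 : Nat.card T ≠ 2 := by
      intro h8
      apply hTD
      have : D = T := Subgroup.eq_of_le_of_card_ge inf_le_left (by rw [h8, hk]; norm_num)
      rw [this]
    have h9 : 2 ∣ Nat.card T := by
      have := Subgroup.card_dvd_of_le (inf_le_left : D ≤ T)
      rwa [hk] at this
    have := Nat.card_pos (α := T)
    rw [ha] at *
    have : a < 3 := by
      by_contra hcon
      have := Nat.pow_le_pow_right (n := 2) (by norm_num) (show 3 ≤ a by omega)
      omega
    interval_cases a <;> simp_all
  have hG12 : Nat.card G = 12 := by omega
  rcases hzD _ hhh with h2 | h2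
  · let H := (P : Subgroup G) ⊔ Subgroup.zpowers h
    have hh1 : h ≠ 1 := by rintro rfl; exact hhD D.one_mem
    have ho : orderOf h = 2 := orderOf_eq_prime (by rw [pow_two, h2]) hh1
    have hzH : z ∉ H := by
      intro hzH
      obtain ⟨p, hp, q, hq, hpq⟩ := Subgroup.mem_sup_of_normal_left.1 hzH
      have hqT : q ∈ T := (Subgroup.zpowers_le.2 hhT) hq
      have : p = 1 := hdis p hp (by
        rw [eq_mul_inv_of_mul_eq hpq]
        exact T.mul_mem ((hD z).1 hz).1 (T.inv_mem hqT))
      rw [this, one_mul] at hpq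
      rw [mem_zpowers_iff_mem_range_orderOf, ho] at hq
      simp [Finset.range_add_one] at hq
      rcases hq with hq | hq
      · apply hhD; rw [← hq, hpq]; exact hz
      · apply hz1; rw [← hpq, ← hq]
    apply emb_two T H
    · have h3 : 3 ∣ Nat.card H := by
        have := Subgroup.card_dvd_of_le (le_sup_left : (P : Subgroup G) ≤ H)
        rwa [hP] at this
      have h4 : 2 ∣ Nat.card H := by
        have := Subgroup.card_dvd_of_le (le_sup_right : Subgroup.zpowers h ≤ H)
        rwa [Nat.card_zpowers, ho] at this
      have h5 := H.card_mul_index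
      have h6 : 6 ∣ Nat.card H := by omega
      obtain ⟨m, hm⟩ := h6
      rw [hm, hG12] at h5
      have : H.index ≤ 2 := by
        have : 1 ≤ m := by
          by_contra hcon
          have : m = 0 := by omega
          subst this; omega
        nlinarith
      omega
    · intro N hN hle hle'
      rw [← le_bot_iff]
      intro x hx
      rcases hzD x (hND N hN hle hx) with h3 | h3
      · exact h3
      · exact absurd (h3 ▸ hle' hx) hzH
  · exfalso
    have hz2 : orderOf z = 2 := orderOf_eq_prime (by rw [pow_two, hzz]) hz1
    have hg6 : orderOf (c * z) = 6 := orderOf_mul_coprime' hc3 hz2 hcz (by norm_num)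
    have hzi : z⁻¹ = z := inv_eq_of_mul_eq_one_left hzz
    have hconj : h * (c * z) * h⁻¹ = (c * z)⁻¹ := by
      have : h * (c * z) * h⁻¹ = (h * c * h⁻¹) * (h * z * h⁻¹) := by group
      rw [this, hhc, hhz, mul_inv_cancel_right, mul_inv_rev, hzi]
      exact hcz.inv_left.eq
    obtain ⟨e⟩ := q12_iso hG12 hg6 (h := h) (by
      rw [hcz.mul_pow, ← hc3, pow_orderOf_eq_one, one_mul, hc3, pow_succ, pow_two, hzz, one_mul, h2])
      hconj (by
        intro hmem
        obtain ⟨m, hm⟩ := Subgroup.mem_zpowers_iff.1 hmem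
        rw [← hm, mul_inv_eq_iff_eq_mul.2 ((Commute.refl (c * z)).zpow_left m).eq] at hconj
        have h3 : (c * z) ^ 2 = 1 := by
          rw [pow_two]; nth_rewrite 1 [hconj]; exact inv_mul_cancel _
        have h4 := orderOf_dvd_of_pow_eq_one h3
        rw [hg6] at h4
        omega)
    exact hG.notQ.elim e
end


section
variable {G : Type*} [Group G] [Fintype G]

/-- In a group of order 8 (inside `G`) the eight listed elements exhaust everything. -/
lemma eight_list {T : Subgroup G} (hT : Nat.card T = 8) {z s s1 s2 : G}
    (hzc : ∀ x, z * x = x * z) (hzz : z * z = 1) (hz1 : z ≠ 1)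
    (hz : z ∈ T) (hs : s ∈ T) (hs1 : s1 ∈ T) (hs2 : s2 ∈ T)
    (e1 : s ≠ 1) (e2 : s ≠ z) (e3 : s1 ≠ 1) (e4 : s1 ≠ z) (e5 : s2 ≠ 1) (e6 : s2 ≠ z)
    (e7 : s1 ≠ s) (e8 : s1 ≠ s * z) (e9 : s2 ≠ s1) (e10 : s2 ≠ s1 * z) (e11 : s2 ≠ s)
    (e12 : s2 ≠ s * z) :
    ∀ t ∈ T, t = 1 ∨ t = z ∨ t = s ∨ t = s * z ∨ t = s1 ∨ t = s1 * z ∨ t = s2 ∨ t = s2 * z := by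
  classical
  have hk : ∀ a b : G, a * z = b → a = b * z := by
    rintro a b rfl; rw [mul_assoc, hzz, mul_one]
  let F : Finset G := {1, z, s, s * z, s1, s1 * z, s2, s2 * z}
  have hF : F.card = 8 := by
    have q1 : s ≠ s * z := fun h => hz1 (by simpa using h.symm)
    have q2 : s1 ≠ s1 * z := fun h => hz1 (by simpa using h.symm)
    have q3 : s2 ≠ s2 * z := fun h => hz1 (by simpa using h.symm)
    have p1 : s * z ≠ 1 := fun h => e2 (by simpa using hk _ _ h)
    have p2 : s1 * z ≠ 1 := fun h => e4 (by simpa using hk _ _ h)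
    have p3 : s2 * z ≠ 1 := fun h => e6 (by simpa using hk _ _ h)
    have r1 : s * z ≠ s1 * z := fun h => e7 (by simpa using h.symm)
    have r2 : s * z ≠ s2 * z := fun h => e11 (by simpa using h.symm)
    have r3 : s1 * z ≠ s2 * z := fun h => e9 (by simpa using h.symm)
    have t1 : s ≠ s1 * z := fun h => e8 (hk _ _ h.symm)
    have t2 : s ≠ s2 * z := fun h => e12 (hk _ _ h.symm)
    have t3 : s1 ≠ s2 * z := fun h => e10 (hk _ _ h.symm)
    have u1 : z ≠ s * z := fun h => e1 (by simpa using h.symm)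
    have u2 : z ≠ s1 * z := fun h => e3 (by simpa using h.symm)
    have u3 : z ≠ s2 * z := fun h => e5 (by simpa using h.symm)
    simp only [F]
    rw [Finset.card_insert_of_notMem, Finset.card_insert_of_notMem, Finset.card_insert_of_notMem,
      Finset.card_insert_of_notMem, Finset.card_insert_of_notMem, Finset.card_insert_of_notMem,
      Finset.card_pair q3]
    all_goals simp only [Finset.mem_insert, Finset.mem_singleton, not_or]
    · exact ⟨e10.symm, r3⟩
    · exact ⟨q2, e9.symm, t3⟩
    · exact ⟨e8.symm, r1, e12.symm, r2⟩
    · exact ⟨q1, e7.symm, t1, e11.symm, t2⟩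
    · exact ⟨e2.symm, u1, e4.symm, u2, e6.symm, u3⟩
    · exact ⟨hz1.symm, e1.symm, p1.symm, e3.symm, p2.symm, e5.symm, p3.symm⟩
  have hsub : (F : Set G) ⊆ T := by
    intro x hx
    simp only [F, Finset.coe_insert, Finset.coe_singleton, Set.mem_insert_iff,
      Set.mem_singleton_iff] at hx
    rcases hx with rfl | rfl | rfl | rfl | rfl | rfl | rfl | rfl
    · exact T.one_mem
    · exact hz
    · exact hs
    · exact T.mul_mem hs hz
    · exact hs1
    · exact T.mul_mem hs1 hz
    · exact hs2
    · exact T.mul_mem hs2 hz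
  have heq : (F : Set G) = T := by
    apply Set.eq_of_subset_of_ncard_le hsub _ (Set.toFinite _)
    rw [Set.ncard_coe_finset, hF]
    exact hT.le
  intro t ht
  have : t ∈ (F : Set G) := by rw [heq]; exact ht
  simpa [F] using this

variable (hG : Good G)
include hG

/-- A normal 2-Sylow of order 8 together with a central involution. -/
lemma Good.good_four {T : Subgroup G} (hTn : T.Normal) (hT : Nat.card T = 8) {z y : G}
    (hzc : ∀ x, z * x = x * z) (hzz : z * z = 1) (hz1 : z ≠ 1) (hz : z ∈ T) (hy : orderOf y = 3) :
    (∀ t ∈ T, t * t = 1) ∧ ∃ s ∈ T, s ≠ 1 ∧ s ≠ z ∧ y * s * y⁻¹ ≠ s ∧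
      s * (y * s * y⁻¹) = y * (y * s * y⁻¹) * y⁻¹ := by
  have hz2 : orderOf z = 2 := orderOf_eq_prime (by rw [pow_two, hzz]) hz1
  obtain ⟨s, hs, hs2, hsz⟩ := hG.inv T hT z hz hz2
  have hy3 : y * (y * y) = 1 := by
    have := pow_orderOf_eq_one y
    rw [hy, pow_succ, pow_two, mul_assoc] at this
    exact this
  let σ := MulAut.conj y
  have hσ : ∀ x, σ x = y * x * y⁻¹ := fun x => rfl
  have hσ3 : ∀ x, σ (σ (σ x)) = x := by
    intro x
    have : σ (σ (σ x)) = (y * (y * y)) * x * (y * (y * y))⁻¹ := by simp only [hσ]; group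
    rw [this, hy3]; simp
  have hσz : σ z = z := by rw [hσ, ← hzc, mul_inv_cancel_right]
  have hσT : ∀ x ∈ T, σ x ∈ T := fun x hx => hTn.conj_mem x hx y
  have hss : s * s = 1 := by rw [← pow_two, ← hs2, pow_orderOf_eq_one]
  have hs1 : s ≠ 1 := by rintro rfl; simp at hs2
  have hσ1 : ∀ x, σ x = 1 ↔ x = 1 := fun x => by simp
  have hσz' : ∀ x, σ x = z ↔ x = z := fun x => by
    constructor
    · intro h; apply σ.injective; rw [h, hσz]
    · rintro rfl; exact hσz
  have e7 : σ s ≠ s := by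
    intro h
    have hcs : Commute y s := mul_inv_eq_iff_eq_mul.1 h
    refine hG.noW y hy (fourSub s z hss hzz (hzc s).symm) (card_fourSub hs1 hz1 hsz) ?_
    intro w hw
    have hyz : Commute y z := (hzc y).symm
    rw [mem_fourSub] at hw
    rcases hw with rfl | rfl | rfl | rfl
    · simp
    · exact ⟨by rw [pow_two, hss], hcs⟩
    · exact ⟨by rw [pow_two, hzz], hyz⟩
    · refine ⟨?_, hcs.mul_right hyz⟩
      rw [pow_two, mul_assoc, ← mul_assoc z, hzc, mul_assoc, hzz, mul_one, hss]
  have e8 : σ s ≠ s * z := by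
    intro h
    have h2 : σ (σ s) = s := by
      rw [h, map_mul, h, hσz, mul_assoc, hzz, mul_one]
    apply e7
    have h3 := hσ3 s
    rwa [h2] at h3
  have e9 : σ (σ s) ≠ σ s := fun h => e7 (σ.injective h)
  have e10 : σ (σ s) ≠ σ s * z := fun h => e8 (σ.injective (by rw [h, map_mul, hσz]))
  have e11 : σ (σ s) ≠ s := fun h => e9 (σ.injective (by rw [hσ3, h]))
  have e12 : σ (σ s) ≠ s * z := by
    intro h
    apply e8
    have h3 := hσ3 s
    rw [h, map_mul, hσz] at h3
    nth_rewrite 2 [← h3]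
    rw [mul_assoc, hzz, mul_one]
  have hlist := eight_list hT hzc hzz hz1 hz hs (hσT _ hs) (hσT _ (hσT _ hs)) hs1 hsz
    (by rwa [Ne, hσ1]) (by rwa [Ne, hσz']) (by rwa [Ne, hσ1, hσ1]) (by rwa [Ne, hσz', hσz'])
    e7 e8 e9 e10 e11 e12
  have hsq : ∀ x, x * x = 1 → (x * z) * (x * z) = 1 := by
    intro x hx
    rw [mul_assoc, ← mul_assoc z, hzc, mul_assoc, hzz, mul_one, hx]
  have hσq : ∀ x, x * x = 1 → σ x * σ x = 1 := by
    intro x hx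
    rw [← map_mul, hx, map_one]
  have hexp : ∀ t ∈ T, t * t = 1 := by
    intro t ht
    rcases hlist t ht with rfl | rfl | rfl | rfl | rfl | rfl | rfl | rfl
    · simp
    · exact hzz
    · exact hss
    · exact hsq _ hss
    · exact hσq _ hss
    · exact hsq _ (hσq _ hss)
    · exact hσq _ (hσq _ hss)
    · exact hsq _ (hσq _ (hσq _ hss))
  refine ⟨hexp, ?_⟩
  have hcan : ∀ x w, s * x = w → x = s * w := by
    rintro x w rfl; rw [← mul_assoc, hss, one_mul]
  rcases hlist _ (T.mul_mem hs (hσT _ hs)) with h | h | h | h | h | h | h | h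
  · exact absurd (by simpa using hcan _ _ h) e7
  · exact absurd (by simpa using hcan _ _ h) e8
  · exact absurd ((hσ1 s).1 (by simpa using h)) hs1
  · exact absurd ((hσz' s).1 (by simpa using h)) hsz
  · exact absurd (by simpa using h) hs1
  · rw [← hzc] at h
    exact absurd (by simpa using h) hsz
  · exact ⟨s, hs, hs1, hsz, e7, h⟩
  · refine ⟨s * z, T.mul_mem hs hz, ?_, ?_, ?_, ?_⟩
    · intro h1
      exact hsz ((eq_inv_of_mul_eq_one_left h1).trans (inv_eq_of_mul_eq_one_left hzz))
    · simpa using hs1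
    · change σ (s * z) ≠ s * z
      rw [map_mul, hσz]
      simpa using e7
    · change s * z * σ (s * z) = σ (σ (s * z))
      simp only [map_mul, hσz]
      rw [← h, mul_assoc, ← mul_assoc z, hzc, mul_assoc, hzz, mul_one]

end


section
variable {G : Type*} [Group G] [Fintype G]

lemma mem_normalizer_of_conj {H : Subgroup G} {g : G} (h : ∀ x ∈ H, g * x * g⁻¹ ∈ H) :
    g ∈ Subgroup.normalizer (H : Set G) := by
  rw [Subgroup.mem_normalizer_iff_map_conj_eq]
  apply Subgroup.eq_of_le_of_card_ge
  · rintro _ ⟨x, hx, rfl⟩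
    exact h x hx
  · exact (Subgroup.card_map_of_injective (MulEquiv.injective _)).ge

lemma count3 {P : Sylow 3 G} (hP : Nat.card P = 3) :
    {g : G | orderOf g = 3}.ncard = Nat.card (Sylow 3 G) * 2 := by
  have := Fact.mk Nat.prime_three
  have hall : ∀ Q : Sylow 3 G, Nat.card Q = 3 := fun Q => by
    exact (Nat.card_congr (Sylow.equiv Q P).toEquiv).trans hP
  have hord : ∀ Q : Sylow 3 G, ∀ x ∈ Q, x ≠ 1 → orderOf x = 3 := by
    intro Q x hx hx1
    have h1 : orderOf x ∣ Nat.card Q := Subgroup.orderOf_dvd_natCard _ hx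
    rw [hall Q] at h1
    exact ((Nat.dvd_prime Nat.prime_three).1 h1).resolve_left (mt orderOf_eq_one_iff.1 hx1)
  have h := count_ti (G := G) (p := 3) (m := 3) hall hord (by
    intro Q R x hx hx' hx1
    have ho := hord Q x hx hx1
    have key : ∀ Q : Sylow 3 G, x ∈ Q → Subgroup.zpowers x = Q := by
      intro Q hx
      apply Subgroup.eq_of_le_of_card_ge
      · rw [Subgroup.zpowers_le]; exact hx
      · rw [Nat.card_zpowers, ho]; exact (hall Q).le
    apply Sylow.ext
    rw [← key Q hx, ← key R hx'])
  exact h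

variable (hG : Good G)
include hG

lemma Good.emb3_four (P : Sylow 3 G) (hP : Nat.card P = 3) (h4 : Nat.card (Sylow 3 G) = 4)
    (h24 : Nat.card G ∣ 24) : Emb6 G := by
  classical
  have := Fact.mk Nat.prime_three
  have := Fact.mk Nat.prime_two
  let N0 := Subgroup.normalizer (P : Set G)
  have hi : N0.index = 4 := by rw [← h4, P.card_eq_index_normalizer]
  let K := N0.normalCore
  have hKn : K.Normal := N0.normalCore_normal
  have hKle : K ≤ N0 := N0.normalCore_le
  obtain ⟨hKP, hKc⟩ := normal_le_centralizer P hP (by omega) hKn hKle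
  have hK3 : ¬ 3 ∣ Nat.card K := by
    intro h
    obtain ⟨x, hx⟩ := exists_prime_orderOf_dvd_card' (G := K) 3 h
    have hx' : orderOf (x : G) = 3 := by rw [Subgroup.orderOf_coe]; exact hx
    have h1 : (x : G) ∈ P := mem_sylow_of_normalizes (k := 1) P (hKle x.2) (by simpa using hx')
    have h2 : (x : G) ∈ K ⊓ P := ⟨x.2, h1⟩
    rw [hKP, Subgroup.mem_bot] at h2
    rw [h2, orderOf_one] at hx'
    omega
  obtain ⟨k, hk⟩ : ∃ k, Nat.card K = 2 ^ k := by
    have h1 : Nat.card K ∣ 2 ^ 3 * 3 := (Subgroup.card_subgroup_dvd_card K).trans h24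
    have h2 : Nat.Coprime (Nat.card K) 3 :=
      ((Nat.Prime.coprime_iff_not_dvd Nat.prime_three).2 hK3).symm
    obtain ⟨k, -, h⟩ := (Nat.dvd_prime_pow Nat.prime_two).1 (h2.dvd_of_dvd_mul_right h1)
    exact ⟨k, h⟩
  obtain ⟨y, hyP, hy3, hy⟩ := card3_gen hP
  have hk1 := hG.comm3 hy3 K hk (fun t ht => (hKc t ht y hyP).symm)
  have hk2 : k = 0 ∨ k = 1 := by omega
  have hNK : ∀ N : Subgroup G, N.Normal → N ≤ N0 → N ≤ K := by
    intro N hN hle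
    exact Subgroup.normal_le_normalCore.2 hle
  rcases hk2 with rfl | rfl
  · apply emb_subgroup N0 (by omega)
    intro N hN hle
    rw [← le_bot_iff, ← Subgroup.card_eq_one.1 hk]
    exact hNK N hN hle
  obtain ⟨z, hz, hzz, hz1, hzK⟩ := card2_gen hk
  have hz2 : orderOf z = 2 := orderOf_eq_prime (by rw [pow_two, hzz]) hz1
  have hzc : ∀ x, z * x = x * z := by
    intro x
    rcases hzK _ (hKn.conj_mem z hz x) with h | h
    · exfalso; apply hz1; simpa using h
    · exact (mul_inv_eq_iff_eq_mul.1 h).symm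
  have hG24 : Nat.card G = 24 := by
    have h1 : 3 ∣ Nat.card N0 := by
      have := Subgroup.card_dvd_of_le (Subgroup.le_normalizer : (P : Subgroup G) ≤ N0)
      rwa [hP] at this
    have h2 : 2 ∣ Nat.card N0 := by
      have := Subgroup.card_dvd_of_le hKle
      rwa [hk] at this
    have h3 := N0.card_mul_index
    rw [hi] at h3
    have h5 := Nat.le_of_dvd (by norm_num) h24
    have h6 := Nat.card_pos (α := G)
    omega
  have T0 : Sylow 2 G := default
  obtain ⟨T, hTT⟩ : ∃ T : Subgroup G, T = T0 := ⟨_, rfl⟩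
  have hT8 : Nat.card T = 8 := by
    rw [hTT]
    exact sylow_card_of (k := 3) T0 (by rw [hG24]; norm_num) (by rw [hG24]; norm_num)
  have hTo : ∀ x ∈ T, orderOf x ≠ 3 ∧ orderOf x ≠ 6 := by
    intro x hx
    have h1 : orderOf x ∣ Nat.card T := Subgroup.orderOf_dvd_natCard _ hx
    rw [hT8] at h1
    constructor <;> intro h <;> rw [h] at h1 <;> omega
  have hA : {g : G | orderOf g = 3}.ncard = 8 := by rw [count3 hP, h4]
  have hB : 8 ≤ {g : G | orderOf g = 6}.ncard := by
    rw [← hA]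
    apply Set.ncard_le_ncard_of_injOn (fun g => z * g)
    · intro a ha
      exact orderOf_mul_coprime' hz2 ha (hzc a) (by norm_num)
    · intro a _ b _ h
      exact mul_left_cancel h
  have hall : ∀ g : G, orderOf g ≠ 3 → orderOf g ≠ 6 → g ∈ T := by
    have h1 : ({g : G | orderOf g = 3} ∪ {g : G | orderOf g = 6}) ∪ (T : Set G) = Set.univ := by
      apply Set.eq_of_subset_of_ncard_le (Set.subset_univ _) _ (Set.toFinite _)
      rw [Set.ncard_univ, hG24, Set.ncard_union_eq _ (Set.toFinite _) (Set.toFinite _),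
        Set.ncard_union_eq _ (Set.toFinite _) (Set.toFinite _)]
      · have : (T : Set G).ncard = 8 := hT8
        omega
      · rw [Set.disjoint_left]
        intro a ha hb
        change orderOf a = 3 at ha
        change orderOf a = 6 at hb
        omega
      · rw [Set.disjoint_left]
        intro a ha hb
        rcases ha with ha | ha
        · exact (hTo a hb).1 ha
        · exact (hTo a hb).2 ha
    intro g h3 h6
    have h2 : g ∈ ({g : G | orderOf g = 3} ∪ {g : G | orderOf g = 6}) ∪ (T : Set G) := by
      rw [h1]; trivial
    rcases h2 with (h2 | h2) | h2
    · exact absurd h2 h3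
    · exact absurd h2 h6
    · exact h2
  have hconj : ∀ g x : G, orderOf (g * x * g⁻¹) = orderOf x := fun g x =>
    (MulAut.conj g).orderOf_eq x
  have hTn : T.Normal := ⟨fun n hn g => hall _ (by rw [hconj]; exact (hTo n hn).1)
    (by rw [hconj]; exact (hTo n hn).2)⟩
  have hzT : z ∈ T := hall z (by omega) (by omega)
  obtain ⟨hexp, s, hsT, hs1, hsz, hs2, hs3⟩ := hG.good_four hTn hT8 hzc hzz hz1 hzT hy3
  obtain ⟨r, hr⟩ : ∃ r, r = y * s * y⁻¹ := ⟨_, rfl⟩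
  rw [← hr] at hs2 hs3
  have hrT : r ∈ T := hr ▸ hTn.conj_mem s hsT y
  have hTc : ∀ a ∈ T, ∀ b ∈ T, a * b = b * a := by
    intro a ha b hb
    have h1 := hexp _ (T.mul_mem ha hb)
    have h2 : (a * b)⁻¹ = a * b := inv_eq_of_mul_eq_one_left h1
    rw [← h2, mul_inv_rev, inv_eq_of_mul_eq_one_left (hexp a ha),
      inv_eq_of_mul_eq_one_left (hexp b hb)]
  have hr1 : r ≠ 1 := by
    rw [hr]; intro h; apply hs1; simpa using h
  have hnz : ∀ x, y * x * y⁻¹ = z → x = z := by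
    intro x h
    rw [mul_inv_eq_iff_eq_mul, hzc] at h
    exact mul_left_cancel h
  have hrz : r ≠ z := by
    rw [hr]; intro h; exact hsz (hnz _ h)
  have hsrz : s * r ≠ z := by
    rw [hs3]; intro h; exact hrz (hnz _ h)
  let V := fourSub s r (hexp s hsT) (hexp r hrT) (hTc s hsT r hrT)
  have hV4 : Nat.card V = 4 := card_fourSub hs1 hr1 hs2.symm
  have hVT : V ≤ T := by
    intro x hx
    rcases mem_fourSub.1 hx with rfl | rfl | rfl | rfl
    · exact T.one_mem
    · exact hsT
    · exact hrT
    · exact T.mul_mem hsT hrT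
  have hzV : z ∉ V := by
    intro h
    rcases mem_fourSub.1 h with h | h | h | h
    · exact hz1 h
    · exact hsz h.symm
    · exact hrz h.symm
    · exact hsrz h.symm
  have hVn : V.Normal := by
    have htop : Subgroup.normalizer (V : Set G) = ⊤ := by
      have h1 : T ≤ Subgroup.normalizer (V : Set G) := by
        intro t ht
        rw [Subgroup.mem_normalizer_iff]
        intro x
        constructor
        · intro hx
          rw [hTc t ht x (hVT hx), mul_inv_cancel_right]
          exact hx
        · intro hx
          have h2 : x = t⁻¹ * (t * x * t⁻¹) * t := by group
          rw [hTc _ (T.inv_mem ht) _ (hVT hx), inv_mul_cancel_right] at h2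
          rw [h2]; exact hx
      have h2 : y ∈ Subgroup.normalizer (V : Set G) := by
        apply mem_normalizer_of_conj
        intro x hx
        rcases mem_fourSub.1 hx with rfl | rfl | rfl | rfl
        · simp [V.one_mem]
        · rw [← hr]; exact mem_fourSub.2 (by simp)
        · rw [← hs3]; exact mem_fourSub.2 (by simp)
        · have h5 : y * (s * r) * y⁻¹ = (y * s * y⁻¹) * (y * r * y⁻¹) := by group
          rw [h5, ← hr, ← hs3, hTc s hsT r hrT, ← mul_assoc, hexp r hrT, one_mul]
          exact mem_fourSub.2 (by simp)
      apply Subgroup.eq_top_of_card_eq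
      have h3 : 8 ∣ Nat.card (Subgroup.normalizer (V : Set G)) := by
        have := Subgroup.card_dvd_of_le h1
        rwa [hT8] at this
      have h4 : 3 ∣ Nat.card (Subgroup.normalizer (V : Set G)) := by
        have := Subgroup.orderOf_dvd_natCard _ h2
        rwa [hy3] at this
      have h5 := Subgroup.card_subgroup_dvd_card (Subgroup.normalizer (V : Set G))
      have h6 := Nat.le_of_dvd Nat.card_pos h5
      have h7 := Nat.card_pos (α := Subgroup.normalizer (V : Set G))
      omega
    exact Subgroup.normalizer_eq_top_iff.1 htop
  have hPT : ∀ x ∈ P, x ∈ T → x = 1 := by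
    intro x hx hxT
    have h1 : orderOf x ∣ Nat.card P := Subgroup.orderOf_dvd_natCard _ hx
    rw [hP] at h1
    rcases (Nat.dvd_prime Nat.prime_three).1 h1 with h | h
    · exact orderOf_eq_one_iff.1 h
    · exact absurd h (hTo x hxT).1
  let H := V ⊔ (P : Subgroup G)
  have hzH : z ∉ H := by
    intro h
    obtain ⟨v, hv, p, hp, hvp⟩ := Subgroup.mem_sup_of_normal_left.1 h
    have : p = 1 := hPT p hp (by
      rw [eq_inv_mul_of_mul_eq hvp]
      exact T.mul_mem (T.inv_mem (hVT hv)) hzT)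
    rw [this, mul_one] at hvp
    exact hzV (hvp ▸ hv)
  apply emb_two N0 H
  · have h3 : 3 ∣ Nat.card H := by
      have := Subgroup.card_dvd_of_le (le_sup_right : (P : Subgroup G) ≤ H)
      rwa [hP] at this
    have h4 : 4 ∣ Nat.card H := by
      have := Subgroup.card_dvd_of_le (le_sup_left : V ≤ H)
      rwa [hV4] at this
    have h5 := H.card_mul_index
    obtain ⟨m, hm⟩ : 12 ∣ Nat.card H := by omega
    rw [hm, hG24] at h5
    have : H.index ≤ 2 := by
      have : 1 ≤ m := by
        by_contra hcon
        have : m = 0 := by omega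
        subst this; omega
      nlinarith
    omega
  · intro N hN hle hle'
    rw [← le_bot_iff]
    intro x hx
    rcases hzK x (hNK N hN hle hx) with h3 | h3
    · exact h3
    · exact absurd (h3 ▸ hle' hx) hzH
end


section
variable {G : Type*} [Group G] [Fintype G]

lemma le_normalizer_of_card {E T : Subgroup G} (hle : E ≤ T) (hc : Nat.card T ≤ 2 * Nat.card E) :
    T ≤ Subgroup.normalizer (E : Set G) := by
  rw [← Subgroup.normal_subgroupOf_iff_le_normalizer hle]
  have h1 := (E.subgroupOf T).card_mul_index
  have h2 : Nat.card (E.subgroupOf T) = Nat.card E :=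
    Nat.card_congr (Subgroup.subgroupOfEquivOfLe hle).toEquiv
  rw [h2] at h1
  have h3 := Nat.card_pos (α := E)
  have h4 : (E.subgroupOf T).index ≤ 2 := by
    rw [← h1, mul_comm 2] at hc
    exact Nat.le_of_mul_le_mul_left hc h3
  have h5 : (E.subgroupOf T).index ≠ 0 := Subgroup.index_ne_zero_of_finite
  have h6 : (E.subgroupOf T).index = 1 ∨ (E.subgroupOf T).index = 2 := by omega
  rcases h6 with h6 | h6
  · rw [Subgroup.index_eq_one.1 h6]; infer_instance
  · exact Subgroup.normal_of_index_eq_two h6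

lemma q9_comm {Q : Subgroup G} (hQ : Nat.card Q = 9) {x y : G} (hx : x ∈ Q) (hy : y ∈ Q) :
    Commute x y := by
  have := Fact.mk Nat.prime_three
  have h := (IsPGroup.isMulCommutative_of_card_eq_prime_sq (p := 3) (G := Q) (by rw [hQ]; norm_num)
    |>.is_comm.comm) ⟨x, hx⟩ ⟨y, hy⟩
  exact congrArg Subtype.val h

variable (hG : Good G)
include hG

lemma Good.q9_ord {Q : Subgroup G} (hQ : Nat.card Q = 9) {x : G} (hx : x ∈ Q) (h1 : x ≠ 1) :
    orderOf x = 3 := by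
  obtain ⟨j, hj, ho⟩ := orderOf_of_mem_card (p := 3) (k := 2) Nat.prime_three hQ hx
  have := hG.ord x
  have h1 := mt orderOf_eq_one_iff.1 h1
  interval_cases j <;> simp_all

lemma Good.q9_cube {Q : Subgroup G} (hQ : Nat.card Q = 9) {x : G} (hx : x ∈ Q) :
    x ^ 3 = 1 := by
  by_cases h1 : x = 1
  · simp [h1]
  · have := pow_orderOf_eq_one x
    rwa [hG.q9_ord hQ hx h1] at this

lemma Good.cent9 (Q : Sylow 3 G) (hQ : Nat.card Q = 9) {y : G} (hy : ∀ x ∈ Q, Commute x y) :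
    y ∈ Q := by
  have := Fact.mk Nat.prime_three
  have no2 : ∀ z : G, orderOf z = 2 → (∀ x ∈ Q, Commute x z) → False := by
    intro z hz h
    exact hG.noQ z hz Q hQ fun w hw => ⟨hG.q9_cube hQ hw, (h w hw).symm⟩
  obtain ⟨x, hx⟩ := exists_prime_orderOf_dvd_card' (G := (Q : Subgroup G)) 3 (by rw [hQ]; norm_num)
  have hx' : orderOf (x : G) = 3 := by rw [Subgroup.orderOf_coe]; exact hx
  have h6 := hG.ord y
  have h0 := orderOf_pos y
  have hc := hy x x.2
  have hcase : orderOf y = 1 ∨ orderOf y = 2 ∨ orderOf y = 3 ∨ orderOf y = 4 ∨ orderOf y = 5 ∨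
    orderOf y = 6 := by omega
  rcases hcase with h | h | h | h | h | h
  · rw [orderOf_eq_one_iff.1 h]; exact Q.one_mem
  · exact (no2 y h hy).elim
  · apply mem_sylow_of_normalizes (k := 1) Q _ (by simpa using h)
    apply mem_normalizer_of_conj
    intro z hz
    rw [← (hy z hz).eq, mul_inv_cancel_right]
    exact hz
  · exact (hG.no_prod hx' h hc (by norm_num) (by norm_num)).elim
  · exact (hG.no_prod hx' h hc (by norm_num) (by norm_num)).elim
  · refine (no2 (y ^ 3) ?_ fun z hz => (hy z hz).pow_right 3).elim
    rw [orderOf_pow, h]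
    norm_num

/-- Sylow 3-subgroups of order 9 intersect trivially. -/
lemma Good.ti9 (hc9 : ∀ Q : Sylow 3 G, Nat.card Q = 9) (Q R : Sylow 3 G) (r : G) (hQ : r ∈ Q)
    (hR : r ∈ R) (hr : r ≠ 1) : Q = R := by
  have := Fact.mk Nat.prime_three
  have := Fact.mk Nat.prime_two
  have := Fact.mk Nat.prime_five
  have hr3 : orderOf r = 3 := hG.q9_ord (hc9 Q) hQ hr
  let C := Subgroup.centralizer ({r} : Set G)
  have hC : ∀ x, x ∈ C ↔ Commute r x := by
    intro x
    simp only [C, Subgroup.mem_centralizer_singleton_iff]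
    exact eq_comm
  have hle : ∀ S : Sylow 3 G, r ∈ S → (S : Subgroup G) ≤ C := by
    intro S hS x hx
    rw [hC]
    exact q9_comm (hc9 S) hS hx
  have hcard : Nat.card C ∣ 18 := by
    have h5 : ¬ 5 ∣ Nat.card C := by
      intro h
      obtain ⟨x, hx⟩ := exists_prime_orderOf_dvd_card' (G := C) 5 h
      have hx' : orderOf (x : G) = 5 := by rw [Subgroup.orderOf_coe]; exact hx
      exact hG.no_prod hr3 hx' ((hC x).1 x.2) (by norm_num) (by norm_num)
    have h4 : ¬ 2 ^ 2 ∣ Nat.card C := by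
      intro h
      obtain ⟨W, hW⟩ := Sylow.exists_subgroup_card_pow_prime 2 h
      have hW' : Nat.card (W.map C.subtype) = 2 ^ 2 := by
        rw [Subgroup.card_map_of_injective C.subtype_injective, hW]
      have := hG.comm3 hr3 _ hW' (fun t ht => (hC t).1 (Subgroup.map_subtype_le W ht))
      omega
    have h360 : Nat.card C ∣ 360 := (Subgroup.card_subgroup_dvd_card C).trans hG.card_dvd
    have hmem : Nat.card C ∈ Nat.divisors 360 := by simp [h360]
    have hd : ∀ m ∈ Nat.divisors 360, ¬ 5 ∣ m → ¬ 2 ^ 2 ∣ m → m ∣ 18 := by decide +kernel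
    exact hd _ hmem h5 h4
  symm
  apply sylow_le_of_normalizes Q R
  refine (hle R hR).trans (le_normalizer_of_card (hle Q hQ) ?_)
  rw [hc9 Q]
  exact Nat.le_of_dvd (by norm_num) hcard

lemma Good.inj9 (hc9 : ∀ Q : Sylow 3 G, Nat.card Q = 9) (Q R : Sylow 3 G) (hQR : Q ≠ R) :
    Function.Injective (fun q : (Q : Subgroup G) => (q : G) • R) := by
  intro a b h
  have h1 : ((b : G)⁻¹ * a) • R = R := by
    rw [mul_smul]
    change (b : G)⁻¹ • ((a : G) • R) = R
    have : (a : G) • R = (b : G) • R := h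
    rw [this, inv_smul_smul]
  have h2 := Sylow.smul_eq_iff_mem_normalizer.1 h1
  have hm : (b : G)⁻¹ * a ∈ Q := Q.mul_mem (Q.inv_mem b.2) a.2
  by_contra hne
  have h3 : (b : G)⁻¹ * a ≠ 1 := by
    intro h4
    apply hne
    exact Subtype.ext (inv_mul_eq_one.1 h4).symm
  apply hQR
  refine hG.ti9 hc9 Q R _ hm ?_ h3
  exact mem_sylow_of_normalizes (k := 1) R h2 (by simpa using hG.q9_ord (hc9 Q) hm h3)

lemma Good.nine_le (hc9 : ∀ Q : Sylow 3 G, Nat.card Q = 9) (h1 : Nat.card (Sylow 3 G) ≠ 1) :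
    9 ≤ Nat.card (Sylow 3 G) := by
  have := Fact.mk Nat.prime_three
  have h2 : 1 < Nat.card (Sylow 3 G) := by
    have := Nat.card_pos (α := Sylow 3 G)
    omega
  have := Finite.one_lt_card_iff_nontrivial.1 h2
  obtain ⟨Q, R, hQR⟩ := exists_pair_ne (Sylow 3 G)
  have h3 := Nat.card_le_card_of_injective _ (hG.inj9 hc9 Q R hQR)
  rwa [hc9 Q] at h3
end


section
variable {G : Type*} [Group G] [Fintype G]

/-- Conjugation by `t` preserves or swaps the two subgroups. -/
def Sw (t : G) (R1 R2 : Subgroup G) : Prop :=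
  ((∀ r ∈ R1, t * r * t⁻¹ ∈ R1) ∧ (∀ r ∈ R2, t * r * t⁻¹ ∈ R2)) ∨
    ((∀ r ∈ R1, t * r * t⁻¹ ∈ R2) ∧ (∀ r ∈ R2, t * r * t⁻¹ ∈ R1))

lemma conj_mul' (a b r : G) : (a * b) * r * (a * b)⁻¹ = a * (b * r * b⁻¹) * a⁻¹ := by group

lemma Sw.mul {a b : G} {R1 R2 : Subgroup G} (ha : Sw a R1 R2) (hb : Sw b R1 R2) :
    Sw (a * b) R1 R2 := by
  unfold Sw
  simp only [conj_mul']
  rcases ha with ⟨a1, a2⟩ | ⟨a1, a2⟩ <;> rcases hb with ⟨b1, b2⟩ | ⟨b1, b2⟩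
  · exact Or.inl ⟨fun r hr => a1 _ (b1 _ hr), fun r hr => a2 _ (b2 _ hr)⟩
  · exact Or.inr ⟨fun r hr => a2 _ (b1 _ hr), fun r hr => a1 _ (b2 _ hr)⟩
  · exact Or.inr ⟨fun r hr => a1 _ (b1 _ hr), fun r hr => a2 _ (b2 _ hr)⟩
  · exact Or.inl ⟨fun r hr => a2 _ (b1 _ hr), fun r hr => a1 _ (b2 _ hr)⟩

lemma sup_inf_aux {Q T R S : Subgroup G} (hQT : ∀ x ∈ Q, x ∈ T → x = 1) (hR : R ≤ Q) (hS : S ≤ T)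
    (hn : S ≤ Subgroup.normalizer (R : Set G)) {x : G} (hx : x ∈ R ⊔ S) (hxQ : x ∈ Q) : x ∈ R := by
  have h1 : x ∈ ((R ⊔ S : Subgroup G) : Set G) := hx
  rw [Subgroup.coe_mul_of_right_le_normalizer_left R S hn] at h1
  obtain ⟨r, hr, s, hs, hrs⟩ := Set.mem_mul.1 h1
  have : s = 1 := hQT s (by
    rw [eq_inv_mul_of_mul_eq hrs]
    exact Q.mul_mem (Q.inv_mem (hR hr)) hxQ) (hS hs)
  rw [this, mul_one] at hrs
  rw [← hrs]; exact hr

lemma index_sup_le {R S : Subgroup G} {k : ℕ} (hc : Nat.Coprime (Nat.card R) (Nat.card S))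
    (h : Nat.card G ≤ Nat.card R * Nat.card S * k) : (R ⊔ S).index ≤ k := by
  have h1 : Nat.card R * Nat.card S ∣ Nat.card (R ⊔ S : Subgroup G) :=
    hc.mul_dvd_of_dvd_of_dvd (Subgroup.card_dvd_of_le le_sup_left)
      (Subgroup.card_dvd_of_le le_sup_right)
  have h2 := Nat.le_of_dvd Nat.card_pos h1
  have h3 := (R ⊔ S).card_mul_index
  have h4 : 0 < Nat.card R * Nat.card S := Nat.mul_pos Nat.card_pos Nat.card_pos
  by_contra hcon
  have h5 : k + 1 ≤ (R ⊔ S).index := by omega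
  have h6 := Nat.mul_le_mul h2 h5
  rw [h3] at h6
  nlinarith

lemma emb9_of_pair {Q T R1 R2 : Subgroup G} {a : ℕ} (hQn : Q.Normal) (hQ : Nat.card Q = 9)
    (hcent : ∀ y, (∀ x ∈ Q, Commute x y) → y ∈ Q) (hT : Q.IsComplement' T)
    (hTa : Nat.card T = 2 ^ a) (h1Q : R1 ≤ Q) (h2Q : R2 ≤ Q) (h1 : Nat.card R1 = 3)
    (h2 : Nat.card R2 = 3) (h12 : ∀ x ∈ R1, x ∈ R2 → x = 1) (hsw : ∀ t ∈ T, Sw t R1 R2) :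
    Emb6 G := by
  have hcore : ∀ N : Subgroup G, N.Normal → (∀ x ∈ N, x ∈ Q → x = 1) → N = ⊥ := by
    intro N hN h
    rw [← le_bot_iff]
    intro x hx
    apply h x hx
    apply hcent
    intro y hy
    refine (commute_of_inf_bot (P := Q) hN ?_ ?_ hx hy).symm
    · rw [Subgroup.normalizer_eq_top]; exact le_top
    · rw [← le_bot_iff]
      intro w hw
      exact Subgroup.mem_bot.2 (h w hw.1 hw.2)
  have hQT : ∀ x ∈ Q, x ∈ T → x = 1 := by
    intro x hx hx'
    have : x ∈ Q ⊓ T := ⟨hx, hx'⟩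
    rw [hT.disjoint.eq_bot] at this
    exact Subgroup.mem_bot.1 this
  have hGc : Nat.card G = 9 * 2 ^ a := by rw [← hTa, ← hQ, hT.card_mul]
  have hnot : ∀ t, (∀ r ∈ R1, t * r * t⁻¹ ∈ R1) → (∀ r ∈ R1, t * r * t⁻¹ ∈ R2) → False := by
    intro t ha hb
    obtain ⟨c, hc, hc3, -⟩ := card3_gen h1
    have := h12 _ (ha c hc) (hb c hc)
    have hc1 : c = 1 := by simpa using this
    rw [hc1, orderOf_one] at hc3
    omega
  by_cases hall : ∀ t ∈ T, ∀ r ∈ R1, t * r * t⁻¹ ∈ R1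
  · have hn1 : T ≤ Subgroup.normalizer (R1 : Set G) := fun t ht =>
      mem_normalizer_of_conj (hall t ht)
    have hn2 : T ≤ Subgroup.normalizer (R2 : Set G) := fun t ht => by
      apply mem_normalizer_of_conj
      rcases hsw t ht with h | h
      · exact h.2
      · exact (hnot t (hall t ht) h.1).elim
    apply emb_two (R1 ⊔ T) (R2 ⊔ T)
    · have e1 : (R1 ⊔ T).index ≤ 3 := by
        apply index_sup_le
        · rw [h1, hTa]; exact Nat.Coprime.pow_right _ (by norm_num)
        · rw [h1, hTa, hGc]; omega
      have e2 : (R2 ⊔ T).index ≤ 3 := by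
        apply index_sup_le
        · rw [h2, hTa]; exact Nat.Coprime.pow_right _ (by norm_num)
        · rw [h2, hTa, hGc]; omega
      omega
    · intro N hN hle hle'
      apply hcore N hN
      intro x hx hxQ
      exact h12 x (sup_inf_aux hQT h1Q le_rfl hn1 (hle hx) hxQ)
        (sup_inf_aux hQT h2Q le_rfl hn2 (hle' hx) hxQ)
  · push Not at hall
    obtain ⟨t0, ht0, r0, hr0, hr0'⟩ := hall
    have hs0 : (∀ r ∈ R1, t0 * r * t0⁻¹ ∈ R2) ∧ (∀ r ∈ R2, t0 * r * t0⁻¹ ∈ R1) := by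
      rcases hsw t0 ht0 with h | h
      · exact absurd (h.1 r0 hr0) hr0'
      · exact h
    let T1 := T ⊓ Subgroup.normalizer (R1 : Set G)
    have hT1 : Nat.card T ≤ 2 * Nat.card T1 := by
      have hsub : (T : Set G) ⊆ (T1 : Set G) ∪ (fun x => t0⁻¹ * x) '' (T1 : Set G) := by
        intro t ht
        rcases hsw t ht with h | h
        · exact Or.inl ⟨ht, mem_normalizer_of_conj h.1⟩
        · right
          refine ⟨t0 * t, ⟨T.mul_mem ht0 ht, ?_⟩, by simp⟩
          apply mem_normalizer_of_conj
          intro r hr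
          rw [conj_mul']
          exact hs0.2 _ (h.1 r hr)
      have e1 := Set.ncard_le_ncard hsub (Set.toFinite _)
      have e2 := Set.ncard_union_le (T1 : Set G) ((fun x => t0⁻¹ * x) '' (T1 : Set G))
      have e3 := Set.ncard_image_le (f := fun x => t0⁻¹ * x) (Set.toFinite (T1 : Set G))
      have e4 : (T : Set G).ncard = Nat.card T := rfl
      have e5 : (T1 : Set G).ncard = Nat.card T1 := rfl
      omega
    obtain ⟨b, -, hb⟩ := (Nat.dvd_prime_pow Nat.prime_two).1
      (hTa ▸ Subgroup.card_dvd_of_le (inf_le_left : T1 ≤ T))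
    apply emb_subgroup (R1 ⊔ T1)
    · apply index_sup_le
      · rw [h1, hb]; exact Nat.Coprime.pow_right _ (by norm_num)
      · rw [h1, hGc, ← hTa]; omega
    · intro N hN hle
      apply hcore N hN
      have key : ∀ x ∈ N, x ∈ Q → x ∈ R1 := fun x hx hxQ =>
        sup_inf_aux hQT h1Q inf_le_left inf_le_right (hle hx) hxQ
      intro x hx hxQ
      apply h12 x (key x hx hxQ)
      have h3 := key _ (hN.conj_mem x hx t0⁻¹) (hQn.conj_mem x hxQ t0⁻¹)
      have h4 := hs0.1 _ h3
      rw [← conj_mul'] at h4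
      simpa using h4

/-- Elements of an abelian subgroup inverted by `s`. -/
def invSub (Q : Subgroup G) (hc : ∀ x ∈ Q, ∀ y ∈ Q, Commute x y) (s : G) : Subgroup G where
  carrier := {q | q ∈ Q ∧ s * q * s⁻¹ = q⁻¹}
  one_mem' := ⟨Q.one_mem, by simp⟩
  mul_mem' := by
    rintro x y ⟨hx, hx'⟩ ⟨hy, hy'⟩
    refine ⟨Q.mul_mem hx hy, ?_⟩
    rw [← conj_mul, hx', hy', mul_inv_rev]
    exact ((hc x hx y hy).inv_inv).eq
  inv_mem' := by
    rintro x ⟨hx, hx'⟩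
    refine ⟨Q.inv_mem hx, ?_⟩
    rw [← conj_inv, hx']

lemma mem_invSub {Q : Subgroup G} {hc : ∀ x ∈ Q, ∀ y ∈ Q, Commute x y} {s q : G} :
    q ∈ invSub Q hc s ↔ q ∈ Q ∧ s * q * s⁻¹ = q⁻¹ := Iff.rfl

lemma mem_fixSub {Q : Subgroup G} {s q : G} :
    q ∈ Q ⊓ Subgroup.centralizer {s} ↔ q ∈ Q ∧ s * q * s⁻¹ = q := by
  rw [Subgroup.mem_inf, Subgroup.mem_centralizer_singleton_iff, mul_inv_eq_iff_eq_mul, eq_comm]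

lemma split9 {Q : Subgroup G} (hQn : Q.Normal) (hQ : Nat.card Q = 9)
    (h3 : ∀ x ∈ Q, x ^ 3 = 1) (hc : ∀ x ∈ Q, ∀ y ∈ Q, Commute x y) {s : G} (hs : s * s = 1)
    (hn1 : ¬ ∀ q ∈ Q, s * q * s⁻¹ = q) (hn2 : ¬ ∀ q ∈ Q, s * q * s⁻¹ = q⁻¹) :
    Nat.card (Q ⊓ Subgroup.centralizer {s} : Subgroup G) = 3 ∧ Nat.card (invSub Q hc s) = 3 ∧
      ∀ x ∈ Q ⊓ Subgroup.centralizer {s}, x ∈ invSub Q hc s → x = 1 := by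
  have hss : ∀ q, s * (s * q * s⁻¹) * s⁻¹ = q := by
    intro q
    rw [← conj_mul', hs]; simp
  have hpr : ∀ K : Subgroup G, K ≤ Q → K ≠ ⊥ → ¬ (Q ≤ K) → Nat.card K = 3 := by
    intro K hK h1 h2
    have hd : Nat.card K ∣ 3 ^ 2 := by
      have := Subgroup.card_dvd_of_le hK
      rwa [hQ] at this
    obtain ⟨j, hj, hcj⟩ := (Nat.dvd_prime_pow Nat.prime_three).1 hd
    have hj' : j = 0 ∨ j = 1 ∨ j = 2 := by omega
    rcases hj' with rfl | rfl | rfl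
    · exact absurd (Subgroup.card_eq_one.1 hcj) h1
    · exact hcj
    · exact absurd (Subgroup.eq_of_le_of_card_ge hK (by rw [hcj, hQ]; norm_num)).ge h2
  have hA : ∀ q ∈ Q, q * (s * q * s⁻¹) ∈ Q ⊓ Subgroup.centralizer {s} := by
    intro q hq
    have hq' := hQn.conj_mem q hq s
    refine mem_fixSub.2 ⟨Q.mul_mem hq hq', ?_⟩
    rw [← conj_mul, hss]
    exact (hc _ hq' _ hq).eq
  have hB : ∀ q ∈ Q, q * (s * q * s⁻¹)⁻¹ ∈ invSub Q hc s := by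
    intro q hq
    have hq' := hQn.conj_mem q hq s
    refine mem_invSub.2 ⟨Q.mul_mem hq (Q.inv_mem hq'), ?_⟩
    rw [← conj_mul, ← conj_inv, hss, mul_inv_rev, inv_inv]
  have hAe : Q ⊓ Subgroup.centralizer {s} ≠ ⊥ := by
    intro h
    apply hn2
    intro q hq
    have h1 := hA q hq
    rw [h, Subgroup.mem_bot] at h1
    exact eq_inv_of_mul_eq_one_right h1
  have hBe : invSub Q hc s ≠ ⊥ := by
    intro h
    apply hn1
    intro q hq
    have h1 := hB q hq
    rw [h, Subgroup.mem_bot] at h1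
    exact (mul_inv_eq_one.1 h1).symm
  refine ⟨hpr _ inf_le_left hAe ?_, hpr _ (fun x hx => hx.1) hBe ?_, ?_⟩
  · intro h
    exact hn1 fun q hq => (mem_fixSub.1 (h hq)).2
  · intro h
    exact hn2 fun q hq => (mem_invSub.1 (h hq)).2
  · intro x hx hx'
    have h1 := (mem_fixSub.1 hx).2
    rw [(mem_invSub.1 hx').2] at h1
    have h2 : x * x = 1 := by nth_rewrite 1 [← h1]; exact inv_mul_cancel x
    have h4 := h3 x hx.1
    rwa [pow_succ, pow_two, h2, one_mul] at h4
end


section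
variable {G : Type*} [Group G] [Fintype G]

lemma invSub_le {Q : Subgroup G} {hc : ∀ x ∈ Q, ∀ y ∈ Q, Commute x y} {s : G} :
    invSub Q hc s ≤ Q := fun _ hx => (mem_invSub.1 hx).1

lemma central_invol {T : Subgroup G} {a : ℕ} (hT : Nat.card T = 2 ^ (a + 1)) :
    ∃ z ∈ T, z * z = 1 ∧ z ≠ 1 ∧ ∀ t ∈ T, t * z = z * t := by
  have := Fact.mk Nat.prime_two
  have hp : IsPGroup 2 T := IsPGroup.of_card hT
  have hnt : Nontrivial T := by
    apply Finite.one_lt_card_iff_nontrivial.1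
    rw [hT]
    exact Nat.one_lt_two_pow (by omega)
  have hc := hp.center_nontrivial
  have hcp : IsPGroup 2 (Subgroup.center T) := hp.to_subgroup _
  obtain ⟨n, hn⟩ := IsPGroup.iff_card.1 hcp
  have h1 := Finite.one_lt_card_iff_nontrivial.2 hc
  have h2 : 2 ∣ Nat.card (Subgroup.center T) := by
    rw [hn] at h1 ⊢
    apply dvd_pow_self
    rintro rfl
    simp at h1
  obtain ⟨x, hx⟩ := exists_prime_orderOf_dvd_card' 2 h2
  have hx' : orderOf ((x : T) : G) = 2 := by
    rw [Subgroup.orderOf_coe, Subgroup.orderOf_coe]; exact hx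
  refine ⟨(x : T), (x : T).2, ?_, ?_, ?_⟩
  · rw [← pow_two, ← hx', pow_orderOf_eq_one]
  · intro h
    rw [h, orderOf_one] at hx'
    omega
  · intro t ht
    have := (Subgroup.mem_center_iff.1 x.2) ⟨t, ht⟩
    exact congrArg Subtype.val this

variable (hG : Good G)
include hG

lemma Good.emb9_normal (P : Sylow 3 G) (hP : Nat.card P = 9) (h1 : Nat.card (Sylow 3 G) = 1)
    (h72 : Nat.card G ∣ 72) : Emb6 G := by
  have := Fact.mk Nat.prime_three
  have := Fact.mk Nat.prime_two
  have hcent0 := fun y => hG.cent9 P hP (y := y)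
  have hn0 : (P : Subgroup G).Normal := normal_of_card_sylow P h1
  obtain ⟨T, hT0⟩ := Subgroup.exists_right_complement'_of_coprime (N := (P : Subgroup G)) (by
    exact P.card_coprime_index)
  obtain ⟨Q, hQP⟩ : ∃ Q : Subgroup G, Q = P := ⟨_, rfl⟩
  have hQ : Nat.card Q = 9 := by rw [hQP]; exact hP
  have hQn : Q.Normal := by rw [hQP]; exact hn0
  have hT : Q.IsComplement' T := by rw [hQP]; exact hT0
  have hcent : ∀ y, (∀ x ∈ Q, Commute x y) → y ∈ Q := by rw [hQP]; exact hcent0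
  clear hcent0 hT0 hn0 hQP
  have h3 : ∀ x ∈ Q, x ^ 3 = 1 := fun x hx => hG.q9_cube hQ hx
  have hcm : ∀ x ∈ Q, ∀ y ∈ Q, Commute x y := fun x hx y hy => q9_comm hQ hx hy
  have hcard : Nat.card T ∣ 2 ^ 3 := by
    have h := hT.card_mul_card
    rw [hQ] at h
    apply Nat.dvd_of_mul_dvd_mul_left (k := 9) (by norm_num)
    rw [h]; exact h72
  obtain ⟨a, ha3, ha⟩ := (Nat.dvd_prime_pow Nat.prime_two).1 hcard
  have hQT : ∀ x ∈ Q, x ∈ T → x = 1 := by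
    intro x hx hx'
    have : x ∈ Q ⊓ T := ⟨hx, hx'⟩
    rw [hT.disjoint.eq_bot] at this
    exact Subgroup.mem_bot.1 this
  have hfaith : ∀ t ∈ T, (∀ q ∈ Q, t * q * t⁻¹ = q) → t = 1 := by
    intro t ht h
    exact hQT t (hcent t fun x hx => (mul_inv_eq_iff_eq_mul.1 (h x hx)).symm) ht
  have hexQ : ∃ q ∈ Q, q ≠ 1 := by
    by_contra hcon
    push Not at hcon
    have : Q = ⊥ := by
      rw [← le_bot_iff]; intro x hx; exact hcon x hx
    rw [this] at hQ
    simp at hQ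
  obtain ⟨q1, hq1, hq11⟩ := hexQ
  have hzp : ∀ q ∈ Q, q ≠ 1 → Nat.card (Subgroup.zpowers q) = 3 := by
    intro q hq hq1
    rw [Nat.card_zpowers, hG.q9_ord hQ hq hq1]
  have hR1 := hzp q1 hq1 hq11
  have hR1Q : Subgroup.zpowers q1 ≤ Q := Subgroup.zpowers_le.2 hq1
  have hdisj : ∀ R1 R2 : Subgroup G, Nat.card R1 = 3 → Nat.card R2 = 3 → R1 ≠ R2 →
      ∀ x ∈ R1, x ∈ R2 → x = 1 := by
    intro R1 R2 h1 h2 hne x hx hx'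
    have h4 : R1 ⊓ R2 = ⊥ := inf_bot_of_prime Nat.prime_three h2 (fun hle =>
      hne (Subgroup.eq_of_le_of_card_ge hle (by rw [h1, h2])).symm)
    have h5 : x ∈ R1 ⊓ R2 := ⟨hx, hx'⟩
    rw [h4] at h5
    exact h5
  have scalar : (∀ t ∈ T, (∀ q ∈ Q, t * q * t⁻¹ = q) ∨ (∀ q ∈ Q, t * q * t⁻¹ = q⁻¹)) →
      Emb6 G := by
    intro hsc
    obtain ⟨q2, hq2, hq2'⟩ : ∃ q ∈ Q, q ∉ Subgroup.zpowers q1 := by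
      by_contra hcon
      push Not at hcon
      have := Subgroup.card_le_of_le (show Q ≤ Subgroup.zpowers q1 from hcon)
      omega
    have hq21 : q2 ≠ 1 := by rintro rfl; exact hq2' (Subgroup.one_mem _)
    have hR2Q : Subgroup.zpowers q2 ≤ Q := Subgroup.zpowers_le.2 hq2
    refine emb9_of_pair hQn hQ hcent hT ha hR1Q hR2Q hR1 (hzp q2 hq2 hq21)
      (hdisj _ _ hR1 (hzp q2 hq2 hq21) ?_) ?_
    · intro h; apply hq2'; rw [h]; exact Subgroup.mem_zpowers q2
    · intro t ht
      left
      rcases hsc t ht with h | h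
      · exact ⟨fun r hr => by rw [h r (hR1Q hr)]; exact hr,
          fun r hr => by rw [h r (hR2Q hr)]; exact hr⟩
      · exact ⟨fun r hr => by rw [h r (hR1Q hr)]; exact Subgroup.inv_mem _ hr,
          fun r hr => by rw [h r (hR2Q hr)]; exact Subgroup.inv_mem _ hr⟩
  rcases a with _ | a
  · apply scalar
    intro t ht
    have : T = ⊥ := Subgroup.card_eq_one.1 ha
    rw [this, Subgroup.mem_bot] at ht
    left; intro q _; rw [ht]; simp
  obtain ⟨z, hzT, hzz, hz1, hzc⟩ := central_invol ha
  by_cases hzi : ∀ q ∈ Q, z * q * z⁻¹ = q⁻¹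
  swap
  · obtain ⟨e1, e2, e3⟩ := split9 hQn hQ h3 hcm hzz (fun h => hz1 (hfaith z hzT h)) hzi
    refine emb9_of_pair hQn hQ hcent hT ha inf_le_left (invSub_le (hc := hcm)) e1 e2 e3 ?_
    intro t ht
    left
    have key : ∀ r, z * (t * r * t⁻¹) * z⁻¹ = t * (z * r * z⁻¹) * t⁻¹ := by
      intro r
      rw [← conj_mul', ← conj_mul', hzc t ht]
    constructor
    · intro r hr
      obtain ⟨hr1, hr2⟩ := mem_fixSub.1 hr
      exact mem_fixSub.2 ⟨hQn.conj_mem r hr1 t, by rw [key, hr2]⟩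
    · intro r hr
      obtain ⟨hr1, hr2⟩ := mem_invSub.1 hr
      exact mem_invSub.2 ⟨hQn.conj_mem r hr1 t, by rw [key, hr2, conj_inv]⟩
  by_cases hex : ∃ s ∈ T, s * s = 1 ∧ s ≠ 1 ∧ s ≠ z
  · obtain ⟨s, hsT, hss, hs1, hsz⟩ := hex
    have hsi : ¬ ∀ q ∈ Q, s * q * s⁻¹ = q⁻¹ := by
      intro h
      apply hsz
      have h4 : s * z = 1 := by
        apply hfaith _ (T.mul_mem hsT hzT)
        intro q hq
        rw [conj_mul', hzi q hq, ← conj_inv, h q hq, inv_inv]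
      rw [eq_inv_of_mul_eq_one_left h4, inv_eq_of_mul_eq_one_left hzz]
    obtain ⟨e1, e2, e3⟩ := split9 hQn hQ h3 hcm hss (fun h => hs1 (hfaith s hsT h)) hsi
    refine emb9_of_pair hQn hQ hcent hT ha inf_le_left (invSub_le (hc := hcm)) e1 e2 e3 ?_
    let E := fourSub s z hss hzz (hzc s hsT)
    have hET : E ≤ T := by
      intro x hx
      rcases mem_fourSub.1 hx with rfl | rfl | rfl | rfl
      · exact T.one_mem
      · exact hsT
      · exact hzT
      · exact T.mul_mem hsT hzT
    have hEn := le_normalizer_of_card hET (by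
      rw [card_fourSub hs1 hz1 hsz]
      exact Nat.le_of_dvd (by norm_num) hcard)
    intro t ht
    have hconj : t * s * t⁻¹ = s ∨ t * s * t⁻¹ = s * z := by
      have h4 : t * s * t⁻¹ ∈ E :=
        (Subgroup.mem_normalizer_iff.1 (hEn ht) s).1 (mem_fourSub.2 (by simp))
      rcases mem_fourSub.1 h4 with h | h | h | h
      · exact absurd (by simpa using h) hs1
      · exact Or.inl h
      · rw [mul_inv_eq_iff_eq_mul, ← hzc t ht] at h
        exact absurd (mul_left_cancel h) hsz
      · exact Or.inr h
    rcases hconj with h | h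
    · left
      have key : ∀ r, s * (t * r * t⁻¹) * s⁻¹ = t * (s * r * s⁻¹) * t⁻¹ := by
        intro r
        rw [← conj_mul', ← conj_mul', mul_inv_eq_iff_eq_mul.1 h]
      constructor
      · intro r hr
        obtain ⟨hr1, hr2⟩ := mem_fixSub.1 hr
        exact mem_fixSub.2 ⟨hQn.conj_mem r hr1 t, by rw [key, hr2]⟩
      · intro r hr
        obtain ⟨hr1, hr2⟩ := mem_invSub.1 hr
        exact mem_invSub.2 ⟨hQn.conj_mem r hr1 t, by rw [key, hr2, conj_inv]⟩
    · right
      have key : ∀ r ∈ Q, s * (t * r * t⁻¹) * s⁻¹ = (t * (s * r * s⁻¹) * t⁻¹)⁻¹ := by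
        intro r hr
        have h5 : t * s = s * z * t := mul_inv_eq_iff_eq_mul.1 h
        rw [← conj_mul' t s, h5, conj_mul', conj_mul', hzi _ (hQn.conj_mem r hr t), conj_inv,
          inv_inv]
      constructor
      · intro r hr
        obtain ⟨hr1, hr2⟩ := mem_fixSub.1 hr
        exact mem_invSub.2 ⟨hQn.conj_mem r hr1 t, by rw [key r hr1, hr2]⟩
      · intro r hr
        obtain ⟨hr1, hr2⟩ := mem_invSub.1 hr
        exact mem_fixSub.2 ⟨hQn.conj_mem r hr1 t, by rw [key r hr1, hr2, ← conj_inv, inv_inv]⟩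
  push Not at hex
  have hz2 : orderOf z = 2 := orderOf_eq_prime (by rw [pow_two, hzz]) hz1
  have ha' : a = 0 ∨ a = 1 ∨ a = 2 := by omega
  rcases ha' with rfl | rfl | rfl
  · apply scalar
    intro t ht
    obtain ⟨z', hz', -, hz1', hall⟩ := card2_gen (D := T) (by rw [ha]; norm_num)
    have hzz' : z = z' := (hall z hzT).resolve_left hz1
    rcases hall t ht with h | h
    · left; intro q _; rw [h]; simp
    · right; rw [h, ← hzz']; exact hzi
  ·
    obtain ⟨w, hwT, hw⟩ : ∃ w ∈ T, w ∉ Subgroup.zpowers z := by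
      by_contra hcon
      push Not at hcon
      have := Subgroup.card_le_of_le (show T ≤ Subgroup.zpowers z from hcon)
      rw [Nat.card_zpowers, hz2, ha] at this
      omega
    have hw1 : w ≠ 1 := by rintro rfl; exact hw (Subgroup.one_mem _)
    have hwz : w ≠ z := by rintro rfl; exact hw (Subgroup.mem_zpowers _)
    have hw2 : w * w ≠ 1 := fun h => hwz (hex w hwT h hw1)
    have hw4 : w ^ 4 = 1 := by
      have h4 : orderOf w ∣ Nat.card T := Subgroup.orderOf_dvd_natCard _ hwT
      rw [ha] at h4
      exact orderOf_dvd_iff_pow_eq_one.1 h4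
    have hwwz : w * w = z := hex (w * w) (T.mul_mem hwT hwT) (by
      rw [← hw4]; simp only [pow_succ, pow_zero, one_mul, mul_assoc]) hw2
    have how : orderOf w = 4 := by
      have := orderOf_eq_prime_pow (x := w) (p := 2) (n := 1) (by rw [pow_one, pow_two]; exact hw2)
        (by simpa using hw4)
      simpa using this
    have hTw : Subgroup.zpowers w = T := by
      apply Subgroup.eq_of_le_of_card_ge (Subgroup.zpowers_le.2 hwT)
      rw [Nat.card_zpowers, how, ha]
      norm_num
    let R2 := (Subgroup.zpowers q1).map (MulAut.conj w).toMonoidHom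
    have hR2 : Nat.card R2 = 3 := by
      rw [Subgroup.card_map_of_injective (MulEquiv.injective _), hR1]
    have hR2m : ∀ x ∈ R2, ∃ r ∈ Subgroup.zpowers q1, w * r * w⁻¹ = x := by
      rintro x ⟨r, hr, rfl⟩
      exact ⟨r, hr, rfl⟩
    have hR2Q : R2 ≤ Q := by
      intro x hx
      obtain ⟨r, hr, rfl⟩ := hR2m x hx
      exact hQn.conj_mem _ (hR1Q hr) w
    have hsw : Sw w (Subgroup.zpowers q1) R2 := by
      right
      refine ⟨fun r hr => ⟨r, hr, rfl⟩, fun x hx => ?_⟩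
      obtain ⟨r, hr, rfl⟩ := hR2m x hx
      rw [← conj_mul', hwwz, hzi r (hR1Q hr)]
      exact Subgroup.inv_mem _ hr
    refine emb9_of_pair hQn hQ hcent hT ha hR1Q hR2Q hR1 hR2 (hdisj _ _ hR1 hR2 ?_) ?_
    · intro h
      have h4 : w * q1 * w⁻¹ ∈ Subgroup.zpowers q1 := by
        rw [h]; exact ⟨q1, Subgroup.mem_zpowers q1, rfl⟩
      obtain ⟨k, hk⟩ := Subgroup.mem_zpowers_iff.1 h4
      have h5 : z * q1 * z⁻¹ = q1 := by
        rw [← hwwz, conj_mul', ← hk, ← conj_zpow, ← hk]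
        have h6 := h3 q1 hq1
        have h7 : ∃ m : ℤ, k * k = 1 + 3 * m := by
          have h8 : k % 3 = 0 ∨ k % 3 = 1 ∨ k % 3 = 2 := by omega
          rcases h8 with h8 | h8 | h8
          · exfalso
            obtain ⟨m, rfl⟩ : (3 : ℤ) ∣ k := Int.dvd_of_emod_eq_zero h8
            rw [zpow_mul] at hk
            have h9 : q1 ^ (3 : ℤ) = 1 := by exact_mod_cast h6
            rw [h9, one_zpow] at hk
            apply hq11
            simpa using hk.symm
          · exact ⟨(k / 3) * (k + 1), by
              obtain ⟨m, hm⟩ : ∃ m, m = k / 3 := ⟨_, rfl⟩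
              have : k = 3 * m + 1 := by omega
              rw [← hm, this]; ring⟩
          · exact ⟨(k / 3) * (k + 2) + 1, by
              obtain ⟨m, hm⟩ : ∃ m, m = k / 3 := ⟨_, rfl⟩
              have : k = 3 * m + 2 := by omega
              rw [← hm, this]; ring⟩
        obtain ⟨m, hm⟩ := h7
        have h9 : q1 ^ (3 : ℤ) = 1 := by exact_mod_cast h6
        rw [← zpow_mul, hm, zpow_add, zpow_mul, h9, one_zpow, zpow_one, mul_one]
      rw [hzi q1 hq1] at h5
      have h6 : q1 * q1 = 1 := by nth_rewrite 1 [← h5]; exact inv_mul_cancel q1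
      have h7 := h3 q1 hq1
      rw [pow_succ, pow_two, h6, one_mul] at h7
      exact hq11 h7
    · intro t ht
      rw [← hTw, ← mem_powers_iff_mem_zpowers] at ht
      obtain ⟨n, rfl⟩ := ht
      clear * - hsw
      induction n with
      | zero => left; simp
      | succ n ih => 
        change Sw (w ^ (n + 1)) _ _
        rw [pow_succ]; exact Sw.mul ih hsw
  · exfalso
    obtain ⟨s, hs, hs2, hsz⟩ := hG.inv T (by rw [ha]; norm_num) z hzT hz2
    apply hsz
    apply hex s hs
    · rw [← pow_two, ← hs2, pow_orderOf_eq_one]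
    · rintro rfl; simp at hs2

/-- The case where 5 does not divide the order. -/
lemma Good.emb_no5 (h5 : ¬ 5 ∣ Nat.card G) : Emb6 G := by
  have := Fact.mk Nat.prime_three
  have h72 : Nat.card G ∣ 72 := by
    have h1 : Nat.card G ∣ 72 * 5 := hG.card_dvd
    exact (((Nat.Prime.coprime_iff_not_dvd Nat.prime_five).2 h5).symm).dvd_of_dvd_mul_right h1
  have P : Sylow 3 G := default
  have hs1 : Nat.card (Sylow 3 G) ≡ 1 [MOD 3] := card_sylow_modEq_one 3 G
  have hs2 : Nat.card (Sylow 3 G) ∣ (P : Subgroup G).index := P.card_dvd_index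
  have hs3 := (P : Subgroup G).card_mul_index
  have hs0 := Nat.card_pos (α := Sylow 3 G)
  by_cases h3 : 3 ∣ Nat.card G
  · by_cases h9 : 9 ∣ Nat.card G
    · have hc9 : ∀ Q : Sylow 3 G, Nat.card Q = 9 := fun Q =>
        sylow_card_of (k := 2) Q h9 hG.not27
      by_cases h1 : Nat.card (Sylow 3 G) = 1
      · exact hG.emb9_normal P (hc9 P) h1 h72
      · exfalso
        have h4 := hG.nine_le hc9 h1
        rw [hc9 P] at hs3
        have h6 : (P : Subgroup G).index ∣ 8 := by
          apply Nat.dvd_of_mul_dvd_mul_left (k := 9) (by norm_num)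
          rw [hs3]; exact h72
        have := Nat.le_of_dvd (by norm_num) (hs2.trans h6)
        omega
    · have hP : Nat.card P = 3 := sylow_card_of (k := 1) P (by simpa using h3) (by simpa using h9)
      have h24 : Nat.card G ∣ 24 := by
        have hmem : Nat.card G ∈ Nat.divisors 72 := Nat.mem_divisors.2 ⟨h72, by norm_num⟩
        have hd : ∀ m ∈ Nat.divisors 72, ¬ 9 ∣ m → m ∣ 24 := by decide +kernel
        exact hd _ hmem h9
      rw [hP] at hs3
      have h6 : (P : Subgroup G).index ∣ 8 := by
        apply Nat.dvd_of_mul_dvd_mul_left (k := 3) (by norm_num)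
        rw [hs3]; exact h24
      have h7 := hs2.trans h6
      have h8 : Nat.card (Sylow 3 G) ≤ 8 := Nat.le_of_dvd (by norm_num) h7
      have h10 : Nat.card (Sylow 3 G) = 1 ∨ Nat.card (Sylow 3 G) = 4 := by
        generalize Nat.card (Sylow 3 G) = n at *
        interval_cases n <;> simp_all [Nat.ModEq] <;> omega
      rcases h10 with h10 | h10
      · exact hG.emb3_normal P hP h10 h24
      · exact hG.emb3_four P hP h10 h24
  · apply hG.emb2
    have h8 : Nat.card G ∣ 2 ^ 3 := by
      have hmem : Nat.card G ∈ Nat.divisors 72 := Nat.mem_divisors.2 ⟨h72, by norm_num⟩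
      have hd : ∀ m ∈ Nat.divisors 72, ¬ 3 ∣ m → m ∣ 2 ^ 3 := by decide +kernel
      exact hd _ hmem h3
    obtain ⟨k, -, hk⟩ := (Nat.dvd_prime_pow Nat.prime_two).1 h8
    exact IsPGroup.of_card hk
end


section

lemma coset_enum {α : Type*} (X B : α → α) (hX : ∀ t, X (X t) = t) (hB : ∀ t, B (B (B t)) = t)
    (hU : ∀ t, X (B (X (B (X (B (X (B (X (B t))))))))) = t) (c0 : α) (h0 : X (B c0) = c0) :
    ∃ f : Fin 12 → α, f 0 = c0 ∧ (∀ i, ∃ j, X (f i) = f j) ∧ (∀ i, ∃ j, B (f i) = f j) := by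
  obtain ⟨c1, h1⟩ : ∃ c, c = X c0 := ⟨_, rfl⟩
  obtain ⟨c2, h2⟩ : ∃ c, c = B c1 := ⟨_, rfl⟩
  obtain ⟨c3, h3⟩ : ∃ c, c = X c2 := ⟨_, rfl⟩
  obtain ⟨c4, h4⟩ : ∃ c, c = B c3 := ⟨_, rfl⟩
  obtain ⟨c5, h5⟩ : ∃ c, c = X c4 := ⟨_, rfl⟩
  obtain ⟨c6, h6⟩ : ∃ c, c = B c4 := ⟨_, rfl⟩
  obtain ⟨c7, h7⟩ : ∃ c, c = B c5 := ⟨_, rfl⟩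
  obtain ⟨c8, h8⟩ : ∃ c, c = B c7 := ⟨_, rfl⟩
  obtain ⟨c9, h9⟩ : ∃ c, c = X c8 := ⟨_, rfl⟩
  obtain ⟨c10, h10⟩ : ∃ c, c = B c9 := ⟨_, rfl⟩
  obtain ⟨c11, h11⟩ : ∃ c, c = X c10 := ⟨_, rfl⟩
  have b0 : B c0 = c1 := by rw [h1, ← hX (B c0), h0]
  have b2 : B c2 = c0 := by rw [h2, ← b0, hB]
  have b6 : B c6 = c3 := by rw [h6, h4, hB]
  have b8 : B c8 = c5 := by rw [h8, h7, hB]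
  have x3 : X c3 = c2 := by rw [h3, hX]
  have x5 : X c5 = c4 := by rw [h5, hX]
  have x9 : X c9 = c8 := by rw [h9, hX]
  have x11 : X c11 = c10 := by rw [h11, hX]
  have x1 : X c1 = c0 := by rw [h1, hX]
  have x6 : X c6 = c7 := by
    have := hU c1
    have := hU c2
    have := hU c3
    have := hX c7
    have := hX c6
    grind
  have x7 : X c7 = c6 := by rw [← x6, hX]
  have b10 : B c10 = c11 := by
    have := hU c4
    have := hU c5
    have := hU c6
    have := hU c7
    have := hU c8
    have := hU c9
    have := hU c10
    have := hX (B c10)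
    have := hX (B c11)
    have := hB c9
    grind
  have b11 : B c11 = c9 := by rw [← b10, h10, hB]
  refine ⟨![c0, c1, c2, c3, c4, c5, c6, c7, c8, c9, c10, c11], rfl, ?_, ?_⟩
  · intro i
    refine ⟨![1, 0, 3, 2, 5, 4, 7, 6, 9, 8, 11, 10] i, ?_⟩
    fin_cases i
    exacts [h1.symm, x1, h3.symm, x3, h5.symm, x5, x6, x7, h9.symm, x9, h11.symm, x11]
  · intro i
    refine ⟨![1, 2, 0, 4, 6, 7, 3, 8, 5, 10, 11, 9] i, ?_⟩
    fin_cases i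
    exacts [b0, h2.symm, b2, h4.symm, h6.symm, h7.symm, b6, h8.symm, b8, h10.symm, b10, b11]

variable {G : Type*} [Group G] [Fintype G]

lemma card_le_sixty {x y : G} (hx : x * x = 1) (hy : y * (y * y) = 1) (hu : orderOf (x * y) = 5) :
    Nat.card (Subgroup.closure {x, y}) ≤ 60 := by
  classical
  have hu5 : x * y * (x * y) * (x * y) * (x * y) * (x * y) = 1 := by
    have := pow_orderOf_eq_one (x * y)
    rw [hu] at this
    simpa [pow_succ] using this
  let C := Subgroup.zpowers (x * y)
  obtain ⟨f, f0, fx, fy⟩ := coset_enum (α := G ⧸ C) (fun t => x • t) (fun t => y • t)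
    (fun t => by simp only [← mul_smul]; rw [hx, one_smul])
    (fun t => by simp only [← mul_smul]; rw [hy, one_smul])
    (fun t => by simp only [← mul_smul]; simp only [mul_assoc] at hu5 ⊢; rw [hu5, one_smul])
    ((1 : G) : G ⧸ C) (by
      rw [← mul_smul]
      apply QuotientGroup.eq.2
      simp only [smul_eq_mul, mul_one]
      exact C.inv_mem (Subgroup.mem_zpowers _))
  have hinv : x⁻¹ = x := inv_eq_of_mul_eq_one_left hx
  have hyinv : y⁻¹ = y * y := inv_eq_of_mul_eq_one_right hy
  have hmem : ∀ g ∈ Subgroup.closure {x, y}, ∃ i, ((g : G) : G ⧸ C) = f i := by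
    intro g hg
    induction hg using Subgroup.closure_induction_left with
    | one => exact ⟨0, f0.symm⟩
    | mul_left a ha b hb ih =>
      obtain ⟨i, hi⟩ := ih
      have : ((a * b : G) : G ⧸ C) = a • ((b : G) : G ⧸ C) := rfl
      rw [this, hi]
      rcases ha with rfl | rfl
      · exact fx i
      · exact fy i
    | inv_mul_cancel a ha b hb ih =>
      obtain ⟨i, hi⟩ := ih
      have : ((a⁻¹ * b : G) : G ⧸ C) = a⁻¹ • ((b : G) : G ⧸ C) := rfl
      rw [this, hi]
      rcases ha with rfl | rfl
      · rw [hinv]; exact fx i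
      · rw [hyinv, mul_smul]
        obtain ⟨j, hj⟩ := fy i
        rw [hj]
        exact fy j
  have hC : Nat.card C = 5 := by rw [Nat.card_zpowers, hu]
  have h1 : (Finset.univ.image f).card ≤ 12 := Finset.card_image_le
  have h2 := Finset.card_le_mul_card_image_of_maps_to
    (s := Finset.univ.filter (fun g => g ∈ Subgroup.closure {x, y})) (t := Finset.univ.image f)
    (f := fun g : G => (g : G ⧸ C)) (by
      intro g hg
      obtain ⟨i, hi⟩ := hmem g (by simpa using hg)
      simp only [hi]
      exact Finset.mem_image_of_mem _ (Finset.mem_univ _)) 5 (by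
      intro b _
      obtain ⟨b, rfl⟩ := QuotientGroup.mk_surjective b
      rw [← hC, Nat.card_eq_fintype_card, Fintype.card_subtype]
      apply Finset.card_le_card_of_injOn (fun g => b⁻¹ * g)
      · intro g hg
        simp only [Finset.coe_filter, Finset.mem_univ, true_and, Set.mem_ofPred_eq, Finset.mem_filter] at hg ⊢
        exact QuotientGroup.eq.1 hg.2.symm
      · intro a _ b' _ h
        exact mul_left_cancel h)
  rw [Nat.card_eq_fintype_card, Fintype.card_subtype]
  omega

def NC (G : Type*) [Group G] : Prop := ∀ (x y : G) (p q : ℕ), p.Prime → q.Prime → p ≠ q →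
  orderOf x = p → orderOf y = q → ¬ Commute x y

lemma class_card (hNC : NC G) {p : ℕ} (hp : p.Prime) {x : G} (hx : orderOf x = p) (k : ℕ)
    (hk : ∀ d, d ∣ Nat.card G → (∀ q, q.Prime → q ≠ p → ¬ q ∣ d) → d ≤ k) (S : Set G)
    (hS : ∀ g, g * x * g⁻¹ ∈ S) : Nat.card G ≤ k * S.ncard := by
  classical
  have hC : Nat.card (Subgroup.centralizer {x} : Subgroup G) ≤ k := by
    apply hk _ (Subgroup.card_subgroup_dvd_card _)
    intro q hq hqp hd
    have := Fact.mk hq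
    obtain ⟨c, hc⟩ := exists_prime_orderOf_dvd_card' q hd
    refine hNC x c p q hp hq hqp.symm hx (by rw [Subgroup.orderOf_coe]; exact hc) ?_
    exact (Subgroup.mem_centralizer_singleton_iff.1 c.2).symm
  have h2 := Finset.card_le_mul_card_image_of_maps_to
    (s := (Finset.univ : Finset G)) (t := S.toFinset)
    (f := fun g : G => g * x * g⁻¹) (by
      intro g hg
      simpa using hS g) k (by
      intro b _
      refine le_trans ?_ hC
      by_cases hb : ∃ b0, b0 * x * b0⁻¹ = b
      · obtain ⟨b, rfl⟩ := hb
        rw [Nat.card_eq_fintype_card, Fintype.card_subtype]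
        apply Finset.card_le_card_of_injOn (fun g => b⁻¹ * g)
        · intro g hg
          simp only [Finset.coe_filter, Finset.mem_univ, true_and, Set.mem_ofPred_eq,
            Finset.mem_filter] at hg ⊢
          rw [Subgroup.mem_centralizer_singleton_iff]
          have : g * x = b * x * b⁻¹ * g := by rw [← hg]; group
          rw [mul_assoc, this]; group
        · intro a _ b' _ h
          exact mul_left_cancel h
      · rw [Finset.filter_eq_empty_iff.2]
        · simp
        · intro g _ h
          exact hb ⟨g, h⟩)
  rw [Set.ncard_eq_toFinset_card']
  simpa using h2

end


section
variable {G : Type*} [Group G] [Fintype G] (hG : Good G)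
include hG

lemma Good.sum_count : ∃ m, 3 ≤ m ∧ Nat.card G * m + {g : G | orderOf g = 3}.ncard +
    2 * {g : G | orderOf g = 5}.ncard + 3 * {g : G | orderOf g = 6}.ncard =
      4 * Nat.card G + 8 := by
  classical
  obtain ⟨m, hm, hs⟩ := hG.sum ⊤
  refine ⟨m, hm, ?_⟩
  have h1 : ∑ᶠ h : (⊤ : Subgroup G), cv (orderOf (h : G)) = ∑ g : G, cv (orderOf g) := by
    rw [finsum_eq_sum_of_fintype]
    exact Fintype.sum_equiv Subgroup.topEquiv.toEquiv _ _ (fun x => rfl)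
  rw [h1, Subgroup.card_top] at hs
  have hc : ∀ k, {g : G | orderOf g = k}.ncard = ∑ g : G, if orderOf g = k then 1 else 0 := by
    intro k
    rw [Set.ncard_eq_toFinset_card', Finset.sum_boole]
    simp
  have h8 : (∑ g : G, if orderOf g = 1 then 1 else 0) = 1 := by
    simp [orderOf_eq_one_iff]
  rw [hc, hc, hc, mul_comm, ← hs]
  have h9 : 4 * Nat.card G = ∑ g : G, 4 := by simp [mul_comm]
  have h10 : (8 : ℕ) = 8 * ∑ g : G, if orderOf g = 1 then 1 else 0 := by rw [h8]
  rw [h9, h10]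
  simp only [Finset.mul_sum, ← Finset.sum_add_distrib]
  apply Finset.sum_congr rfl
  intro g _
  have ho := hG.ord g
  have hp := orderOf_pos g
  generalize orderOf g = n at *
  interval_cases n <;> simp [cv]

lemma Good.nc (h6 : {g : G | orderOf g = 6}.ncard = 0) : NC G := by
  intro x y p q hp hq hpq hx hy hxy
  have h1 := orderOf_mul_coprime' hx hy hxy ((Nat.coprime_primes hp hq).2 hpq)
  have h2 := hG.ord (x * y)
  have h3 : orderOf (x * y) ≠ 6 := by
    intro h
    rw [Set.ncard_eq_zero] at h6
    exact (Set.eq_empty_iff_forall_notMem.1 h6) _ h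
  rw [h1] at h2 h3
  have := hp.two_le
  have := hq.two_le
  have : p ≤ 3 := by nlinarith
  have : q ≤ 3 := by nlinarith
  interval_cases p <;> interval_cases q <;> simp_all

end
section
variable {G : Type*} [Group G] [Fintype G]

lemma NC.sub {G : Type*} [Group G] (h : NC G) (A : Subgroup G) : NC A := by
  intro x y p q hp hq hpq hx hy hxy
  exact h x y p q hp hq hpq (by rw [Subgroup.orderOf_coe, hx]) (by rw [Subgroup.orderOf_coe, hy])
    (congrArg Subtype.val hxy)

lemma NC.le_bound {c p k : ℕ} (hc : c ≠ 0)
    (hd : ∀ d ∈ Nat.divisors c, (2 ≠ p → ¬ 2 ∣ d) → (3 ≠ p → ¬ 3 ∣ d) → (5 ≠ p → ¬ 5 ∣ d) → d ≤ k) :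
    ∀ d, d ∣ c → (∀ q, q.Prime → q ≠ p → ¬ q ∣ d) → d ≤ k := fun d h1 h2 =>
  hd d (Nat.mem_divisors.2 ⟨h1, hc⟩) (h2 2 Nat.prime_two) (h2 3 Nat.prime_three)
    (h2 5 Nat.prime_five)

lemma not_thirty {A : Type*} [Group A] [Fintype A] (h : NC A) (hA : Nat.card A = 30) : False := by
  classical
  have hh : ∀ p k, p.Prime → p ∣ 30 → (∀ d ∈ Nat.divisors 30, (2 ≠ p → ¬ 2 ∣ d) →
      (3 ≠ p → ¬ 3 ∣ d) → (5 ≠ p → ¬ 5 ∣ d) → d ≤ k) →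
      30 ≤ k * {g : A | orderOf g = p}.ncard := by
    intro p k hp hd hk
    have := Fact.mk hp
    obtain ⟨x, hx⟩ := exists_prime_orderOf_dvd_card' (G := A) p (by rw [hA]; exact hd)
    rw [← hA]
    apply class_card h hp hx
    · rw [hA]; exact NC.le_bound (by norm_num) hk
    · intro g
      have : orderOf (g * x * g⁻¹) = orderOf x := (SemiconjBy.conj_mk g x).orderOf_eq.symm
      exact this.trans hx
  have h2 := hh 2 2 (by norm_num) (by norm_num) (by decide +kernel)
  have h3 := hh 3 3 (by norm_num) (by norm_num) (by decide +kernel)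
  have h5 := hh 5 5 (by norm_num) (by norm_num) (by decide +kernel)
  have d1 : Disjoint {g : A | orderOf g = 2} {g : A | orderOf g = 3} := by
    rw [Set.disjoint_left]; intro g (h : _ = _) (h' : _ = _); omega
  have d2 : Disjoint ({g : A | orderOf g = 2} ∪ {g : A | orderOf g = 3}) {g : A | orderOf g = 5} := by
    rw [Set.disjoint_left]; rintro g ((h : _ = _) | (h : _ = _)) (h' : _ = _) <;> omega
  have h6 := Set.ncard_le_card (({g : A | orderOf g = 2} ∪ {g : A | orderOf g = 3}) ∪ {g : A | orderOf g = 5})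
  rw [Set.ncard_union_eq d2, Set.ncard_union_eq d1, hA] at h6
  omega

lemma emb_of_xy (hNC : NC G) (hc : Nat.card G = 360) {x y : G} (hx : orderOf x = 2)
    (hy : orderOf y = 3) (hu : orderOf (x * y) = 5) : Emb6 G := by
  classical
  have hcard := card_le_sixty (x := x) (y := y)
    (by have := pow_orderOf_eq_one x; rw [hx] at this; simpa [pow_succ] using this)
    (by have := pow_orderOf_eq_one y; rw [hy] at this; simpa [pow_succ, mul_assoc] using this) hu
  let A := Subgroup.closure {x, y}
  have hxA : x ∈ A := Subgroup.subset_closure (by simp)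
  have hyA : y ∈ A := Subgroup.subset_closure (by simp)
  have d2 : 2 ∣ Nat.card A := hx ▸ Subgroup.orderOf_dvd_natCard _ hxA
  have d3 : 3 ∣ Nat.card A := hy ▸ Subgroup.orderOf_dvd_natCard _ hyA
  have d5 : 5 ∣ Nat.card A := hu ▸ Subgroup.orderOf_dvd_natCard _ (A.mul_mem hxA hyA)
  have hpos : 0 < Nat.card A := Nat.card_pos
  have h30 : Nat.card A ≠ 30 := fun h => not_thirty (hNC.sub A) h
  have h60 : Nat.card A = 60 := by
    have : Nat.card A ≤ 60 := hcard
    omega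
  have hidx := A.card_mul_index
  rw [h60, hc] at hidx
  apply emb_subgroup A (by omega)
  intro N hN hNA
  have hNd : Nat.card N ∣ 60 := h60 ▸ Subgroup.card_dvd_of_le hNA
  have key : ∀ p k, p.Prime → p ∣ Nat.card N → (∀ d ∈ Nat.divisors 360, (2 ≠ p → ¬ 2 ∣ d) →
      (3 ≠ p → ¬ 3 ∣ d) → (5 ≠ p → ¬ 5 ∣ d) → d ≤ k) → 360 ≤ k * Nat.card N := by
    intro p k hp hd hk
    have := Fact.mk hp
    obtain ⟨n, hn⟩ := exists_prime_orderOf_dvd_card' (G := N) p hd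
    rw [← hc]
    refine class_card hNC hp (x := (n : G)) (by rw [Subgroup.orderOf_coe]; exact hn) k ?_ (N : Set G)
      (fun g => hN.conj_mem _ n.2 g)
    rw [hc]; exact NC.le_bound (by norm_num) hk
  have k2 := fun h => key 2 8 (by norm_num) h (by decide +kernel)
  have k3 := fun h => key 3 9 (by norm_num) h (by decide +kernel)
  have k5 := fun h => key 5 5 (by norm_num) h (by decide +kernel)
  rw [← Subgroup.card_eq_one]
  have hmem : Nat.card N ∈ Nat.divisors 60 := Nat.mem_divisors.2 ⟨hNd, by norm_num⟩
  have hfin : ∀ d ∈ Nat.divisors 60, (2 ∣ d → 360 ≤ 8 * d) → (3 ∣ d → 360 ≤ 9 * d) →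
    (5 ∣ d → 360 ≤ 5 * d) → d = 1 := by decide +kernel
  exact hfin _ hmem k2 k3 k5

end
section
variable {G : Type*} [Group G] [Fintype G] (hG : Good G)
include hG

lemma Good.not_normal9 (Q : Sylow 3 G) (hQ : Nat.card Q = 9) (h5 : 5 ∣ Nat.card G) :
    Nat.card (Sylow 3 G) ≠ 1 := by
  classical
  intro h1
  have := Fact.mk Nat.prime_three
  have := Fact.mk Nat.prime_five
  have hn : (Q : Subgroup G).Normal := normal_of_card_sylow Q h1
  obtain ⟨u, hu⟩ := exists_prime_orderOf_dvd_card' (G := G) 5 h5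
  let P := Subgroup.zpowers u
  let _ : MulAction P (Q : Subgroup G) := {
    smul p q := ⟨p * q * (p : G)⁻¹, hn.conj_mem _ q.2 _⟩
    one_smul q := Subtype.ext (by change (1 : G) * q * (1 : G)⁻¹ = q; simp)
    mul_smul p p' q := Subtype.ext (by
      change ((p : G) * p') * q * ((p : G) * p')⁻¹ = p * (p' * q * (p' : G)⁻¹) * (p : G)⁻¹
      group) }
  have hP : IsPGroup 5 P := IsPGroup.of_card (n := 1) (by rw [Nat.card_zpowers, hu]; norm_num)
  have hm := hP.card_modEq_card_fixedPoints (Q : Subgroup G)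
  rw [hQ] at hm
  have hle : Nat.card (MulAction.fixedPoints P (Q : Subgroup G)) ≤ 1 := by
    rw [Finite.card_le_one_iff_subsingleton]
    have h : ∀ a : MulAction.fixedPoints P (Q : Subgroup G), ((a : (Q : Subgroup G)) : G) = 1 := by
      intro a
      have h2 := a.2 ⟨u, Subgroup.mem_zpowers u⟩
      have h3 : u * (a : (Q : Subgroup G)) * u⁻¹ = ((a : (Q : Subgroup G)) : G) :=
        congrArg Subtype.val h2
      have h4 := hG.comm5 hu (y := ((a : (Q : Subgroup G)) : G)) (mul_inv_eq_iff_eq_mul.1 h3)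
      by_contra hne
      have := hG.q9_ord hQ (a : (Q : Subgroup G)).2 hne
      omega
    exact ⟨fun a b => Subtype.ext (Subtype.ext ((h a).trans (h b).symm))⟩
  have h3 := hm
  unfold Nat.ModEq at h3
  interval_cases h : Nat.card (MulAction.fixedPoints P (Q : Subgroup G)) <;> omega
end


section
variable {G : Type*} [Group G] [Fintype G] (hG : Good G)
include hG

lemma Good.inverts (hNC : NC G) (Q : Sylow 3 G) (hQ : Nat.card Q = 9) {z : G} (hz : orderOf z = 2)
    (hzN : z ∈ Subgroup.normalizer (Q : Set G)) : ∀ q ∈ Q, z * q * z⁻¹ = q⁻¹ := by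
  intro q hq
  have hzz : z * z = 1 := by
    have := pow_orderOf_eq_one z; rw [hz] at this; simpa [pow_succ] using this
  have hzi : z⁻¹ = z := inv_eq_of_mul_eq_one_left hzz
  have hq' : z * q * z⁻¹ ∈ (Q : Subgroup G) := (Subgroup.mem_normalizer_iff.1 hzN q).1 hq
  have hcm : Commute q (z * q * z⁻¹) := q9_comm hQ hq hq'
  have h1 : q * (z * q * z⁻¹) = 1 := by
    by_contra hne
    refine hNC z _ 2 3 Nat.prime_two Nat.prime_three (by norm_num) hz
      (hG.q9_ord hQ (Q.mul_mem hq hq') hne) ?_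
    change z * (q * (z * q * z⁻¹)) = (q * (z * q * z⁻¹)) * z
    rw [hcm.eq]
    have e1 : z * (z * q * z⁻¹ * q) = z * z * q * z⁻¹ * q := by group
    rw [e1, hzz, ← hcm.eq, hzi]
    have e2 : q * (z * q * z) * z = q * z * q * (z * z) := by group
    rw [e2, hzz]; group
  exact (inv_eq_of_mul_eq_one_right h1).symm

lemma Good.exists_xy (hNC : NC G) (hc : Nat.card G = 360) (hc9 : ∀ Q : Sylow 3 G, Nat.card Q = 9)
    (h10 : Nat.card (Sylow 3 G) = 10) :
    ∃ x y : G, orderOf x = 2 ∧ orderOf y = 3 ∧ orderOf (x * y) = 5 := by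
  classical
  have := Fact.mk Nat.prime_three
  have := Fact.mk Nat.prime_five
  have := Fact.mk Nat.prime_two
  obtain ⟨Q⟩ : Nonempty (Sylow 3 G) := inferInstance
  have hQ := hc9 Q
  let N := Subgroup.normalizer (Q : Set G)
  have hN : Nat.card N = 36 := by
    have h1 := N.card_mul_index
    have h2 : N.index = 10 := by rw [← h10]; exact Q.card_eq_index_normalizer.symm
    rw [h2, hc] at h1
    omega
  obtain ⟨u, hu⟩ := exists_prime_orderOf_dvd_card' (G := G) 5 (by rw [hc]; norm_num)
  have huN : u ∉ N := by
    intro h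
    have := Subgroup.orderOf_dvd_natCard _ h
    rw [hu, hN] at this
    omega
  have hsq : ∀ z : G, orderOf z = 2 → z * z = 1 := by
    intro z hz
    have := pow_orderOf_eq_one z; rw [hz] at this; simpa [pow_succ] using this
  suffices h : ∃ x, orderOf x = 2 ∧ x⁻¹ * u ∈ Q by
    obtain ⟨x, hx, hxu⟩ := h
    refine ⟨x, x⁻¹ * u, hx, hG.q9_ord hQ hxu ?_, by rw [mul_inv_cancel_left]; exact hu⟩
    intro h
    rw [inv_mul_eq_one.1 h] at hx
    omega
  by_contra hcon
  push Not at hcon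
  let I : Finset G := Finset.univ.filter (fun g => orderOf g = 2)
  have hI : 45 ≤ I.card := by
    obtain ⟨z, hz⟩ := exists_prime_orderOf_dvd_card' (G := G) 2 (by rw [hc]; norm_num)
    have h1 := class_card hNC Nat.prime_two hz 8 (by
      rw [hc]; exact NC.le_bound (by norm_num) (by decide +kernel)) (I : Set G) (by
      intro g
      have : orderOf (g * z * g⁻¹) = orderOf z := (SemiconjBy.conj_mk g z).orderOf_eq.symm
      simp [I, this, hz])
    rw [hc, Set.ncard_coe_finset] at h1
    omega
  have hQf : (Finset.univ.filter (fun g => g ∈ (Q : Subgroup G))).card = 9 := by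
    rw [← Fintype.card_subtype, ← Nat.card_eq_fintype_card]; exact hQ
  have hNf : (Finset.univ.filter (fun g => g ∈ N)).card = 36 := by
    rw [← Fintype.card_subtype, ← Nat.card_eq_fintype_card]; exact hN
  have hIN : (I.filter (fun g => g ∈ N)).card ≤ 9 := by
    by_cases hex : ∃ z, z ∈ I.filter (fun g => g ∈ N)
    · obtain ⟨z, hz⟩ := hex
      simp only [I, Finset.mem_filter, Finset.mem_univ, true_and] at hz
      rw [← hQf]
      apply Finset.card_le_card_of_injOn (fun g => z * g)
      · intro t ht
        simp only [I, Finset.mem_coe, Finset.mem_filter, Finset.mem_univ, true_and] at ht ⊢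
        apply hG.cent9 Q hQ
        intro q hq
        have e1 := hG.inverts hNC Q hQ hz.1 hz.2
        have e2 := hG.inverts hNC Q hQ ht.1 ht.2
        have e3 : z * t * q * (z * t)⁻¹ = q := by
          have : z * t * q * (z * t)⁻¹ = z * (t * q * t⁻¹) * z⁻¹ := by group
          rw [this, e2 q hq, e1 _ (Q.inv_mem hq), inv_inv]
        exact (mul_inv_eq_iff_eq_mul.1 e3).symm
      · intro a _ b _ h
        exact mul_left_cancel h
    · rw [Finset.eq_empty_of_forall_notMem (fun z hz => hex ⟨z, hz⟩)]
      simp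
  have hIs := Finset.card_filter_add_card_filter_not (s := I) (fun g => g ∈ N)
  let S := I.filter (fun g => g ∉ N)
  have hS : 36 ≤ S.card := by
    have : S.card = (I.filter (fun g => ¬ g ∈ N)).card := rfl
    omega
  let QF := Finset.univ.filter (fun g => g ∈ (Q : Subgroup G))
  have hQN : ∀ q ∈ (Q : Subgroup G), q ∈ N := fun q hq => Subgroup.le_normalizer hq
  have hinj : Set.InjOn (fun a : G × G => a.1 * a.2) (S ×ˢ QF : Finset (G × G)) := by
    rintro ⟨t, q⟩ h1 ⟨t', q'⟩ h2 h
    simp only [S, I, QF, Finset.coe_product, Set.mem_prod, Finset.mem_coe, Finset.mem_filter,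
      Finset.mem_univ, true_and] at h1 h2 h
    obtain ⟨⟨ht, htN⟩, hq⟩ := h1
    obtain ⟨⟨ht', -⟩, hq'⟩ := h2
    have hr : t' = t * (q * q'⁻¹) := by rw [← mul_assoc, h]; group
    have hrQ : q * q'⁻¹ ∈ (Q : Subgroup G) := Q.mul_mem hq (Q.inv_mem hq')
    generalize hrr : q * q'⁻¹ = r at hr hrQ
    by_cases hr1 : r = 1
    · rw [hr1, mul_one] at hr
      rw [hr1] at hrr
      rw [hr, mul_inv_eq_one.1 hrr]
    · exfalso
      apply htN
      have h5 := hsq t' ht'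
      rw [hr] at h5
      have hti : t⁻¹ = t := inv_eq_of_mul_eq_one_left (hsq t ht)
      have h6 : t * r * t⁻¹ = r⁻¹ := by
        rw [hti]
        apply eq_inv_of_mul_eq_one_left
        rw [← h5]; group
      have h7 : t • Q = Q := by
        symm
        apply hG.ti9 hc9 _ _ r⁻¹ (Q.inv_mem hrQ) _ (by simpa using hr1)
        rw [← h6]
        exact Subgroup.smul_mem_pointwise_smul r (MulAut.conj t) (Q : Subgroup G) hrQ
      exact Sylow.smul_eq_iff_mem_normalizer.1 h7
  have hcardimg : ((S ×ˢ QF).image (fun a : G × G => a.1 * a.2)).card = S.card * 9 := by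
    rw [Finset.card_image_of_injOn hinj, Finset.card_product, hQf]
  have hd1 : Disjoint ((S ×ˢ QF).image (fun a : G × G => a.1 * a.2))
      (Finset.univ.filter (fun g => g ∈ N)) := by
    rw [Finset.disjoint_left]
    intro g hg hgN
    simp only [S, I, QF, Finset.mem_image, Finset.mem_product, Finset.mem_filter, Finset.mem_univ,
      true_and, Prod.exists] at hg hgN
    obtain ⟨t, q, ⟨⟨-, h1⟩, h2⟩, rfl⟩ := hg
    exact h1 ((Subgroup.mul_mem_cancel_right N (hQN q h2)).1 hgN)
  have hle := Finset.card_le_univ (((S ×ˢ QF).image (fun a : G × G => a.1 * a.2)) ∪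
      (Finset.univ.filter (fun g => g ∈ N)) ∪ {u})
  rw [Finset.card_union_of_disjoint, Finset.card_union_of_disjoint hd1, hcardimg, hNf,
    ← Nat.card_eq_fintype_card, hc] at hle
  · simp at hle
    omega
  · rw [Finset.disjoint_singleton_right, Finset.mem_union, not_or]
    constructor
    · intro hg
      simp only [S, I, QF, Finset.mem_image, Finset.mem_product, Finset.mem_filter, Finset.mem_univ,
        true_and, Prod.exists] at hg
      obtain ⟨t, q, ⟨⟨h0, h1⟩, h2⟩, h3⟩ := hg
      apply hcon t h0
      rw [← h3, inv_mul_cancel_left]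
      exact h2
    · simpa using huN

lemma Good.emb_5 (h5 : 5 ∣ Nat.card G) : Emb6 G := by
  classical
  have := Fact.mk Nat.prime_three
  have := Fact.mk Nat.prime_five
  have h25 := hG.not25
  have h5c : ∀ P : Sylow 5 G, Nat.card P = 5 := fun P =>
    sylow_card_of (k := 1) P (by simpa using h5) h25
  obtain ⟨P⟩ : Nonempty (Sylow 5 G) := inferInstance
  have hP := h5c P
  have hd := hG.card_dvd
  have hi := (P : Subgroup G).card_mul_index
  have hs1 := card_sylow_modEq_one 5 G
  have hs2 := P.card_dvd_index
  rw [hP] at hi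
  by_cases h1 : Nat.card (Sylow 5 G) = 1
  · exact hG.emb5_normal P hP h1
  by_cases h6 : Nat.card (Sylow 5 G) ≤ 6
  · exact hG.emb5_of_two P hP h1 h6
  have hi72 : (P : Subgroup G).index ∣ 72 := by
    apply Nat.dvd_of_mul_dvd_mul_left (k := 5) (by norm_num)
    rw [hi]; exact hd
  have h36 : Nat.card (Sylow 5 G) = 36 := by
    have hmem : Nat.card (Sylow 5 G) ∈ Nat.divisors 72 :=
      Nat.mem_divisors.2 ⟨hs2.trans hi72, by norm_num⟩
    have : ∀ d ∈ Nat.divisors 72, ¬ d ≤ 6 → d % 5 = 1 % 5 → d = 36 := by decide +kernel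
    exact this _ hmem h6 hs1
  have hc : Nat.card G = 180 ∨ Nat.card G = 360 := by
    obtain ⟨k, hk⟩ := hs2
    rw [h36] at hk
    rw [← hi, hk] at hd ⊢
    have : k ∣ 2 := by
      apply Nat.dvd_of_mul_dvd_mul_left (k := 180) (by norm_num)
      convert hd using 1
      ring
    rcases (Nat.dvd_prime Nat.prime_two).1 this with rfl | rfl <;> norm_num
  have he5 : ∀ P : Sylow 5 G, ∀ x ∈ P, x ≠ 1 → orderOf x = 5 := by
    intro P x hx hne
    have h1 : orderOf x ∣ Nat.card P := Subgroup.orderOf_dvd_natCard _ hx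
    rw [h5c P] at h1
    exact ((Nat.dvd_prime Nat.prime_five).1 h1).resolve_left (mt orderOf_eq_one_iff.1 hne)
  have hn5 : {g : G | orderOf g = 5}.ncard = 144 := by
    have h := count_ti h5c he5 (by
      intro P R x hx hx' hne
      have hle : ∀ P : Sylow 5 G, x ∈ P → Subgroup.zpowers x = P := by
        intro P hx
        apply Subgroup.eq_of_le_of_card_ge (Subgroup.zpowers_le.2 hx)
        rw [Nat.card_zpowers, he5 P x hx hne]
        exact (h5c P).le
      exact Sylow.ext ((hle P hx).symm.trans (hle R hx')))
    rw [h36] at h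
    exact h
  obtain ⟨m, hm, hsum⟩ := hG.sum_count
  rw [hn5] at hsum
  have hc : Nat.card G = 360 := by
    rcases hc with hc | hc
    · rw [hc] at hsum; omega
    · exact hc
  have hc9 : ∀ Q : Sylow 3 G, Nat.card Q = 9 := fun Q =>
    sylow_card_of (k := 2) Q (by rw [hc]; norm_num) hG.not27
  obtain ⟨Q⟩ : Nonempty (Sylow 3 G) := inferInstance
  have hne := hG.not_normal9 Q (hc9 Q) h5
  have hnine := hG.nine_le hc9 hne
  have hn3 : {g : G | orderOf g = 3}.ncard = Nat.card (Sylow 3 G) * 8 := by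
    exact count_ti hc9 (fun Q x hx hne => hG.q9_ord (hc9 Q) hx hne) (fun P Q x => hG.ti9 hc9 P Q x)
  have hmod := card_sylow_modEq_one 3 G
  unfold Nat.ModEq at hmod
  rw [hn3, hc] at hsum
  have h10 : Nat.card (Sylow 3 G) = 10 := by omega
  have h60 : {g : G | orderOf g = 6}.ncard = 0 := by omega
  have hNC := hG.nc h60
  obtain ⟨x, y, hx, hy, hxy⟩ := hG.exists_xy hNC hc hc9 h10
  exact emb_of_xy hNC hc hx hy hxy
end

/-- A finite group satisfying Condition (4) embeds into `S₆` and has order not divisible by 16. -/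
theorem embeds_in_S6_of_condition4 (G : Type*) [Group G] [Fintype G] (h : Condition4 G) :
    (∃ f : G →* Equiv.Perm (Fin 6), Function.Injective f) ∧
      ¬ (2 ^ 4 ∣ Fintype.card G) := by
  refine ⟨?_, ?_⟩
  · by_cases h5 : 5 ∣ Nat.card G
    · exact h.good.emb_5 h5
    · exact h.good.emb_no5 h5
  · rw [← Nat.card_eq_fintype_card]
    exact h.good.not16
end

section
/- For a finite group G, the following are equivalent: (i) G can be embedded into the symmetric group S₆ and the order of G is not divisible by 2⁴ = 16; (ii) G can be embedded into one of the following five groups: the alternating group A₆, the symmetric group S₅, the group N₇₂ = C₃²⋊D₈ of order 72 (isomorphic to the wreath product S₃≀C₂, and realizable as the normalizer of a 3-Sylow subgroup of S₆), C₂×A₄, or C₂×C₄. -/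
def zmodPowHom {M : Type*} [Monoid M] (n : ℕ) [NeZero n] (σ : M) (h : σ ^ n = 1) :
    Multiplicative (ZMod n) →* M where
  toFun x := σ ^ (Multiplicative.toAdd x).val
  map_one' := by
    show σ ^ (0 : ZMod n).val = 1
    simp [ZMod.val_zero]
  map_mul' x y := by
    have key : ∀ k : ℕ, σ ^ (k % n) = σ ^ k := fun k => by
      conv_rhs => rw [← Nat.mod_add_div k n]
      rw [pow_add, pow_mul, h, one_pow, mul_one]
    show σ ^ ((Multiplicative.toAdd x + Multiplicative.toAdd y)).val = _
    rw [ZMod.val_add, key, pow_add]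

/-- The swap automorphism of `S₃ × S₃`. -/
def swapS3 : MulAut (Equiv.Perm (Fin 3) × Equiv.Perm (Fin 3)) :=
  MulEquiv.prodComm

lemma swap_sq : swapS3 ^ 2 = 1 := by
  apply MulEquiv.ext
  intro x
  show swapS3 (swapS3 x) = x
  simp [swapS3]

/-- `N₇₂ = (S₃ × S₃) ⋊ C₂`, the wreath product `S₃ ≀ C₂`; it is isomorphic to `C₃²⋊D₈` and to
the normalizer of a 3-Sylow subgroup of `S₆`. -/
def GroupN72 : Type :=
  SemidirectProduct (Equiv.Perm (Fin 3) × Equiv.Perm (Fin 3)) (Multiplicative (ZMod 2))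
    (zmodPowHom 2 swapS3 swap_sq)

instance : Group GroupN72 := by unfold GroupN72; infer_instance


open Equiv Equiv.Perm

/-- `G` embeds into `H`. -/
def Emb (G H : Type*) [Group G] [Group H] : Prop := ∃ f : G →* H, Function.Injective f

theorem Emb.trans {G H K : Type*} [Group G] [Group H] [Group K] (h : Emb G H) (h' : Emb H K) :
    Emb G K := by
  obtain ⟨f, hf⟩ := h
  obtain ⟨g, hg⟩ := h'
  exact ⟨g.comp f, hg.comp hf⟩

theorem Emb.prod {G H K L : Type*} [Group G] [Group H] [Group K] [Group L]
    (h : Emb G H) (h' : Emb K L) : Emb (G × K) (H × L) := by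
  obtain ⟨f, hf⟩ := h
  obtain ⟨g, hg⟩ := h'
  exact ⟨f.prodMap g, hf.prodMap hg⟩

theorem Emb.ofEquiv {G H : Type*} [Group G] [Group H] (e : G ≃* H) : Emb G H :=
  ⟨e.toMonoidHom, e.injective⟩

theorem Emb.card_dvd {G H : Type*} [Group G] [Group H] (h : Emb G H) :
    Nat.card G ∣ Nat.card H := by
  obtain ⟨f, hf⟩ := h
  exact Subgroup.card_dvd_of_injective f hf

theorem emb_perm_of_equiv {α β : Type*} (e : α ≃ β) : Emb (Perm α) (Perm β) :=
  Emb.ofEquiv e.permCongrHom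

theorem emb_perm_sum {α β γ : Type*} (e : α ⊕ β ≃ γ) : Emb (Perm α × Perm β) (Perm γ) :=
  Emb.trans ⟨sumCongrHom α β, sumCongrHom_injective⟩ (emb_perm_of_equiv e)

theorem emb_four_five : Emb (Perm (Fin 4)) (Perm (Fin 5)) := by
  refine Emb.trans ⟨MonoidHom.inl _ (Perm (Fin 1)), ?_⟩ (emb_perm_sum finSumFinEquiv)
  intro a b h
  exact (Prod.ext_iff.1 h).1

theorem emb_five_six : Emb (Perm (Fin 5)) (Perm (Fin 6)) := by
  refine Emb.trans ⟨MonoidHom.inl _ (Perm (Fin 1)), ?_⟩ (emb_perm_sum finSumFinEquiv)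
  intro a b h
  exact (Prod.ext_iff.1 h).1

theorem emb_C2 : Emb (Multiplicative (ZMod 2)) (Perm (Fin 2)) := by
  refine ⟨zmodPowHom 2 (finRotate 2) (by decide), ?_⟩
  rw [injective_iff_map_eq_one]
  show ∀ a : ZMod 2, finRotate 2 ^ a.val = 1 → a = 0
  decide

theorem emb_C4 : Emb (Multiplicative (ZMod 4)) (Perm (Fin 4)) := by
  refine ⟨zmodPowHom 4 (finRotate 4) (by decide), ?_⟩
  rw [injective_iff_map_eq_one]
  show ∀ a : ZMod 4, finRotate 4 ^ a.val = 1 → a = 0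
  decide

/-- `GroupN72` as a semidirect product. -/
def n72Equiv : GroupN72 ≃* SemidirectProduct (Equiv.Perm (Fin 3) × Equiv.Perm (Fin 3))
    (Multiplicative (ZMod 2)) (zmodPowHom 2 swapS3 swap_sq) where
  toFun x := x
  invFun x := x
  left_inv _ := rfl
  right_inv _ := rfl
  map_mul' _ _ := rfl

theorem card_n72 : Nat.card GroupN72 = 72 := by
  rw [Nat.card_congr n72Equiv.toEquiv, SemidirectProduct.card, Nat.card_prod]
  simp [Nat.card_eq_fintype_card, Fintype.card_perm]
  decide

theorem sumComm_sq : (Equiv.sumComm (Fin 3) (Fin 3) : Perm (Fin 3 ⊕ Fin 3)) ^ 2 = 1 := by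
  decide

/-- The imprimitive action of the wreath product on six points. -/
def n72Hom : SemidirectProduct (Equiv.Perm (Fin 3) × Equiv.Perm (Fin 3))
    (Multiplicative (ZMod 2)) (zmodPowHom 2 swapS3 swap_sq) →* Perm (Fin 3 ⊕ Fin 3) :=
  SemidirectProduct.lift (sumCongrHom (Fin 3) (Fin 3))
    (zmodPowHom 2 (Equiv.sumComm (Fin 3) (Fin 3) : Perm (Fin 3 ⊕ Fin 3)) sumComm_sq) (by
      intro g
      have hg : g = 1 ∨ g = Multiplicative.ofAdd 1 := by
        revert g; decide
      rcases hg with rfl | rfl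
      · ext x y
        simp
      · apply MonoidHom.ext
        rintro ⟨x, y⟩
        apply Equiv.ext
        rintro (z | z) <;> rfl)

theorem n72Hom_injective : Function.Injective n72Hom := by
  rw [injective_iff_map_eq_one]
  rintro ⟨⟨x, y⟩, g⟩ h
  have hg : g = 1 ∨ g = Multiplicative.ofAdd 1 := by
    clear h; revert g; decide
  rcases hg with rfl | rfl
  · have h1 : sumCongrHom (Fin 3) (Fin 3) (x, y) = 1 := h
    have h2 := sumCongrHom_injective (h1.trans (map_one _).symm)
    rw [h2]
    rfl
  · have h1 := congrArg (fun σ : Perm (Fin 3 ⊕ Fin 3) => σ (Sum.inl 0)) h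
    have h2 : (Sum.inr (y 0) : Fin 3 ⊕ Fin 3) = Sum.inl 0 := h1
    cases h2

theorem emb_n72 : Emb GroupN72 (Perm (Fin 6)) :=
  (Emb.ofEquiv n72Equiv).trans
    (Emb.trans ⟨n72Hom, n72Hom_injective⟩ (emb_perm_of_equiv finSumFinEquiv))

theorem emb_C2A4 : Emb (Multiplicative (ZMod 2) × alternatingGroup (Fin 4)) (Perm (Fin 6)) :=
  (emb_C2.prod ⟨(alternatingGroup (Fin 4)).subtype, Subtype.val_injective⟩).trans
    (emb_perm_sum finSumFinEquiv)

theorem emb_C2C4 : Emb (Multiplicative (ZMod 2) × Multiplicative (ZMod 4)) (Perm (Fin 6)) :=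
  (emb_C2.prod emb_C4).trans (emb_perm_sum finSumFinEquiv)

theorem card_alt (n : ℕ) (hn : 2 ≤ n) :
    2 * Nat.card (alternatingGroup (Fin n)) = n.factorial := by
  have : Nontrivial (Fin n) := Fin.nontrivial_iff_two_le.2 hn
  rw [Nat.card_eq_fintype_card, two_mul_card_alternatingGroup, Fintype.card_perm, Fintype.card_fin]

theorem backward (G : Type*) [Group G] [Fintype G]
    (h : Emb G (alternatingGroup (Fin 6)) ∨ Emb G (Perm (Fin 5)) ∨ Emb G GroupN72 ∨
      Emb G (Multiplicative (ZMod 2) × alternatingGroup (Fin 4)) ∨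
      Emb G (Multiplicative (ZMod 2) × Multiplicative (ZMod 4))) :
    Emb G (Perm (Fin 6)) ∧ ¬ (2 ^ 4 ∣ Fintype.card G) := by
  have key : ∀ (H : Type) [Group H], Emb H (Perm (Fin 6)) → ¬ (2 ^ 4 ∣ Nat.card H) → Emb G H →
      Emb G (Perm (Fin 6)) ∧ ¬ (2 ^ 4 ∣ Fintype.card G) := by
    intro H _ h1 h2 h3
    refine ⟨h3.trans h1, fun h4 => h2 (h4.trans ?_)⟩
    rw [← Nat.card_eq_fintype_card]
    exact h3.card_dvd
  have h6 := card_alt 6 (by norm_num)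
  have h4 := card_alt 4 (by norm_num)
  rw [show Nat.factorial 6 = 720 from rfl] at h6
  rw [show Nat.factorial 4 = 24 from rfl] at h4
  rcases h with h | h | h | h | h
  · refine key _ ⟨(alternatingGroup (Fin 6)).subtype, Subtype.val_injective⟩ ?_ h
    omega
  · refine key _ emb_five_six ?_ h
    rw [Nat.card_perm, Nat.card_fin]
    decide
  · refine key _ emb_n72 ?_ h
    rw [card_n72]; decide
  · refine key _ emb_C2A4 ?_ h
    rw [Nat.card_prod]
    have : Nat.card (Multiplicative (ZMod 2)) = 2 := by simp
    rw [this, h4]; decide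
  · refine key _ emb_C2C4 ?_ h
    rw [Nat.card_prod]
    have : Nat.card (Multiplicative (ZMod 2)) = 2 := by simp
    have h' : Nat.card (Multiplicative (ZMod 4)) = 4 := by simp
    rw [this, h']; decide

/-- A faithful action on six points with a fixed point gives an embedding into `S₅`. -/
theorem emb_S5_of_fixed {G α : Type*} [Group G] [Finite α] (f : G →* Perm α)
    (hf : Function.Injective f) (hα : Nat.card α = 6) (a : α) (ha : ∀ g, f g a = a) :
    Emb G (Perm (Fin 5)) := by
  classical
  have hp : ∀ g : G, ∀ x, f g x ≠ a ↔ x ≠ a := by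
    intro g x
    rw [not_iff_not]
    constructor
    · intro h
      exact (f g).injective (h.trans (ha g).symm)
    · rintro rfl
      exact ha g
  have hc : Nat.card {x // x ≠ a} = 5 := by
    have : Fintype α := Fintype.ofFinite α
    rw [Nat.card_eq_fintype_card] at *
    simp [Fintype.card_subtype_compl, hα]
  let e : {x // x ≠ a} ≃ Fin 5 := Finite.equivFinOfCardEq hc
  refine Emb.trans ⟨⟨⟨fun g => (f g).subtypePerm (hp g), ?_⟩, ?_⟩, ?_⟩ (emb_perm_of_equiv e)
  · ext x
    simp
  · intro x y
    ext z
    show f (x * y) z = f x (f y z)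
    simp
  · rw [injective_iff_map_eq_one]
    intro g hg
    apply hf
    rw [map_one]
    ext x
    by_cases hx : x = a
    · subst hx
      exact ha g
    · have := congrArg (fun σ : Perm {x // x ≠ a} => (σ ⟨x, hx⟩ : α)) hg
      exact this

/-- A faithful action on six points respecting a `3 + 3` partition gives an embedding into
`N₇₂`. -/
theorem emb_N72_of_block {G : Type*} [Group G] (f : G →* Perm (Fin 6))
    (hf : Function.Injective f) (A : Set (Fin 6)) (hA : Nat.card A = 3)
    (h : ∀ g, (∀ x ∈ A, f g x ∈ A) ∨ (∀ x ∈ A, f g x ∉ A)) :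
    Emb G GroupN72 := by
  classical
  have hc : Nat.card ↥Aᶜ = 3 := by
    rw [Nat.card_eq_fintype_card] at *
    rw [Fintype.card_compl_set, hA]
    simp
  let e1 : A ≃ Fin 3 := Finite.equivFinOfCardEq hA
  let e2 : ↥Aᶜ ≃ Fin 3 := Finite.equivFinOfCardEq hc
  let e : Fin 6 ≃ Fin 3 ⊕ Fin 3 := (Equiv.Set.sumCompl A).symm.trans (Equiv.sumCongr e1 e2)
  have heA : ∀ x, x ∈ A ↔ e x ∈ Set.range (Sum.inl : Fin 3 → Fin 3 ⊕ Fin 3) := by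
    intro x
    by_cases hx : x ∈ A
    · simp [e, hx, Equiv.Set.sumCompl_symm_apply_of_mem hx]
    · simp [e, hx, Equiv.Set.sumCompl_symm_apply_of_notMem hx]
  let F : G →* Perm (Fin 3 ⊕ Fin 3) := e.permCongrHom.toMonoidHom.comp f
  have hF : Function.Injective F := e.permCongrHom.injective.comp hf
  have hFe : ∀ g y, F g y = e (f g (e.symm y)) := fun g y => rfl
  have hr : ∀ g, F g ∈ n72Hom.range := by
    intro g
    rcases h g with h | h
    · have h1 : F g ∈ (sumCongrHom (Fin 3) (Fin 3)).range := by
        apply mem_sumCongrHom_range_of_perm_mapsTo_inl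
        intro y hy
        rw [hFe, ← heA]
        apply h
        rw [heA]
        simpa using hy
      obtain ⟨p, hp⟩ := h1
      exact ⟨⟨p, 1⟩, hp⟩
    · have h1 : (Equiv.sumComm (Fin 3) (Fin 3) : Perm (Fin 3 ⊕ Fin 3)) * F g ∈
          (sumCongrHom (Fin 3) (Fin 3)).range := by
        apply mem_sumCongrHom_range_of_perm_mapsTo_inl
        intro y hy
        have h2 : F g y ∉ Set.range (Sum.inl : Fin 3 → Fin 3 ⊕ Fin 3) := by
          rw [hFe, ← heA]
          apply h
          rw [heA]
          simpa using hy
        rw [Perm.mul_apply]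
        rcases hz : F g y with z | z
        · exact absurd ⟨z, hz.symm⟩ h2
        · exact ⟨z, rfl⟩
      obtain ⟨p, hp⟩ := h1
      have h3 : (Equiv.sumComm (Fin 3) (Fin 3) : Perm (Fin 3 ⊕ Fin 3)) ∈ n72Hom.range := by
        refine ⟨⟨1, Multiplicative.ofAdd 1⟩, ?_⟩
        apply Equiv.ext
        rintro (z | z) <;> rfl
      rw [← Subgroup.mul_mem_cancel_left _ h3, ← hp]
      exact ⟨⟨p, 1⟩, rfl⟩
  let e3 : SemidirectProduct (Equiv.Perm (Fin 3) × Equiv.Perm (Fin 3))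
    (Multiplicative (ZMod 2)) (zmodPowHom 2 swapS3 swap_sq) ≃* n72Hom.range :=
      MonoidHom.ofInjective n72Hom_injective
  refine Emb.trans ⟨F.codRestrict _ hr, ?_⟩ ((Emb.ofEquiv e3.symm).trans (Emb.ofEquiv n72Equiv.symm))
  intro a b hab
  exact hF (congrArg Subtype.val hab)

open scoped Pointwise in
/-- A nontrivial normal `3`-subgroup forces an embedding into `N₇₂`. -/
theorem emb_N72_of_normal {G : Type*} [Group G] [Finite G] (f : G →* Perm (Fin 6))
    (hf : Function.Injective f) (P : Subgroup G) [P.Normal] (hP : IsPGroup 3 P) (hP1 : P ≠ ⊥) :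
    Emb G GroupN72 := by
  classical
  let _ : MulAction G (Fin 6) := MulAction.compHom (Fin 6) f
  have hs : ∀ (g : G) (x : Fin 6), g • x = f g x := fun g x => rfl
  obtain ⟨p, hpP, hp1⟩ := P.bot_or_exists_ne_one.resolve_left hP1
  have hx : ∃ x, f p x ≠ x := by
    by_contra hcon
    push Not at hcon
    apply hp1
    apply hf
    rw [map_one]
    exact Equiv.ext hcon
  obtain ⟨x, hx⟩ := hx
  have : Fact (Nat.Prime 3) := ⟨Nat.prime_three⟩
  have hcard : Nat.card (MulAction.orbit P x) = 3 := by
    obtain ⟨k, hk⟩ := hP.card_orbit x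
    have hle : Nat.card (MulAction.orbit P x) ≤ 6 := by
      have := Nat.card_le_card_of_injective (Subtype.val : MulAction.orbit P x → Fin 6)
        Subtype.val_injective
      simpa using this
    have hne : Nat.card (MulAction.orbit P x) ≠ 1 := by
      intro h1
      rw [Nat.card_eq_one_iff_unique] at h1
      have h2 := h1.1
      have := Subsingleton.elim (⟨f p x, ⟨⟨p, hpP⟩, rfl⟩⟩ : MulAction.orbit P x)
        ⟨x, MulAction.mem_orbit_self x⟩
      exact hx (congrArg Subtype.val this)
    rw [hk] at hle hne ⊢
    rcases k with _ | _ | k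
    · simp at hne
    · rfl
    · exfalso
      have : 0 < 3 ^ k := by positivity
      rw [pow_succ, pow_succ] at hle
      omega
  refine emb_N72_of_block f hf (MulAction.orbit P x) hcard fun g => ?_
  have hb : MulAction.IsBlock G (MulAction.orbit P x) := MulAction.IsBlock.orbit_of_normal x
  rcases MulAction.isBlock_iff_smul_eq_or_disjoint.1 hb g with h | h
  · left
    intro y hy
    have : g • y ∈ g • MulAction.orbit P x := Set.smul_mem_smul_set hy
    rw [h] at this
    exact this
  · right
    intro y hy hy2
    have : g • y ∈ g • MulAction.orbit P x := Set.smul_mem_smul_set hy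
    exact Set.disjoint_left.1 h this hy2

theorem emb_C2_C4 : Emb (Multiplicative (ZMod 2)) (Multiplicative (ZMod 4)) := by
  refine ⟨zmodPowHom 2 (Multiplicative.ofAdd (2 : ZMod 4)) (by decide), ?_⟩
  rw [injective_iff_map_eq_one]
  show ∀ a : ZMod 2, (Multiplicative.ofAdd (2 : ZMod 4)) ^ a.val = 1 → a = 0
  decide

/-- Groups of order dividing four embed into `C₄` or `A₄`. -/
theorem emb_of_card_dvd_four {Q : Type*} [Group Q] [Finite Q] (h : Nat.card Q ∣ 4) :
    Emb Q (Multiplicative (ZMod 4)) ∨ Emb Q (alternatingGroup (Fin 4)) := by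
  have h4 : Nat.card Q = 1 ∨ Nat.card Q = 2 ∨ Nat.card Q = 4 := by
    have := Nat.le_of_dvd (by norm_num) h
    interval_cases Nat.card Q <;> simp_all
  have C2 : Nat.card (Multiplicative (ZMod 2)) = 2 := by simp
  have C4 : Nat.card (Multiplicative (ZMod 4)) = 4 := by simp
  rcases h4 with h1 | h1 | h1
  · left
    refine ⟨1, fun a b _ => ?_⟩
    have := (Nat.card_eq_one_iff_unique.1 h1).1
    exact Subsingleton.elim _ _
  · left
    have : Fact (Nat.Prime 2) := ⟨Nat.prime_two⟩
    exact (Emb.ofEquiv (mulEquivOfPrimeCardEq h1 C2)).trans emb_C2_C4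
  · by_cases hc : IsCyclic Q
    · left
      exact Emb.ofEquiv (mulEquivOfCyclicCardEq (h1.trans C4.symm))
    · right
      have he := (not_isCyclic_iff_exponent_eq_prime Nat.prime_two h1).1 hc
      have : IsKleinFour Q := ⟨h1, he⟩
      have : IsKleinFour (alternatingGroup.kleinFour (Fin 4)) :=
        alternatingGroup.kleinFour_isKleinFour (by simp)
      obtain ⟨e⟩ := IsKleinFour.nonempty_mulEquiv (G₁ := Q)
        (G₂ := alternatingGroup.kleinFour (Fin 4))
      exact (Emb.ofEquiv e).trans ⟨Subgroup.subtype _, Subtype.val_injective⟩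

theorem emb_S2S4_of_two_group {G : Type*} [Group G] [Finite G] (f : G →* Perm (Fin 6))
    (hf : Function.Injective f) (hG : IsPGroup 2 G) : Emb G (Perm (Fin 2) × Perm (Fin 4)) := by
  classical
  let _ : MulAction G (Fin 6) := MulAction.compHom (Fin 6) f
  have : Fact (Nat.Prime 2) := ⟨Nat.prime_two⟩
  obtain ⟨s, hs⟩ := hG.nonempty_fixed_point_of_prime_not_dvd_card
    (Set.powersetCard (Fin 6) 2) (by
      rw [Set.powersetCard.card]; simp; decide)
  have hsA : ∀ g : G, ∀ x ∈ (s : Finset (Fin 6)), f g x ∈ (s : Finset (Fin 6)) := by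
    intro g x hx
    have h1 := congrArg (fun t : Set.powersetCard (Fin 6) 2 => (t : Finset (Fin 6))) (hs g)
    simp only [Set.powersetCard.coe_smul] at h1
    rw [← h1]
    exact Finset.mem_image_of_mem _ hx
  let A : Set (Fin 6) := {x | x ∈ (s : Finset (Fin 6))}
  have hA : Nat.card A = 2 := by
    rw [Nat.card_eq_fintype_card]
    exact (Fintype.card_coe _).trans s.2
  have hc : Nat.card ↥Aᶜ = 4 := by
    rw [Nat.card_eq_fintype_card] at *
    rw [Fintype.card_compl_set, hA]
    simp
  let e1 : A ≃ Fin 2 := Finite.equivFinOfCardEq hA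
  let e2 : ↥Aᶜ ≃ Fin 4 := Finite.equivFinOfCardEq hc
  let e : Fin 6 ≃ Fin 2 ⊕ Fin 4 := (Equiv.Set.sumCompl A).symm.trans (Equiv.sumCongr e1 e2)
  have heA : ∀ x, x ∈ A ↔ e x ∈ Set.range (Sum.inl : Fin 2 → Fin 2 ⊕ Fin 4) := by
    intro x
    by_cases hx : x ∈ A
    · simp [e, hx, Equiv.Set.sumCompl_symm_apply_of_mem hx]
    · simp [e, hx, Equiv.Set.sumCompl_symm_apply_of_notMem hx]
  let F : G →* Perm (Fin 2 ⊕ Fin 4) := e.permCongrHom.toMonoidHom.comp f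
  have hF : Function.Injective F := e.permCongrHom.injective.comp hf
  have hFe : ∀ g y, F g y = e (f g (e.symm y)) := fun g y => rfl
  have hr : ∀ g, F g ∈ (sumCongrHom (Fin 2) (Fin 4)).range := by
    intro g
    apply mem_sumCongrHom_range_of_perm_mapsTo_inl
    intro y hy
    rw [hFe, ← heA]
    apply hsA
    show e.symm y ∈ A
    rw [heA]
    simpa using hy
  refine Emb.trans ⟨F.codRestrict _ hr, ?_⟩
    (Emb.ofEquiv (MonoidHom.ofInjective sumCongrHom_injective).symm)
  intro a b hab
  exact hF (congrArg Subtype.val hab)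

theorem case_two {G : Type*} [Group G] [Finite G] (f : G →* Perm (Fin 6))
    (hf : Function.Injective f) (hG : Nat.card G ∣ 8) :
    Emb G (Perm (Fin 5)) ∨
      Emb G (Multiplicative (ZMod 2) × alternatingGroup (Fin 4)) ∨
      Emb G (Multiplicative (ZMod 2) × Multiplicative (ZMod 4)) := by
  have hP : IsPGroup 2 G := by
    obtain ⟨k, -, hk⟩ := (Nat.dvd_prime_pow Nat.prime_two).1 (show Nat.card G ∣ 2 ^ 3 from hG)
    exact IsPGroup.of_card hk
  obtain ⟨h, hh⟩ := emb_S2S4_of_two_group f hf hP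
  let r : G →* Perm (Fin 2) := (MonoidHom.fst _ _).comp h
  let q : G →* Perm (Fin 4) := (MonoidHom.snd _ _).comp h
  have hrq : ∀ a b, r a = r b → q a = q b → a = b := fun a b h1 h2 => hh (Prod.ext h1 h2)
  by_cases hq : Function.Injective q
  · left
    exact Emb.trans ⟨q, hq⟩ emb_four_five
  · right
    have hk : Nat.card q.ker ∣ 2 := by
      have h1 : Emb q.ker (Perm (Fin 2)) := by
        refine ⟨r.comp q.ker.subtype, ?_⟩
        intro a b hab
        exact Subtype.ext (hrq _ _ hab (a.2.trans b.2.symm))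
      have := h1.card_dvd
      rwa [Nat.card_perm, Nat.card_fin] at this
    have hk1 : Nat.card q.ker ≠ 1 := by
      intro h1
      exact hq ((MonoidHom.ker_eq_bot_iff q).1 (Subgroup.card_eq_one.1 h1))
    have hk2 : Nat.card q.ker = 2 := ((Nat.dvd_prime Nat.prime_two).1 hk).resolve_left hk1
    have hmul : Nat.card q.range * Nat.card q.ker = Nat.card G := by
      rw [← Subgroup.index_ker, Subgroup.index_mul_card]
    have h4 : Nat.card q.range ∣ 4 := by
      rw [← hmul, hk2] at hG
      exact Nat.dvd_of_mul_dvd_mul_right (by norm_num : 0 < 2) hG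
    have : Fact (Nat.Prime 2) := ⟨Nat.prime_two⟩
    have C2 : Nat.card (Multiplicative (ZMod 2)) = 2 := by simp
    have P2 : Nat.card (Perm (Fin 2)) = 2 := by
      rw [Nat.card_perm, Nat.card_fin]; rfl
    have e2 : Emb (Perm (Fin 2)) (Multiplicative (ZMod 2)) :=
      Emb.ofEquiv (mulEquivOfPrimeCardEq P2 C2)
    have hE : Emb G (Perm (Fin 2) × q.range) := by
      refine ⟨r.prod q.rangeRestrict, ?_⟩
      intro a b hab
      exact hrq _ _ (congrArg (fun t : Perm (Fin 2) × q.range => t.1) hab)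
        (congrArg (fun t : Perm (Fin 2) × q.range => (t.2 : Perm (Fin 4))) hab)
    rcases emb_of_card_dvd_four h4 with h5 | h5
    · right
      exact hE.trans (e2.prod h5)
    · left
      exact hE.trans (e2.prod h5)

/-- The standard 5-cycle in `S₆`. -/
def cyc5 : Perm (Fin 6) := swap 0 1 * swap 1 2 * swap 2 3 * swap 3 4

theorem cyc5_odd : ∀ σ : Perm (Fin 6), ∀ i : Fin 5, σ * cyc5 = cyc5 ^ (i : ℕ) * σ →
    sign σ = -1 → σ ^ 4 = 1 ∧ σ ^ 2 ≠ 1 := by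
  decide +kernel

theorem order_five_conj (τ : Perm (Fin 6)) (h5 : orderOf τ = 5) : IsConj cyc5 τ := by
  have key : ∀ τ : Perm (Fin 6), orderOf τ = 5 → τ.cycleType = {5} := by
    intro τ h
    obtain ⟨n, hn⟩ := cycleType_prime_order (σ := τ) (by rw [h]; norm_num)
    have hs := τ.sum_cycleType
    have hle : τ.support.card ≤ 6 := by simpa using Finset.card_le_univ τ.support
    rw [hn, h] at hs
    simp at hs
    have : n = 0 := by omega
    subst this
    rw [hn, h]
    rfl
  rw [isConj_iff_cycleType_eq, key τ h5, key cyc5]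
  have : Fact (Nat.Prime 5) := ⟨by norm_num⟩
  exact orderOf_eq_prime (by decide) (by decide)

theorem order_five_odd (τ σ : Perm (Fin 6)) (h5 : orderOf τ = 5)
    (h : σ * τ * σ⁻¹ ∈ Subgroup.zpowers τ) (hs : sign σ = -1) : orderOf σ = 4 := by
  obtain ⟨c, hc⟩ := isConj_iff.1 (order_five_conj τ h5)
  obtain ⟨i, hi⟩ := (mem_zpowers_iff_mem_range_orderOf.1 h |> Finset.mem_image.1)
  rw [h5, Finset.mem_range] at hi
  obtain ⟨hi5, hi⟩ := hi
  have hconj : cyc5 = c⁻¹ * τ * c := by rw [← hc]; group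
  have h1 := cyc5_odd (c⁻¹ * σ * c) ⟨i, hi5⟩ (by
    have : cyc5 ^ i = c⁻¹ * τ ^ i * c := by
      rw [hconj]
      have := conj_pow (i := i) (a := c⁻¹) (b := τ)
      simpa using this
    simp only
    rw [this, hi, hconj]
    group) (by
    simp [hs])
  have h2 : ∀ k : ℕ, (c⁻¹ * σ * c) ^ k = c⁻¹ * σ ^ k * c := by
    intro k
    have := conj_pow (i := k) (a := c⁻¹) (b := σ)
    simpa using this
  have h4 : σ ^ 4 = 1 := by
    have := h1.1
    rw [h2] at this
    calc σ ^ 4 = c * (c⁻¹ * σ ^ 4 * c) * c⁻¹ := by group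
      _ = 1 := by rw [this]; group
  have h2' : σ ^ 2 ≠ 1 := by
    intro h
    apply h1.2
    rw [h2, h]
    group
  have : Fact (Nat.Prime 2) := ⟨Nat.prime_two⟩
  exact orderOf_eq_prime_pow (p := 2) (n := 1) (by simpa using h2') (by simpa using h4)

theorem order_five_fixed (τ : Perm (Fin 6)) (h5 : orderOf τ = 5) :
    ∃ a, ∀ σ : Perm (Fin 6), σ⁻¹ * τ * σ ∈ Subgroup.zpowers τ → σ a = a := by
  obtain ⟨c, hc⟩ := isConj_iff.1 (order_five_conj τ h5)
  have h0 : ∀ x, cyc5 x = x ↔ x = 5 := by decide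
  have h1 : ∀ x, τ x = x ↔ x = c 5 := by
    intro x
    rw [← hc]
    simp only [Perm.mul_apply]
    rw [← Perm.eq_inv_iff_eq, h0, Perm.inv_eq_iff_eq]
  refine ⟨c 5, fun σ hσ => ?_⟩
  obtain ⟨i, hi⟩ := hσ
  have h2 : (τ ^ i) (c 5) = c 5 := Perm.zpow_apply_eq_self_of_apply_eq_self ((h1 _).2 rfl) i
  simp only at hi
  rw [hi] at h2
  simp only [Perm.mul_apply] at h2
  rw [Perm.inv_eq_iff_eq] at h2
  rw [← h1]
  exact h2

theorem index_six {G : Type*} [Group G] [Finite G] (f : G →* Perm (Fin 6))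
    (hf : Function.Injective f) (hi : f.range.index = 6) : Emb G (Perm (Fin 5)) := by
  have hcore : f.range.normalCore = ⊥ := by
    by_contra hne
    have h1 : alternatingGroup (Fin 6) ≤ f.range.normalCore :=
      alternatingGroup_le_of_normal (by simp) ((Subgroup.nontrivial_iff_ne_bot _).2 hne)
    have h2 := Subgroup.index_dvd_of_le (h1.trans (Subgroup.normalCore_le _))
    rw [hi, alternatingGroup.index_eq_two] at h2
    omega
  rw [Subgroup.normalCore_eq_ker, MonoidHom.ker_eq_bot_iff] at hcore
  refine emb_S5_of_fixed ((MulAction.toPermHom (Perm (Fin 6)) (Perm (Fin 6) ⧸ f.range)).comp f)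
    (hcore.comp hf) hi ((1 : Perm (Fin 6)) : Perm (Fin 6) ⧸ f.range) fun g => ?_
  show f g • ((1 : Perm (Fin 6)) : Perm (Fin 6) ⧸ f.range) = _
  rw [MulAction.Quotient.smul_coe, QuotientGroup.eq]
  simp

theorem case_five {G : Type*} [Group G] [Finite G] (f : G →* Perm (Fin 6))
    (hf : Function.Injective f) (g₀ : G) (hg₀ : sign (f g₀) = -1) (hG : Nat.card G ∣ 360)
    (h5 : 5 ∣ Nat.card G) : Emb G (Perm (Fin 5)) := by
  have : Fact (Nat.Prime 5) := ⟨by norm_num⟩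
  let Q : Sylow 5 G := default
  have hQ : Nat.card Q = 5 := by
    obtain ⟨k, hk⟩ := (IsPGroup.iff_card.1 Q.isPGroup')
    have h1 : Nat.card Q ∣ 360 := (Subgroup.card_subgroup_dvd_card _).trans hG
    have h2 : 5 ∣ Nat.card Q := Q.dvd_card_of_dvd_card h5
    change Nat.card Q = 5 ^ k at hk
    rw [hk] at h1 h2 ⊢
    rcases k with _ | _ | k
    · norm_num at h2
    · rfl
    · exfalso
      have h3 : 5 ^ 2 ∣ 360 := (Dvd.intro_left (5 ^ k) (by ring)).trans h1
      norm_num at h3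
  obtain ⟨c, hcQ, hc1⟩ := (Q : Subgroup G).bot_or_exists_ne_one.resolve_left (by
    intro h
    have h1 : Nat.card (Q : Subgroup G) = 1 := by rw [h]; exact Subgroup.card_bot
    change Nat.card Q = 1 at h1
    omega)
  have hpow : ∀ q ∈ Q, q ^ 5 = 1 := by
    intro q hq
    have := pow_card_eq_one' (x := (⟨q, hq⟩ : (Q : Subgroup G)))
    rw [hQ] at this
    exact congrArg Subtype.val this
  have hoc : orderOf c = 5 := orderOf_eq_prime (hpow c hcQ) hc1
  have hofc : orderOf (f c) = 5 := by rw [orderOf_injective f hf, hoc]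
  have hQc : (Q : Subgroup G) = Subgroup.zpowers c := by
    symm
    apply Subgroup.eq_of_le_of_card_ge
    · exact (Subgroup.zpowers_le).2 hcQ
    · rw [Nat.card_zpowers, hoc]
      exact hQ.le
  have hmem : ∀ q ∈ Q, f q ∈ Subgroup.zpowers (f c) := by
    intro q hq
    have hq' : q ∈ (Q : Subgroup G) := hq
    rw [hQc] at hq'
    obtain ⟨i, rfl⟩ := hq'
    exact ⟨i, by simp⟩
  let K : Subgroup G := (sign.comp f).ker
  have hQK : (Q : Subgroup G) ≤ K := by
    intro q hq
    have h1 : sign (f q) ^ 5 = 1 := by rw [← map_pow, ← map_pow, hpow q hq]; simp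
    show sign (f q) = 1
    rcases Int.units_eq_one_or (sign (f q)) with h | h
    · exact h
    · rw [h] at h1
      exact absurd h1 (by decide)
  have hsup := Q.normalizer_sup_eq_top' hQK
  have hex : ∃ g ∈ Subgroup.normalizer (Q : Set G), g ∉ K := by
    by_contra hcon
    push Not at hcon
    rw [sup_eq_right.2 hcon] at hsup
    have : g₀ ∈ K := by rw [hsup]; trivial
    have h2 : sign (f g₀) = 1 := this
    rw [h2] at hg₀
    exact absurd hg₀ (by decide)
  obtain ⟨g, hgN, hgK⟩ := hex
  have hsg : sign (f g) = -1 := (Int.units_eq_one_or (sign (f g))).resolve_left hgK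
  have hog : orderOf g = 4 := by
    rw [← orderOf_injective f hf]
    refine order_five_odd (f c) (f g) hofc ?_ hsg
    rw [← map_mul, ← map_inv, ← map_mul]
    exact hmem _ ((Subgroup.mem_normalizer_iff.1 hgN c).1 hcQ)
  set N := Subgroup.normalizer (Q : Set G) with hN
  have h4N : 4 ∣ Nat.card N := by rw [← hog]; exact Subgroup.orderOf_dvd_natCard N hgN
  have h5N : 5 ∣ Nat.card N := by
    rw [← hoc]
    exact Subgroup.orderOf_dvd_natCard N (Subgroup.le_normalizer hcQ)
  have h20 : 20 ∣ Nat.card N := by omega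
  have hmul := N.card_mul_index
  have hidx : N.index ≡ 1 [MOD 5] := by
    rw [← Q.card_eq_index_normalizer]
    exact card_sylow_modEq_one 5 G
  obtain ⟨m, hm⟩ := h20
  have h18 : m * N.index ∣ 18 := by
    rw [← hmul, hm, mul_assoc] at hG
    exact Nat.dvd_of_mul_dvd_mul_left (by norm_num : 0 < 20) hG
  have hle : N.index ∣ 18 := (Dvd.intro_left m rfl).trans h18
  have hcases : N.index = 1 ∨ N.index = 6 := by
    have aux : ∀ t : ℕ, t ∣ 18 → t % 5 = 1 → t = 1 ∨ t = 6 := by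
      intro t ht h1
      have := Nat.le_of_dvd (by norm_num) ht
      interval_cases t <;> simp_all
    exact aux _ hle hidx
  rcases hcases with h | h
  · have hN1 : N = ⊤ := Subgroup.index_eq_one.1 h
    obtain ⟨a, ha⟩ := order_five_fixed (f c) hofc
    refine emb_S5_of_fixed f hf (by simp) a fun g => ha _ ?_
    rw [← map_inv, ← map_mul, ← map_mul]
    have hgN : g⁻¹ ∈ N := by rw [hN1]; trivial
    have := (Subgroup.mem_normalizer_iff.1 hgN c).1 hcQ
    rw [inv_inv] at this
    exact hmem _ this
  · rw [h] at h18
    have hm3 : m = 1 ∨ m = 3 := by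
      have : m ∣ 3 := Nat.dvd_of_mul_dvd_mul_right (by norm_num : 0 < 6) h18
      exact (Nat.dvd_prime Nat.prime_three).1 this
    have hr : Nat.card f.range * f.range.index = 720 := by
      rw [Subgroup.card_mul_index, Nat.card_perm, Nat.card_fin]; rfl
    have hrG : Nat.card f.range = Nat.card G :=
      (Nat.card_congr (MonoidHom.ofInjective hf).toEquiv).symm
    rw [hrG, ← hmul, hm, h] at hr
    rcases hm3 with rfl | rfl
    · exact index_six f hf (by omega)
    · exfalso
      have h2 : f.range = alternatingGroup (Fin 6) :=
        eq_alternatingGroup_of_index_eq_two (by omega)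
      have h3 : f g₀ ∈ alternatingGroup (Fin 6) := by rw [← h2]; exact ⟨g₀, rfl⟩
      rw [mem_alternatingGroup, hg₀] at h3
      exact absurd h3 (by decide)

theorem A4_squares : ∀ x : Perm (Fin 4), sign x = 1 → ∃ a : Perm (Fin 4), sign a = 1 ∧
    ∃ b : Perm (Fin 4), sign b = 1 ∧ x = a ^ 2 * b ^ 2 := by
  decide +kernel

open scoped Pointwise in
theorem case_three {G : Type*} [Group G] [Finite G] (f : G →* Perm (Fin 6))
    (hf : Function.Injective f) (g₀ : G) (hg₀ : sign (f g₀) = -1) (hG : Nat.card G ∣ 72)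
    (h3 : 3 ∣ Nat.card G) : Emb G (Perm (Fin 5)) ∨ Emb G GroupN72 ∨
      Emb G (Multiplicative (ZMod 2) × alternatingGroup (Fin 4)) := by
  have : Fact (Nat.Prime 3) := ⟨by norm_num⟩
  let P : Sylow 3 G := default
  by_cases hcore : (P : Subgroup G).normalCore = ⊥
  swap
  · right; left
    refine emb_N72_of_normal f hf (P : Subgroup G).normalCore ?_ hcore
    exact P.isPGroup'.to_le (Subgroup.normalCore_le _)
  have h3P : 3 ∣ Nat.card P := P.dvd_card_of_dvd_card h3
  -- the number of Sylow 3-subgroups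
  have hn1 : Nat.card (Sylow 3 G) ≠ 1 := by
    intro h1
    rw [P.card_eq_index_normalizer, Subgroup.index_eq_one] at h1
    have hPn : (P : Subgroup G).Normal := Subgroup.normalizer_eq_top_iff.1 h1
    rw [Subgroup.normalCore_eq_self] at hcore
    have h2 : Nat.card (P : Subgroup G) = 1 := by rw [hcore]; exact Subgroup.card_bot
    change Nat.card P = 1 at h2
    omega
  have hn4 : Nat.card (Sylow 3 G) = 4 := by
    have hmod := card_sylow_modEq_one 3 G
    have hmul := (P : Subgroup G).card_mul_index
    have hd := P.card_dvd_index
    have hnd : ¬ 3 ∣ Nat.card (Sylow 3 G) := by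
      unfold Nat.ModEq at hmod
      omega
    have h72 : Nat.card (Sylow 3 G) ∣ 8 * 9 :=
      (hd.trans (Dvd.intro_left _ hmul)).trans hG
    have h8 : Nat.card (Sylow 3 G) ∣ 8 := by
      refine Nat.Coprime.dvd_of_dvd_mul_right ?_ h72
      exact Nat.Coprime.pow_right 2 ((Nat.Prime.coprime_iff_not_dvd Nat.prime_three).2 hnd).symm
    have := Nat.le_of_dvd (by norm_num) h8
    unfold Nat.ModEq at hmod
    clear hd h72 hnd
    interval_cases Nat.card (Sylow 3 G) <;> simp_all
  let e : Sylow 3 G ≃ Fin 4 := Finite.equivFinOfCardEq hn4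
  let φ : G →* Perm (Fin 4) := e.permCongrHom.toMonoidHom.comp (MulAction.toPermHom G (Sylow 3 G))
  have hφker : ∀ g, φ g = 1 ↔ ∀ S : Sylow 3 G, g • S = S := by
    intro g
    have h1 : φ g = 1 ↔ MulAction.toPermHom G (Sylow 3 G) g = 1 := by
      show e.permCongrHom _ = 1 ↔ _
      rw [map_eq_one_iff _ e.permCongrHom.injective]
    rw [h1]
    exact ⟨fun h S => congrArg (fun σ : Perm (Sylow 3 G) => σ S) h, fun h => Equiv.ext h⟩
  have hK3 : ¬ 3 ∣ Nat.card φ.ker := by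
    intro h
    obtain ⟨x, hx⟩ := exists_prime_orderOf_dvd_card' 3 h
    have hxo : orderOf (x : G) = 3 := by rw [Subgroup.orderOf_coe, hx]
    have hxp : IsPGroup 3 (Subgroup.zpowers (x : G)) := by
      apply IsPGroup.of_card (n := 1)
      rw [Nat.card_zpowers, hxo, pow_one]
    have hxS : ∀ S : Sylow 3 G, (x : G) ∈ S := by
      intro S
      have h1 : (x : G) ∈ Subgroup.normalizer (S : Set G) :=
        Sylow.smul_eq_iff_mem_normalizer.1 ((hφker x).1 x.2 S)
      have h2 := hxp.inf_normalizer_sylow S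
      have h3 : (x : G) ∈ Subgroup.zpowers (x : G) ⊓ Subgroup.normalizer (S : Set G) :=
        ⟨Subgroup.mem_zpowers _, h1⟩
      rw [h2] at h3
      exact h3.2
    have hxc : (x : G) ∈ (P : Subgroup G).normalCore := by
      intro b
      have h1 := hxS (b⁻¹ • P)
      rw [Sylow.smul_def] at h1
      have h2 : (x : G) ∈ MulAut.conj b⁻¹ • (P : Subgroup G) := h1
      rw [Subgroup.mem_pointwise_smul_iff_inv_smul_mem] at h2
      simpa [MulAut.smul_def] using h2
    rw [hcore, Subgroup.mem_bot] at hxc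
    rw [hxc, orderOf_one] at hxo
    omega
  have hmul : Nat.card φ.range * Nat.card φ.ker = Nat.card G := by
    rw [← Subgroup.index_ker, Subgroup.index_mul_card]
  have h24 : Nat.card φ.range ∣ 24 := by
    have := Subgroup.card_subgroup_dvd_card φ.range
    rwa [Nat.card_perm, Nat.card_fin] at this
  have hr3 : 3 ∣ Nat.card φ.range := by
    rw [← hmul] at h3
    exact (Nat.prime_three.dvd_mul.1 h3).resolve_right hK3
  have hr4 : 4 ∣ Nat.card φ.range := by
    have h1 : φ.ker ≤ Subgroup.normalizer (P : Set G) := by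
      intro x hx
      exact Sylow.smul_eq_iff_mem_normalizer.1 ((hφker x).1 hx P)
    have h2 := Subgroup.index_dvd_of_le h1
    rwa [← P.card_eq_index_normalizer, hn4, Subgroup.index_ker] at h2
  have hr12 : Nat.card φ.range = 12 ∨ Nat.card φ.range = 24 := by
    have := Nat.le_of_dvd (by norm_num) h24
    have := Nat.card_pos (α := φ.range)
    omega
  by_cases hinj : Function.Injective φ
  · left
    exact Emb.trans ⟨φ, hinj⟩ emb_four_five
  have hker1 : Nat.card φ.ker ≠ 1 := by
    intro h1
    exact hinj ((MonoidHom.ker_eq_bot_iff φ).1 (Subgroup.card_eq_one.1 h1))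
  have hker0 := Nat.card_pos (α := φ.ker)
  have hkr : Nat.card φ.range = 12 ∧ Nat.card φ.ker = 2 := by
    rw [← hmul] at hG
    rcases hr12 with h | h
    · refine ⟨h, ?_⟩
      rw [h] at hG
      have h6 : Nat.card φ.ker ∣ 6 := Nat.dvd_of_mul_dvd_mul_left (by norm_num : 0 < 12) hG
      have := Nat.le_of_dvd (by norm_num) h6
      interval_cases Nat.card φ.ker <;> simp_all
    · rw [h] at hG
      have h6 : Nat.card φ.ker ∣ 3 := Nat.dvd_of_mul_dvd_mul_left (by norm_num : 0 < 24) hG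
      have := Nat.le_of_dvd (by norm_num) h6
      interval_cases Nat.card φ.ker <;> simp_all
  obtain ⟨hr, hk⟩ := hkr
  have hrange : φ.range = alternatingGroup (Fin 4) := by
    apply eq_alternatingGroup_of_index_eq_two
    have := φ.range.card_mul_index
    rw [hr, Nat.card_perm, Nat.card_fin, show Nat.factorial 4 = 24 from rfl] at this
    omega
  have hφA : ∀ g, φ g ∈ alternatingGroup (Fin 4) := by
    intro g
    rw [← hrange]
    exact ⟨g, rfl⟩
  have hAφ : ∀ x : Perm (Fin 4), sign x = 1 → ∃ g, φ g = x := by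
    intro x hx
    have : x ∈ φ.range := by rw [hrange]; exact hx
    exact this
  -- the nontrivial element of the kernel is odd
  have hsgn : ∃ z ∈ φ.ker, sign (f z) = -1 := by
    by_contra hcon
    push Not at hcon
    have hev : ∀ z, φ z = 1 → sign (f z) = 1 := fun z hz =>
      (Int.units_eq_one_or _).resolve_right (hcon z hz)
    obtain ⟨a, ha, b, hb, hab⟩ := A4_squares (φ g₀) (hφA g₀)
    obtain ⟨a, rfl⟩ := hAφ a ha
    obtain ⟨b, rfl⟩ := hAφ b hb
    have h1 := hev (g₀ * (a ^ 2 * b ^ 2)⁻¹) (by simp [hab])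
    have hsq : ∀ u : ℤˣ, u ^ 2 = 1 := Int.units_sq
    simp only [map_mul, map_inv, map_pow, hsq, hg₀] at h1
    exact absurd h1 (by decide)
  obtain ⟨z, hz, hzs⟩ := hsgn
  have : Fact (Nat.Prime 2) := ⟨Nat.prime_two⟩
  have C2 : Nat.card (Multiplicative (ZMod 2)) = 2 := by simp
  have U2 : Nat.card ℤˣ = 2 := by simp
  right; right
  refine Emb.trans (H := ℤˣ × alternatingGroup (Fin 4))
    ⟨(sign.comp f).prod (φ.codRestrict _ hφA), ?_⟩
    ((Emb.ofEquiv (mulEquivOfPrimeCardEq U2 C2)).prod (Emb.ofEquiv (MulEquiv.refl _)))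
  rw [injective_iff_map_eq_one]
  intro x hx
  have hx1 : sign (f x) = 1 := congrArg (fun t : ℤˣ × alternatingGroup (Fin 4) => t.1) hx
  have hx2 : φ x = 1 :=
    congrArg (fun t : ℤˣ × alternatingGroup (Fin 4) => (t.2 : Perm (Fin 4))) hx
  by_contra hne
  rw [Nat.card_eq_two_iff' (1 : φ.ker)] at hk
  obtain ⟨y, -, hy⟩ := hk
  have hxy := hy ⟨x, hx2⟩ (fun h => hne (congrArg Subtype.val h))
  have hzy := hy ⟨z, hz⟩ (fun h => by
    have : z = 1 := congrArg Subtype.val h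
    rw [this] at hzs
    simp at hzs)
  have hxz : x = z := congrArg Subtype.val (hxy.trans hzy.symm)
  rw [hxz, hzs] at hx1
  exact absurd hx1 (by decide)

theorem forward {G : Type*} [Group G] [Fintype G] (f : G →* Perm (Fin 6))
    (hf : Function.Injective f) (h16 : ¬ (2 ^ 4 ∣ Fintype.card G)) :
    Emb G (alternatingGroup (Fin 6)) ∨ Emb G (Perm (Fin 5)) ∨ Emb G GroupN72 ∨
      Emb G (Multiplicative (ZMod 2) × alternatingGroup (Fin 4)) ∨
      Emb G (Multiplicative (ZMod 2) × Multiplicative (ZMod 4)) := by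
  by_cases hA : ∀ g, sign (f g) = 1
  · left
    refine ⟨f.codRestrict _ hA, fun a b hab => hf (congrArg Subtype.val hab)⟩
  right
  push Not at hA
  obtain ⟨g₀, hg⟩ := hA
  have hg₀ : sign (f g₀) = -1 := (Int.units_eq_one_or _).resolve_left hg
  rw [← Nat.card_eq_fintype_card] at h16
  have h720 : Nat.card G ∣ 720 := by
    have := Subgroup.card_dvd_of_injective f hf
    rwa [Nat.card_perm, Nat.card_fin] at this
  obtain ⟨k, hk⟩ := h720
  have h360 : Nat.card G ∣ 360 := by
    have h2k : 2 ∣ k := by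
      by_contra h2
      apply h16
      have hco : Nat.Coprime (2 ^ 4) k :=
        Nat.Coprime.pow_left 4 ((Nat.Prime.coprime_iff_not_dvd Nat.prime_two).2 h2)
      refine hco.dvd_of_dvd_mul_right ?_
      rw [← hk]
      decide
    obtain ⟨l, rfl⟩ := h2k
    refine ⟨l, ?_⟩
    linarith
  by_cases h5 : 5 ∣ Nat.card G
  · left
    exact case_five f hf g₀ hg₀ h360 h5
  have h72 : Nat.card G ∣ 72 := by
    refine Nat.Coprime.dvd_of_dvd_mul_right (n := 5) ?_ h360
    exact ((Nat.Prime.coprime_iff_not_dvd Nat.prime_five).2 h5).symm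
  by_cases h3 : 3 ∣ Nat.card G
  · rcases case_three f hf g₀ hg₀ h72 h3 with h | h | h
    · exact Or.inl h
    · exact Or.inr (Or.inl h)
    · exact Or.inr (Or.inr (Or.inl h))
  have h8 : Nat.card G ∣ 8 := by
    refine Nat.Coprime.dvd_of_dvd_mul_right (n := 3 ^ 2) ?_ h72
    exact Nat.Coprime.pow_right 2 ((Nat.Prime.coprime_iff_not_dvd Nat.prime_three).2 h3).symm
  rcases case_two f hf h8 with h | h | h
  · exact Or.inl h
  · exact Or.inr (Or.inr (Or.inl h))
  · exact Or.inr (Or.inr (Or.inr h))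

/-- A finite group `G` embeds into `S₆` with `16 ∤ |G|` if and only if it embeds into one of the
five maximal groups `A₆`, `S₅`, `N₇₂ = C₃²⋊D₈ ≅ S₃≀C₂`, `C₂×A₄`, `C₂×C₄`. -/
theorem embeds_S6_order_iff_embeds_maximal (G : Type*) [Group G] [Fintype G] :
    ((∃ f : G →* Equiv.Perm (Fin 6), Function.Injective f) ∧
        ¬ (2 ^ 4 ∣ Fintype.card G)) ↔
      ((∃ f : G →* alternatingGroup (Fin 6), Function.Injective f) ∨
        (∃ f : G →* Equiv.Perm (Fin 5), Function.Injective f) ∨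
        (∃ f : G →* GroupN72, Function.Injective f) ∨
        (∃ f : G →* Multiplicative (ZMod 2) × alternatingGroup (Fin 4),
          Function.Injective f) ∨
        (∃ f : G →* Multiplicative (ZMod 2) × Multiplicative (ZMod 4),
          Function.Injective f)) := by
  constructor
  · rintro ⟨⟨f, hf⟩, h⟩
    exact forward f hf h
  · exact backward G
end
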